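/- arXiv:1512.09006 — 2 statements merged into one kernel-verified Lean document; each statement's English description precedes it below -/
import Mathlib

section
/- There exists an absolute constant c > 0 such that for all positive integers m and n with m^{1/2} ≤ n ≤ m^2, every set P of m points and every set L of n lines in ℝ² determine at least c · m^{1/5} n^{3/5} distinct point-line distances, i.e., |{d(p,ℓ) : p ∈ P, ℓ ∈ L}| ≥ c · m^{1/5} n^{3/5}. -/
noncomputable section

abbrev Pt2 := EuclideanSpace ℝ (Fin 2)

/-- A line in the plane: the set of points `a + t • v` for a nonzero direction `v`. -/
def IsLine2 (l : Set Pt2) : Prop :=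
  ∃ a v : Pt2, v ≠ 0 ∧ l = {x : Pt2 | ∃ t : ℝ, x = a + t • v}

/-!
Identify a non-vertical line with the pair of its slope and its intercept. For a point `p` and a
real number `d`, the lines at signed distance `d` from `p` become the graph of a function, and two
such graphs meet at most twice. If `m` points and `n` lines determine `t` signed distances, the `n`
dual points have `m * n` incidences with these `m * t` graphs, hence about as many arcs joining
consecutive dual points of a graph. The curves carrying the arcs between two given dual points
belong to distinct points equidistant from the two corresponding lines, and these points lie on a
bisector of the two lines.

Arcs for which the bisector contains few points have bounded multiplicity, and there are few of them
by a crossing argument: choose a small random set `R` of curves and discard the arcs crossed by `R`.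
If many of the remaining arcs leaving a vertex `q` end before a given arc `e` does, then their ends
lie vertically above or below `e` with no curve of `R` in between, and random sampling leaves few
such pairs. Arcs for which the bisector contains many points are controlled by the Szemerédi–Trotter
theorem, which is the same crossing argument for lines.
-/

namespace PointLineDistance

open Finset

section Sampling

variable {ι κ : Type*}

/-- The probability that a random subset of `C`, containing each element of `C` independently with
probability `p`, equals `R`. -/
def bernoulliWeight (p : ℝ) (C R : Finset ι) : ℝ := p ^ #R * (1 - p) ^ (#C - #R)

lemma bernoulliWeight_nonneg {p : ℝ} (hp₀ : 0 ≤ p) (hp₁ : p ≤ 1) (C R : Finset ι) :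
    0 ≤ bernoulliWeight p C R :=
  mul_nonneg (pow_nonneg hp₀ _) (pow_nonneg (sub_nonneg.2 hp₁) _)

lemma sum_bernoulliWeight (p : ℝ) (C : Finset ι) :
    ∑ R ∈ C.powerset, bernoulliWeight p C R = 1 := by
  simp only [bernoulliWeight, sum_pow_mul_eq_add_pow, add_sub_cancel, one_pow]

lemma sum_bernoulliWeight_disjoint [DecidableEq ι] (p : ℝ) {A C : Finset ι} (hA : A ⊆ C) :
    ∑ R ∈ C.powerset with Disjoint R A, bernoulliWeight p C R = (1 - p) ^ #A := by
  have hfilter : {R ∈ C.powerset | Disjoint R A} = (C \ A).powerset := by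
    ext R
    simp only [mem_filter, mem_powerset, subset_sdiff]
  have hcard : #C = #(C \ A) + #A := (card_sdiff_add_card_eq_card hA).symm
  calc ∑ R ∈ C.powerset with Disjoint R A, bernoulliWeight p C R
      = ∑ R ∈ (C \ A).powerset, bernoulliWeight p (C \ A) R * (1 - p) ^ #A := by
        rw [hfilter]
        refine sum_congr rfl fun R hR ↦ ?_
        have hR := card_le_card (mem_powerset.1 hR)
        rw [bernoulliWeight, bernoulliWeight, mul_assoc, ← pow_add,
          show #C - #R = #(C \ A) - #R + #A by omega]
    _ = (1 - p) ^ #A := by rw [← sum_mul, sum_bernoulliWeight, one_mul]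

lemma sum_bernoulliWeight_mul_card (p : ℝ) (C : Finset ι) :
    ∑ R ∈ C.powerset, bernoulliWeight p C R * #R = p * #C := by
  classical
  have hmem : ∀ c ∈ C, ∑ R ∈ C.powerset with c ∈ R, bernoulliWeight p C R = p := by
    intro c hc
    have hdisj := sum_bernoulliWeight_disjoint p (singleton_subset_iff.2 hc)
    have hsplit := sum_filter_add_sum_filter_not C.powerset (c ∈ ·) (bernoulliWeight p C)
    simp only [disjoint_singleton_right, card_singleton, pow_one] at hdisj
    rw [hdisj, sum_bernoulliWeight] at hsplit
    linarith
  calc ∑ R ∈ C.powerset, bernoulliWeight p C R * #R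
      = ∑ R ∈ C.powerset, ∑ c ∈ C, if c ∈ R then bernoulliWeight p C R else 0 := by
        refine sum_congr rfl fun R hR ↦ ?_
        rw [← sum_filter, filter_mem_eq_inter, inter_eq_right.2 (mem_powerset.1 hR), sum_const,
          nsmul_eq_mul, mul_comm]
    _ = ∑ c ∈ C, ∑ R ∈ C.powerset with c ∈ R, bernoulliWeight p C R := by
        rw [sum_comm]
        simp only [sum_filter]
    _ = p * #C := by rw [sum_congr rfl hmem, sum_const, nsmul_eq_mul, mul_comm]

lemma exists_subset_add_card_disjoint_le [DecidableEq ι] {p : ℝ} (hp₀ : 0 ≤ p) (hp₁ : p ≤ 1) (w : ℝ)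
    (C : Finset ι) (S : Finset κ) (A : κ → Finset ι) (hA : ∀ j ∈ S, A j ⊆ C) :
    ∃ R ⊆ C, w * #R + #{j ∈ S | Disjoint R (A j)} ≤ w * (p * #C) + ∑ j ∈ S, (1 - p) ^ #(A j) := by
  set bound := w * (p * #C) + ∑ j ∈ S, (1 - p) ^ #(A j)
  have hdisj : ∑ R ∈ C.powerset, bernoulliWeight p C R * (#{j ∈ S | Disjoint R (A j)} : ℝ)
      = ∑ j ∈ S, (1 - p) ^ #(A j) := by
    simp only [card_filter, Nat.cast_sum, Nat.cast_ite, Nat.cast_one, Nat.cast_zero, mul_sum,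
      mul_ite, mul_one, mul_zero]
    rw [sum_comm]
    refine sum_congr rfl fun j hj ↦ ?_
    rw [← sum_filter, sum_bernoulliWeight_disjoint p (hA j hj)]
  have hmean : ∑ R ∈ C.powerset, bernoulliWeight p C R * (w * #R + #{j ∈ S | Disjoint R (A j)})
      = bound := by
    simp only [mul_add, sum_add_distrib, mul_left_comm _ w, ← mul_sum,
      sum_bernoulliWeight_mul_card, hdisj, bound]
  have hweight := sum_bernoulliWeight p C
  obtain ⟨R, hR, hle⟩ := (concaveOn_id convex_univ).exists_le_of_centerMass
    (fun R _ ↦ bernoulliWeight_nonneg hp₀ hp₁ C R) (hweight ▸ zero_lt_one)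
    (p := fun R ↦ w * #R + #{j ∈ S | Disjoint R (A j)}) (fun _ _ ↦ Set.mem_univ _)
  rw [centerMass_eq_of_sum_1 _ _ hweight] at hle
  exact ⟨R, mem_powerset.1 hR, hle.trans_eq hmean⟩

end Sampling

section Arcs

variable {ι : Type*}

/-- The points of `Q` on the graph of the `c`-th function of the family `f`. -/
def pointsOn (f : ι → ℝ → ℝ) (Q : Finset (ℝ × ℝ)) (c : ι) : Finset (ℝ × ℝ) :=
  {q ∈ Q | f c q.1 = q.2}

lemma mem_pointsOn {f : ι → ℝ → ℝ} {Q : Finset (ℝ × ℝ)} {c : ι} {q : ℝ × ℝ} :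
    q ∈ pointsOn f Q c ↔ q ∈ Q ∧ f c q.1 = q.2 :=
  mem_filter

lemma eq_of_mem_pointsOn {f : ι → ℝ → ℝ} {Q : Finset (ℝ × ℝ)} {c : ι} {q r : ℝ × ℝ}
    (hq : q ∈ pointsOn f Q c) (hr : r ∈ pointsOn f Q c) (h : q.1 = r.1) : q = r :=
  Prod.ext h (by rw [← (mem_pointsOn.1 hq).2, ← (mem_pointsOn.1 hr).2, h])

/-- The `s`-intersecting families of functions: any two distinct members of `C` agree in at most
`s` points. -/
def MeetAtMost (s : ℕ) (f : ι → ℝ → ℝ) (C : Finset ι) : Prop :=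
  ∀ i ∈ C, ∀ j ∈ C, i ≠ j → {x | f i x = f j x}.encard ≤ s

/-- The data of a piece of a curve between two points; it is an edge of the graph drawn by the
curves when `Arc.IsConsecutive` holds. -/
@[ext]
structure Arc (ι : Type*) where
  left : ℝ × ℝ
  right : ℝ × ℝ
  curve : ι

namespace Arc

/-- The endpoints of `e` are consecutive, from left to right, among the points of `Q` on a curve of
the family `C`. -/
structure IsConsecutive (f : ι → ℝ → ℝ) (C : Finset ι) (Q : Finset (ℝ × ℝ)) (e : Arc ι) :
    Prop where
  curve_mem : e.curve ∈ C
  left_mem : e.left ∈ pointsOn f Q e.curve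
  right_mem : e.right ∈ pointsOn f Q e.curve
  left_lt_right : e.left.1 < e.right.1
  right_le : ∀ z ∈ pointsOn f Q e.curve, e.left.1 < z.1 → e.right.1 ≤ z.1

variable {f : ι → ℝ → ℝ} {C R : Finset ι} {Q : Finset (ℝ × ℝ)} {G : Finset (Arc ι)} {e e' : Arc ι}

lemma IsConsecutive.ext_left (he : e.IsConsecutive f C Q) (he' : e'.IsConsecutive f C Q)
    (hcurve : e.curve = e'.curve) (hleft : e.left.1 = e'.left.1) : e = e' := by
  have hl' := he'.left_mem
  have hr' := he'.right_mem
  rw [← hcurve] at hl' hr'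
  have hle : e.right.1 ≤ e'.right.1 := he.right_le _ hr' (hleft ▸ he'.left_lt_right)
  have hge : e'.right.1 ≤ e.right.1 :=
    he'.right_le _ (hcurve ▸ he.right_mem) (hleft ▸ he.left_lt_right)
  exact Arc.ext (eq_of_mem_pointsOn he.left_mem hl' hleft)
    (eq_of_mem_pointsOn he.right_mem hr' (hle.antisymm hge)) hcurve

lemma IsConsecutive.right_le_left (he : e.IsConsecutive f C Q) (he' : e'.IsConsecutive f C Q)
    (hcurve : e.curve = e'.curve) (hlt : e.left.1 < e'.left.1) : e.right.1 ≤ e'.left.1 :=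
  he.right_le _ (hcurve ▸ he'.left_mem) hlt

lemma IsConsecutive.ext_mem_Ioc (he : e.IsConsecutive f C Q) (he' : e'.IsConsecutive f C Q)
    (hcurve : e.curve = e'.curve) {x : ℝ} (hx : x ∈ Set.Ioc e.left.1 e.right.1)
    (hx' : x ∈ Set.Ioc e'.left.1 e'.right.1) : e = e' := by
  refine he.ext_left he' hcurve (le_antisymm ?_ ?_) <;> by_contra! hlt
  · exact (he'.right_le_left he hcurve.symm hlt).not_gt (hx.1.trans_le hx'.2)
  · exact (he.right_le_left he' hcurve hlt).not_gt (hx'.1.trans_le hx.2)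

lemma card_filter_mem_Icc_le_two [DecidableEq ι] (hG : ∀ e ∈ G, e.IsConsecutive f C Q) (c : ι)
    (x : ℝ) : #{e ∈ G | e.curve = c ∧ x ∈ Set.Icc e.left.1 e.right.1} ≤ 2 := by
  classical
  have hstart : #{e ∈ G | e.curve = c ∧ e.left.1 = x} ≤ 1 := by
    simp only [card_le_one, mem_filter]
    rintro e ⟨he, hc, hx⟩ e' ⟨he', hc', hx'⟩
    exact (hG e he).ext_left (hG e' he') (hc.trans hc'.symm) (hx.trans hx'.symm)
  have hinside : #{e ∈ G | e.curve = c ∧ x ∈ Set.Ioc e.left.1 e.right.1} ≤ 1 := by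
    simp only [card_le_one, mem_filter]
    rintro e ⟨he, hc, hx⟩ e' ⟨he', hc', hx'⟩
    exact (hG e he).ext_mem_Ioc (hG e' he') (hc.trans hc'.symm) hx hx'
  refine (card_le_card fun e he ↦ ?_).trans
    ((card_union_le _ _).trans (Nat.add_le_add hstart hinside))
  simp only [mem_union, mem_filter] at he ⊢
  obtain ⟨heG, hc, hx⟩ := he
  exact hx.1.eq_or_lt.imp (fun h ↦ ⟨heG, hc, h⟩) fun h ↦ ⟨heG, hc, h, hx.2⟩

/-- Some curve of `R`, other than the curve of `e`, meets `e`. -/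
def IsCrossed (f : ι → ℝ → ℝ) (R : Finset ι) (e : Arc ι) : Prop :=
  ∃ g ∈ R, g ≠ e.curve ∧ ∃ x ∈ Set.Icc e.left.1 e.right.1, f g x = f e.curve x

open Classical in
lemma card_isCrossed_le {s : ℕ} (hf : MeetAtMost s f C) (hG : ∀ e ∈ G, e.IsConsecutive f C Q)
    (hR : R ⊆ C) : #{e ∈ G | e.IsCrossed f R} ≤ #C * #R * (s * 2) := by
  have hpair : ∀ cg ∈ C ×ˢ R, #{e ∈ G | e.curve = cg.1 ∧ cg.2 ≠ cg.1 ∧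
      ∃ x ∈ Set.Icc e.left.1 e.right.1, f cg.2 x = f cg.1 x} ≤ s * 2 := by
    rintro ⟨c, g⟩ hcg
    obtain ⟨hc, hg⟩ := mem_product.1 hcg
    rcases eq_or_ne g c with rfl | hgc
    · simp
    have hmeet := hf g (hR hg) c hc hgc
    have hfin := Set.finite_of_encard_le_coe hmeet
    have hcard : #hfin.toFinset ≤ s := by
      rwa [hfin.encard_eq_coe_toFinset_card, Nat.cast_le] at hmeet
    have hcover : {e ∈ G | e.curve = c ∧ g ≠ c ∧
        ∃ x ∈ Set.Icc e.left.1 e.right.1, f g x = f c x} ⊆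
        hfin.toFinset.biUnion fun x ↦
          {e ∈ G | e.curve = c ∧ x ∈ Set.Icc e.left.1 e.right.1} := by
      intro e he
      obtain ⟨heG, hec, -, x, hx, hgx⟩ := mem_filter.1 he
      exact mem_biUnion.2 ⟨x, hfin.mem_toFinset.2 hgx, mem_filter.2 ⟨heG, hec, hx⟩⟩
    exact (card_le_card hcover).trans <| (card_biUnion_le_card_mul _ _ 2
      fun x _ ↦ card_filter_mem_Icc_le_two hG c x).trans <| Nat.mul_le_mul_right 2 hcard
  rw [← card_product]
  refine (card_le_card fun e he ↦ ?_).trans (card_biUnion_le_card_mul _ _ _ hpair)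
  obtain ⟨heG, g, hg, hgc, hx⟩ := mem_filter.1 he
  exact mem_biUnion.2 ⟨(e.curve, g), mk_mem_product (hG e heG).curve_mem hg,
    mem_filter.2 ⟨heG, rfl, hgc, hx⟩⟩

end Arc

open Classical in
/-- The edges of the graph drawn on the vertex set `Q` by the curves of the family `C`. -/
def arcs (f : ι → ℝ → ℝ) (C : Finset ι) (Q : Finset (ℝ × ℝ)) : Finset (Arc ι) :=
  {e ∈ (Q ×ˢ Q ×ˢ C).image fun t ↦ ⟨t.1, t.2.1, t.2.2⟩ | e.IsConsecutive f C Q}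

lemma mem_arcs {f : ι → ℝ → ℝ} {C : Finset ι} {Q : Finset (ℝ × ℝ)} {e : Arc ι} :
    e ∈ arcs f C Q ↔ e.IsConsecutive f C Q := by
  classical
  refine mem_filter.trans (and_iff_right_of_imp fun he ↦ mem_image.2 ?_)
  exact ⟨(e.left, e.right, e.curve), mk_mem_product (mem_pointsOn.1 he.left_mem).1
    (mk_mem_product (mem_pointsOn.1 he.right_mem).1 he.curve_mem), rfl⟩

lemma exists_mem_arcs_left_eq {f : ι → ℝ → ℝ} {C : Finset ι} {Q : Finset (ℝ × ℝ)} {c : ι}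
    (hc : c ∈ C) {q r : ℝ × ℝ} (hq : q ∈ pointsOn f Q c) (hr : r ∈ pointsOn f Q c)
    (hqr : q.1 < r.1) : ∃ e ∈ arcs f C Q, e.curve = c ∧ e.left = q := by
  obtain ⟨z, hz, hmin⟩ := exists_min_image {z ∈ pointsOn f Q c | q.1 < z.1} Prod.fst
    ⟨r, mem_filter.2 ⟨hr, hqr⟩⟩
  obtain ⟨hzc, hqz⟩ := mem_filter.1 hz
  exact ⟨⟨q, z, c⟩, mem_arcs.2 ⟨hc, hq, hzc, hqz,
    fun y hy hqy ↦ hmin y (mem_filter.2 ⟨hy, hqy⟩)⟩, rfl, rfl⟩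

lemma sum_card_pointsOn_le (f : ι → ℝ → ℝ) (C : Finset ι) (Q : Finset (ℝ × ℝ)) :
    ∑ c ∈ C, #(pointsOn f Q c) ≤ #(arcs f C Q) + #C := by
  classical
  have hcurve : ∀ c ∈ C, #(pointsOn f Q c) ≤ #{e ∈ arcs f C Q | e.curve = c} + 1 := by
    intro c hc
    rcases (pointsOn f Q c).eq_empty_or_nonempty with hempty | hne
    · simp [hempty]
    obtain ⟨last, hlast, hmax⟩ := exists_max_image _ Prod.fst hne
    rw [← card_erase_add_one hlast]
    refine Nat.add_le_add_right ((card_le_card fun q hq ↦ ?_).trans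
      (card_image_le (f := Arc.left))) 1
    obtain ⟨hq_ne, hq⟩ := mem_erase.1 hq
    have hlt : q.1 < last.1 := lt_of_le_of_ne (hmax q hq) fun h ↦
      hq_ne (eq_of_mem_pointsOn hq hlast h)
    obtain ⟨e, he, hec, heq⟩ := exists_mem_arcs_left_eq hc hq hlast hlt
    exact mem_image.2 ⟨e, mem_filter.2 ⟨he, hec⟩, heq⟩
  have hfiber : #(arcs f C Q) = ∑ c ∈ C, #{e ∈ arcs f C Q | e.curve = c} :=
    card_eq_sum_card_fiberwise fun e he ↦ (mem_arcs.1 he).curve_mem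
  calc ∑ c ∈ C, #(pointsOn f Q c)
      ≤ ∑ c ∈ C, (#{e ∈ arcs f C Q | e.curve = c} + 1) := sum_le_sum hcurve
    _ = #(arcs f C Q) + #C := by rw [sum_add_distrib, hfiber, card_eq_sum_ones]

end Arcs

section Visibility

variable {ι : Type*}

lemma sum_pow_card_filter_le_le {β : Type*} [LinearOrder β] [DecidableEq ι] {x : ℝ} (hx₀ : 0 ≤ x)
    (hx₁ : x < 1) (h : ι → β) (T : Finset ι) :
    ∑ c ∈ T, x ^ #{g ∈ T | g ≠ c ∧ h g ≤ h c} ≤ (1 - x)⁻¹ := by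
  suffices hgeom : ∑ c ∈ T, x ^ #{g ∈ T | g ≠ c ∧ h g ≤ h c} ≤ ∑ i ∈ range #T, x ^ i by
    refine hgeom.trans ?_
    simpa using geom_sum_Ico_le_of_lt_one (m := 0) (n := #T) hx₀ hx₁
  induction T using induction_on_max_value h with
  | empty => simp
  | insert a s ha hmax ih =>
    have hlast : {g ∈ insert a s | g ≠ a ∧ h g ≤ h a} = s := by
      ext g
      simp only [mem_filter, mem_insert]
      exact ⟨fun hg ↦ hg.1.resolve_left hg.2.1,
        fun hg ↦ ⟨Or.inr hg, ne_of_mem_of_not_mem hg ha, hmax g hg⟩⟩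
    rw [sum_insert ha, hlast, card_insert_of_notMem ha, sum_range_succ, add_comm]
    refine add_le_add_left ((sum_le_sum fun c _ ↦ ?_).trans ih) _
    exact pow_le_pow_of_le_one hx₀ hx₁.le
      (card_le_card (filter_subset_filter _ (subset_insert a s)))

lemma card_filter_card_filter_le_le {β : Type*} [LinearOrder β] (h : ι → β) (T : Finset ι)
    (K : ℕ) : #{j ∈ T | #{i ∈ T | h i ≤ h j} ≤ K} ≤ K := by
  rcases {j ∈ T | #{i ∈ T | h i ≤ h j} ≤ K}.eq_empty_or_nonempty with hempty | hne
  · simp [hempty]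
  obtain ⟨c, hc, hmax⟩ := exists_max_image _ h hne
  exact (card_le_card fun i hi ↦ mem_filter.2 ⟨(mem_filter.1 hi).1, hmax i hi⟩).trans
    (mem_filter.1 hc).2

/-- The curve `g`, different from `c`, meets the vertical segment joining the point `z` to the
curve `c`. -/
def Blocks (f : ι → ℝ → ℝ) (z : ℝ × ℝ) (c g : ι) : Prop :=
  g ≠ c ∧ f g z.1 ∈ Set.uIcc z.2 (f c z.1)

open Classical in
/-- The pairs of a point of `Q` and a curve of `C` that see each other along a vertical segment not
blocked by any curve of `R`. -/
def visiblePairs (f : ι → ℝ → ℝ) (C : Finset ι) (Q : Finset (ℝ × ℝ)) (R : Finset ι) :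
    Finset ((ℝ × ℝ) × ι) :=
  {zc ∈ Q ×ˢ C | ∀ g ∈ R, ¬ Blocks f zc.1 zc.2 g}

open Classical in
lemma sum_pow_card_blocks_le {p : ℝ} (hp₀ : 0 < p) (hp₁ : p ≤ 1) (f : ι → ℝ → ℝ) (C : Finset ι)
    (z : ℝ × ℝ) : ∑ c ∈ C, (1 - p) ^ #{g ∈ C | Blocks f z c g} ≤ 2 / p := by
  have hq₀ : 0 ≤ 1 - p := sub_nonneg.2 hp₁
  have hq₁ : 1 - p < 1 := sub_lt_self 1 hp₀
  have habove : ∑ c ∈ C with z.2 ≤ f c z.1, (1 - p) ^ #{g ∈ C | Blocks f z c g} ≤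
      (1 - (1 - p))⁻¹ := by
    refine (sum_le_sum fun c _ ↦ pow_le_pow_of_le_one hq₀ hq₁.le (card_le_card fun g hg ↦ ?_)).trans
      (sum_pow_card_filter_le_le hq₀ hq₁ (fun c ↦ f c z.1) _)
    simp only [mem_filter] at hg ⊢
    exact ⟨hg.1.1, hg.2.1, Set.mem_uIcc_of_le hg.1.2 hg.2.2⟩
  have hbelow : ∑ c ∈ C with ¬ z.2 ≤ f c z.1, (1 - p) ^ #{g ∈ C | Blocks f z c g} ≤
      (1 - (1 - p))⁻¹ := by
    refine (sum_le_sum fun c _ ↦ pow_le_pow_of_le_one hq₀ hq₁.le (card_le_card fun g hg ↦ ?_)).trans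
      (sum_pow_card_filter_le_le hq₀ hq₁ (fun c ↦ - f c z.1) _)
    simp only [mem_filter, neg_le_neg_iff, not_le] at hg ⊢
    exact ⟨hg.1.1, hg.2.1, Set.mem_uIcc_of_ge hg.2.2 hg.1.2.le⟩
  calc ∑ c ∈ C, (1 - p) ^ #{g ∈ C | Blocks f z c g}
      ≤ (1 - (1 - p))⁻¹ + (1 - (1 - p))⁻¹ := by
        rw [← sum_filter_add_sum_filter_not C (fun c ↦ z.2 ≤ f c z.1)]
        exact add_le_add habove hbelow
    _ = 2 / p := by rw [sub_sub_cancel, ← two_mul, div_eq_mul_inv]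

lemma exists_subset_add_card_visiblePairs_le {p : ℝ} (hp₀ : 0 < p) (hp₁ : p ≤ 1) (w : ℝ)
    (f : ι → ℝ → ℝ) (C : Finset ι) (Q : Finset (ℝ × ℝ)) :
    ∃ R ⊆ C, w * #R + #(visiblePairs f C Q R) ≤ w * (p * #C) + #Q * (2 / p) := by
  classical
  obtain ⟨R, hR, hle⟩ := exists_subset_add_card_disjoint_le hp₀.le hp₁ w C (Q ×ˢ C)
    (fun zc ↦ {g ∈ C | Blocks f zc.1 zc.2 g}) fun _ _ ↦ filter_subset _ _
  have hvisible : visiblePairs f C Q R =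
      {zc ∈ Q ×ˢ C | Disjoint R {g ∈ C | Blocks f zc.1 zc.2 g}} := by
    refine filter_congr fun zc _ ↦ ?_
    simp only [disjoint_left, mem_filter, not_and]
    exact forall₂_congr fun g hg ↦ (imp_iff_right (hR hg)).symm
  refine ⟨R, hR, hvisible ▸ hle.trans (add_le_add_right ?_ _)⟩
  rw [sum_product, ← nsmul_eq_mul]
  exact sum_le_card_nsmul _ _ _ fun z _ ↦ sum_pow_card_blocks_le hp₀ hp₁ f C z

lemma exists_eq_or_eq_of_mem_uIcc {a b : ℝ} (hab : a ≤ b) {c d g : ℝ → ℝ}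
    (hc : ContinuousOn c (Set.Icc a b)) (hd : ContinuousOn d (Set.Icc a b))
    (hg : ContinuousOn g (Set.Icc a b)) (ha : c a = d a) (hb : g b ∈ Set.uIcc (c b) (d b)) :
    ∃ x ∈ Set.Icc a b, g x = c x ∨ g x = d x := by
  have hleft : 0 ≤ (g a - c a) * (g a - d a) := ha ▸ mul_self_nonneg _
  have hright : (g b - c b) * (g b - d b) ≤ 0 := by
    rcases Set.mem_uIcc.1 hb with ⟨hle, hge⟩ | ⟨hle, hge⟩
    · exact mul_nonpos_of_nonneg_of_nonpos (sub_nonneg.2 hle) (sub_nonpos.2 hge)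
    · exact mul_nonpos_of_nonpos_of_nonneg (sub_nonpos.2 hge) (sub_nonneg.2 hle)
  obtain ⟨x, hx, hzero⟩ :=
    intermediate_value_Icc' hab ((hg.sub hc).mul (hg.sub hd)) ⟨hright, hleft⟩
  exact ⟨x, hx, (mul_eq_zero.1 hzero).imp sub_eq_zero.1 sub_eq_zero.1⟩

end Visibility

section ArcBound

variable {ι : Type*} {f : ι → ℝ → ℝ} {C R : Finset ι} {Q : Finset (ℝ × ℝ)} {G : Finset (Arc ι)}
  (hcont : ∀ i ∈ C, Continuous (f i)) (hR : R ⊆ C)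

namespace Arc

open Classical in
/-- The right endpoints, no further right than that of `e`, of the arcs of `G` that leave the left
endpoint of `e`. -/
def nearerEnds (G : Finset (Arc ι)) (e : Arc ι) : Finset (ℝ × ℝ) :=
  {a ∈ G | a.left = e.left ∧ a.right.1 ≤ e.right.1}.image right

open Classical in
lemma card_filter_card_nearerEnds_le {k : ℕ} (hG : ∀ e ∈ G, e.left ∈ Q)
    (hmul : ∀ q q', #{e ∈ G | e.left = q ∧ e.right = q'} ≤ k) (K : ℕ) :
    #{e ∈ G | #(nearerEnds G e) ≤ K} ≤ k * K * #Q := by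
  refine card_le_mul_card_image_of_maps_to (f := left)
    (fun e he ↦ hG e (mem_filter.1 he).1) _ fun q _ ↦ ?_
  set ends := {a ∈ G | a.left = q}.image right
  have hnearer : ∀ e : Arc ι, e.left = q → nearerEnds G e = {z ∈ ends | z.1 ≤ e.right.1} := by
    rintro e rfl
    rw [nearerEnds, filter_image, filter_filter]
  refine (card_le_mul_card_image_of_maps_to (f := right)
    (t := {j ∈ ends | #{i ∈ ends | i.1 ≤ j.1} ≤ K}) (fun e he ↦ ?_) k fun q' _ ↦ ?_).trans
    (Nat.mul_le_mul_left k (card_filter_card_filter_le_le Prod.fst ends K))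
  · obtain ⟨he, heq⟩ := mem_filter.1 he
    obtain ⟨heG, heK⟩ := mem_filter.1 he
    exact mem_filter.2 ⟨mem_image_of_mem right (mem_filter.2 ⟨heG, heq⟩), hnearer e heq ▸ heK⟩
  · refine (card_le_card fun e he ↦ ?_).trans (hmul q q')
    simp only [mem_filter] at he ⊢
    exact ⟨he.1.1.1, he.1.2, he.2⟩

include hcont hR in
lemma IsConsecutive.mem_visiblePairs {a e : Arc ι} (ha : a.IsConsecutive f C Q)
    (he : e.IsConsecutive f C Q) (haR : ¬ a.IsCrossed f R) (heR : ¬ e.IsCrossed f R)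
    (hleft : a.left = e.left) (hright : a.right.1 ≤ e.right.1) :
    (a.right, e.curve) ∈ visiblePairs f C Q R := by
  classical
  refine mem_filter.2 ⟨mk_mem_product (mem_pointsOn.1 ha.right_mem).1 he.curve_mem, ?_⟩
  rintro g hg ⟨hge, hblocks⟩
  rw [← (mem_pointsOn.1 ha.right_mem).2] at hblocks
  have hstart : f a.curve a.left.1 = f e.curve a.left.1 := by
    rw [(mem_pointsOn.1 ha.left_mem).2, hleft, (mem_pointsOn.1 he.left_mem).2]
  rcases eq_or_ne g a.curve with rfl | hga
  · exact heR ⟨_, hg, hge, e.left.1, Set.left_mem_Icc.2 he.left_lt_right.le, hleft ▸ hstart⟩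
  obtain ⟨x, ⟨hx_left, hx_right⟩, hx⟩ := exists_eq_or_eq_of_mem_uIcc ha.left_lt_right.le
    (hcont _ ha.curve_mem).continuousOn (hcont _ he.curve_mem).continuousOn
    (hcont g (hR hg)).continuousOn hstart hblocks
  rcases hx with hx | hx
  · exact haR ⟨g, hg, hga, x, ⟨hx_left, hx_right⟩, hx⟩
  · exact heR ⟨g, hg, hge, x, ⟨hleft ▸ hx_left, hx_right.trans hright⟩, hx⟩

include hcont hR in
open Classical in
lemma card_filter_lt_card_nearerEnds_mul_le (hG : ∀ e ∈ G, e.IsConsecutive f C Q)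
    (hGR : ∀ e ∈ G, ¬ e.IsCrossed f R) (K : ℕ) :
    #{e ∈ G | K < #(nearerEnds G e)} * K ≤ #(visiblePairs f C Q R) := by
  set H := {e ∈ G | K < #(nearerEnds G e)}
  have hends : ∀ e : Arc ι, ∀ z ∈ nearerEnds G e,
      ∃ a ∈ G, a.left = e.left ∧ a.right.1 ≤ e.right.1 ∧ a.right = z := by
    intro e z hz
    obtain ⟨a, ha, haz⟩ := mem_image.1 hz
    obtain ⟨haG, hleft, hright⟩ := mem_filter.1 ha
    exact ⟨a, haG, hleft, hright, haz⟩
  have hHG : ∀ e ∈ H, e ∈ G := filter_subset _ _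
  have hbetween : ∀ e, ∀ z ∈ nearerEnds G e, z.1 ∈ Set.Ioc e.left.1 e.right.1 := by
    intro e z hz
    obtain ⟨a, ha, hleft, hright, rfl⟩ := hends e z hz
    exact ⟨hleft ▸ (hG a ha).left_lt_right, hright⟩
  calc #H * K ≤ ∑ e ∈ H, #(nearerEnds G e) :=
        card_nsmul_le_sum H _ K fun e he ↦ (mem_filter.1 he).2.le
    _ = #(H.sigma (nearerEnds G)) := (card_sigma _ _).symm
    _ ≤ #(visiblePairs f C Q R) := by
      refine card_le_card_of_injOn (fun ez ↦ (ez.2, ez.1.curve)) ?_ ?_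
      · rintro ⟨e, z⟩ hez
        obtain ⟨he, hz⟩ := mem_sigma.1 hez
        obtain ⟨a, ha, hleft, hright, rfl⟩ := hends e z hz
        exact (hG a ha).mem_visiblePairs hcont hR (hG e (hHG e he)) (hGR a ha)
          (hGR e (hHG e he)) hleft hright
      · rintro ⟨e, z⟩ hez ⟨e', z'⟩ hez' heq
        obtain ⟨rfl, hcurve⟩ := Prod.mk.inj heq
        obtain ⟨he, hz⟩ := mem_sigma.1 hez
        obtain ⟨he', hz'⟩ := mem_sigma.1 hez'
        obtain rfl : e = e' := (hG e (hHG e he)).ext_mem_Ioc (hG e' (hHG e' he')) hcurve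
          (hbetween e z hz) (hbetween e' z hz')
        rfl

end Arc

include hcont in
open Classical in
theorem card_arcs_le {s k K : ℕ} (hf : MeetAtMost s f C) (hG : ∀ e ∈ G, e.IsConsecutive f C Q)
    (hk : 1 ≤ k) (hmul : ∀ q q', #{e ∈ G | e.left = q ∧ e.right = q'} ≤ k) (hK : 1 ≤ K) :
    (#G : ℝ) ≤ 2 * s * #C ^ 2 / (k * K ^ 2) + 3 * #Q * k * K := by
  have hk : (1 : ℝ) ≤ k := mod_cast hk
  have hK : (1 : ℝ) ≤ K := mod_cast hK
  have hkK : (1 : ℝ) ≤ k * K ^ 2 := one_le_mul_of_one_le_of_one_le hk (one_le_pow₀ hK)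
  obtain ⟨R, hR, hsample⟩ := exists_subset_add_card_visiblePairs_le (p := 1 / (k * K ^ 2))
    (by positivity) (div_le_one_of_le₀ hkK (by positivity)) (2 * s * #C * K) f C Q
  set G' := {e ∈ G | ¬ e.IsCrossed f R}
  have hG' : ∀ e ∈ G', e.IsConsecutive f C Q := fun e he ↦ hG e (mem_filter.1 he).1
  set few := {e ∈ G' | #(Arc.nearerEnds G' e) ≤ K}
  set many := {e ∈ G' | K < #(Arc.nearerEnds G' e)}
  have hcrossed := Arc.card_isCrossed_le hf hG hR
  have hfew : #few ≤ k * K * #Q := Arc.card_filter_card_nearerEnds_le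
    (fun e he ↦ (mem_pointsOn.1 (hG' e he).left_mem).1)
    (fun q q' ↦ (card_le_card (filter_subset_filter _ (filter_subset _ _))).trans (hmul q q')) K
  have hmany : (#many * K : ℝ) ≤ #(visiblePairs f C Q R) := mod_cast
    Arc.card_filter_lt_card_nearerEnds_mul_le hcont hR hG' (fun e he ↦ (mem_filter.1 he).2) K
  have hsplit : (#G : ℝ) ≤ 2 * s * #C * #R + k * K * #Q + #many := by
    have hG_split : #{e ∈ G | e.IsCrossed f R} + #G' = #G := card_filter_add_card_filter_not _
    have hG'_split : #few + #many = #G' := by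
      simpa only [not_le] using
        card_filter_add_card_filter_not (s := G') fun e ↦ #(Arc.nearerEnds G' e) ≤ K
    have : #G ≤ #C * #R * (s * 2) + k * K * #Q + #many := by omega
    calc (#G : ℝ) ≤ (#C * #R * (s * 2) + k * K * #Q + #many : ℕ) := mod_cast this
      _ = 2 * s * #C * #R + k * K * #Q + #many := by push_cast; ring
  have hsample_many : 2 * s * #C * #R + #many ≤
      2 * s * (#C : ℝ) ^ 2 / (k * K ^ 2) + 2 * #Q * k * K := by
    refine le_of_mul_le_mul_right ?_ (zero_lt_one.trans_le hK)
    calc (2 * s * #C * #R + #many) * (K : ℝ)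
        = 2 * s * #C * K * #R + #many * K := by ring
      _ ≤ 2 * s * #C * K * #R + #(visiblePairs f C Q R) := by gcongr
      _ ≤ 2 * s * #C * K * (1 / (k * K ^ 2) * #C) + #Q * (2 / (1 / (k * K ^ 2))) := hsample
      _ = (2 * s * #C ^ 2 / (k * K ^ 2) + 2 * #Q * k * K) * K := by field_simp
  linarith

end ArcBound

section SzemerediTrotter

variable {ι : Type*}

lemma card_arcs_left_right_le_one {f : ι → ℝ → ℝ} {C : Finset ι}
    (hf : MeetAtMost 1 f C) (Q : Finset (ℝ × ℝ)) (q q' : ℝ × ℝ) :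
    #{e ∈ arcs f C Q | e.left = q ∧ e.right = q'} ≤ 1 := by
  simp only [card_le_one, mem_filter, mem_arcs]
  rintro e ⟨he, rfl, rfl⟩ e' ⟨he', hleft, hright⟩
  by_contra hne
  have hcurve : e.curve ≠ e'.curve := fun h ↦ hne (Arc.ext hleft.symm hright.symm h)
  refine he.left_lt_right.ne (Set.encard_le_one_iff.1
    (hf _ he.curve_mem _ he'.curve_mem hcurve) e.left.1 e.right.1 ?_ ?_)
  · exact (mem_pointsOn.1 he.left_mem).2.trans
      (hleft ▸ (mem_pointsOn.1 he'.left_mem).2.symm)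
  · exact (mem_pointsOn.1 he.right_mem).2.trans
      (hright ▸ (mem_pointsOn.1 he'.right_mem).2.symm)

lemma le_of_forall_le_sq_div_sq_add {I E N m k : ℝ} (hN : 0 ≤ N) (hm : 0 ≤ m) (hk : 2 ≤ k)
    (hIE : I ≤ E + N) (hNk : N * k ≤ I)
    (hE : ∀ K : ℕ, 1 ≤ K → E ≤ 2 * N ^ 2 / K ^ 2 + 3 * m * K) :
    I ≤ 1024 * m ^ 2 / k ^ 2 + 32 * m := by
  have hk₀ : 0 < k := by linarith
  have hI : 0 ≤ I := (mul_nonneg hN hk₀.le).trans hNk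
  set u := √I
  have hu : u * u = I := Real.mul_self_sqrt hI
  set K := ⌈4 * u / k⌉₊ + 1
  have hK_ge : 4 * u ≤ K * k :=
    (div_le_iff₀ hk₀).1 ((Nat.le_ceil _).trans (mod_cast Nat.le_succ _))
  have hK_le : (K : ℝ) ≤ 4 * u / k + 2 := by
    have := Nat.ceil_lt_add_one (a := 4 * u / k) (by positivity)
    simp only [K, Nat.cast_add, Nat.cast_one]
    linarith
  have hfirst : 2 * N ^ 2 / K ^ 2 ≤ I / 8 := by
    have hNK : 4 * N ≤ u * K := by
      refine le_of_mul_le_mul_right ?_ hk₀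
      calc 4 * N * k ≤ u * (4 * u) := by linarith
        _ ≤ u * (K * k) := by gcongr
        _ = u * K * k := by ring
    rw [div_le_iff₀ (by positivity)]
    calc 2 * N ^ 2 = (4 * N) ^ 2 / 8 := by ring
      _ ≤ (u * K) ^ 2 / 8 := by gcongr
      _ = I / 8 * K ^ 2 := by rw [← hu]; ring
  have hN_le : N ≤ I / 2 := by linarith [mul_le_mul_of_nonneg_left hk hN]
  have hI_le : I ≤ 32 * (m / k) * u + 16 * m := by
    calc I ≤ 8 * m * K := by linarith [hE K (Nat.le_add_left 1 _)]
      _ ≤ 8 * m * (4 * u / k + 2) := by gcongr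
      _ = 32 * (m / k) * u + 16 * m := by ring
  have hyoung : 32 * (m / k) * u ≤ I / 2 + 512 * (m / k) ^ 2 := by
    linarith [two_mul_le_add_sq u (32 * (m / k))]
  calc I ≤ 1024 * (m / k) ^ 2 + 32 * m := by linarith
    _ = 1024 * m ^ 2 / k ^ 2 + 32 * m := by rw [div_pow, mul_div_assoc]

theorem sum_card_pointsOn_le_of_rich {f : ι → ℝ → ℝ} {C : Finset ι} {Q : Finset (ℝ × ℝ)} {k : ℕ}
    (hcont : ∀ c ∈ C, Continuous (f c)) (hf : MeetAtMost 1 f C) (hk : 2 ≤ k)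
    (hrich : ∀ c ∈ C, k ≤ #(pointsOn f Q c)) :
    (∑ c ∈ C, #(pointsOn f Q c) : ℝ) ≤ 1024 * #Q ^ 2 / k ^ 2 + 32 * #Q := by
  classical
  refine le_of_forall_le_sq_div_sq_add (N := #C) (E := #(arcs f C Q)) (by positivity)
    (by positivity) (mod_cast hk) (mod_cast sum_card_pointsOn_le f C Q) ?_ fun K hK ↦ ?_
  · exact_mod_cast card_nsmul_le_sum C _ k hrich
  · simpa using card_arcs_le hcont hf (fun _ ↦ mem_arcs.1) le_rfl
      (card_arcs_left_right_le_one hf Q) hK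

/-- `S` is the set of points of `P` on some line. -/
def IsLineSection (P S : Finset (ℝ × ℝ)) : Prop :=
  ∃ A B D : ℝ, (A ≠ 0 ∨ B ≠ 0) ∧ S = {p ∈ P | A * p.1 + B * p.2 = D}

/-- The affine function with slope `q.1` and intercept `q.2`; its graph is the line dual to `q`. -/
def affineFun (q : ℝ × ℝ) (x : ℝ) : ℝ := q.1 * x + q.2

lemma continuous_affineFun (q : ℝ × ℝ) : Continuous (affineFun q) := by
  unfold affineFun
  fun_prop

lemma meetAtMost_one_affineFun (C : Finset (ℝ × ℝ)) : MeetAtMost 1 affineFun C := by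
  intro q _ q' _ hne
  refine Set.encard_le_one_iff.2 fun x y (hx : _ = _) (hy : _ = _) ↦ ?_
  by_contra hxy
  simp only [affineFun] at hx hy
  have hslope : q.1 = q'.1 := sub_eq_zero.1 <|
    (mul_eq_zero.1 (by linear_combination hx - hy : (q.1 - q'.1) * (x - y) = 0)).resolve_right
      (sub_ne_zero.2 hxy)
  exact hne (Prod.ext hslope (by linear_combination hx - x * hslope))

lemma IsLineSection.eq_pointsOn_or {P S : Finset (ℝ × ℝ)} (hS : IsLineSection P S) :
    (∃ q, S = pointsOn affineFun P q) ∨ ∃ x₀, S = {p ∈ P | p.1 = x₀} := by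
  obtain ⟨A, B, D, hAB, rfl⟩ := hS
  rcases eq_or_ne B 0 with rfl | hB
  · have hA : A ≠ 0 := hAB.resolve_right fun h ↦ h rfl
    refine Or.inr ⟨D / A, filter_congr fun p _ ↦ ?_⟩
    rw [eq_div_iff hA, zero_mul, add_zero, mul_comm]
  · refine Or.inl ⟨(-A / B, D / B), filter_congr fun p _ ↦ ?_⟩
    rw [affineFun, div_mul_eq_mul_div, ← add_div, div_eq_iff hB]
    constructor <;> intro h <;> linarith

theorem sum_card_isLineSection_le_of_rich {P : Finset (ℝ × ℝ)} {Λ : Finset (Finset (ℝ × ℝ))}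
    {k : ℕ} (hk : 2 ≤ k) (hΛ : ∀ S ∈ Λ, IsLineSection P S) (hrich : ∀ S ∈ Λ, k ≤ #S) :
    (∑ S ∈ Λ, #S : ℝ) ≤ 1024 * #P ^ 2 / k ^ 2 + 33 * #P := by
  classical
  set slanted := {S ∈ Λ | ∃ q, S = pointsOn affineFun P q}
  set vertical := {S ∈ Λ | ¬ ∃ q, S = pointsOn affineFun P q}
  have hslanted : (∑ S ∈ slanted, #S : ℝ) ≤ 1024 * #P ^ 2 / k ^ 2 + 32 * #P := by
    choose! line hline using fun S (hS : S ∈ slanted) ↦ (mem_filter.1 hS).2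
    have hinj : Set.InjOn line slanted := fun S hS S' hS' h ↦ by
      rw [hline S hS, hline S' hS', h]
    have hlines := sum_card_pointsOn_le_of_rich (Q := P)
      (fun q _ ↦ continuous_affineFun q) (meetAtMost_one_affineFun (slanted.image line)) hk
      (forall_mem_image.2 fun S hS ↦ hline S hS ▸ hrich S (mem_filter.1 hS).1)
    rw [sum_image hinj] at hlines
    exact (sum_congr rfl fun S hS ↦ by rw [← hline S hS]).trans_le hlines
  have hvertical : ∑ S ∈ vertical, #S ≤ #P := by
    have hline : ∀ S ∈ vertical, ∃ x₀, S = {p ∈ P | p.1 = x₀} := fun S hS ↦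
      (hΛ S (mem_filter.1 hS).1).eq_pointsOn_or.resolve_left (mem_filter.1 hS).2
    have hunique : ∀ p ∈ P, #{S ∈ vertical | p ∈ S} ≤ 1 := by
      simp only [card_le_one, mem_filter (p := (_ ∈ ·))]
      rintro p - S ⟨hS, hpS⟩ S' ⟨hS', hpS'⟩
      obtain ⟨x₀, rfl⟩ := hline S hS
      obtain ⟨x₁, rfl⟩ := hline S' hS'
      rw [← (mem_filter.1 hpS).2, ← (mem_filter.1 hpS').2]
    have hsubset : ∀ S ∈ vertical, P ∩ S = S := fun S hS ↦ by
      obtain ⟨x₀, rfl⟩ := hline S hS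
      exact inter_eq_right.2 (filter_subset _ _)
    calc ∑ S ∈ vertical, #S = ∑ S ∈ vertical, #(P ∩ S) :=
          sum_congr rfl fun S hS ↦ by rw [hsubset S hS]
      _ ≤ #P := (sum_card_inter_le hunique).trans_eq (mul_one _)
  calc (∑ S ∈ Λ, #S : ℝ) = ∑ S ∈ slanted, (#S : ℝ) + ∑ S ∈ vertical, (#S : ℝ) :=
        (sum_filter_add_sum_filter_not Λ _ _).symm
    _ ≤ (1024 * #P ^ 2 / k ^ 2 + 32 * #P) + #P := add_le_add hslanted (mod_cast hvertical)
    _ = 1024 * #P ^ 2 / k ^ 2 + 33 * #P := by ring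

end SzemerediTrotter

section DualCurves

/-- The length of the direction vector `(1, a)` of a line of slope `a`. -/
def slopeNorm (a : ℝ) : ℝ := √(1 + a ^ 2)

lemma slopeNorm_pos (a : ℝ) : 0 < slopeNorm a := Real.sqrt_pos.2 (by positivity)

lemma slopeNorm_sq (a : ℝ) : slopeNorm a ^ 2 = 1 + a ^ 2 := Real.sq_sqrt (by positivity)

lemma continuous_slopeNorm : Continuous slopeNorm := by
  unfold slopeNorm
  fun_prop

lemma hasDerivAt_slopeNorm (a : ℝ) : HasDerivAt slopeNorm (a / slopeNorm a) a := by
  have hsq : HasDerivAt (fun a : ℝ ↦ 1 + a ^ 2) (2 * a) a := by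
    simpa using ((hasDerivAt_id a).pow 2).const_add 1
  exact (hsq.sqrt (by positivity)).congr_deriv (mul_div_mul_left _ _ two_ne_zero)

lemma hasDerivAt_div_slopeNorm (A B a : ℝ) :
    HasDerivAt (fun a ↦ (A + B * a) / slopeNorm a) ((B - A * a) / slopeNorm a ^ 3) a := by
  have hlin : HasDerivAt (fun a ↦ A + B * a) B a := by
    simpa using ((hasDerivAt_id a).const_mul B).const_add A
  have hpos := slopeNorm_pos a
  refine (hlin.div (hasDerivAt_slopeNorm a) hpos.ne').congr_deriv ?_
  field_simp
  rw [slopeNorm_sq]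
  ring

lemma div_slopeNorm_ne_of_eq {A B a b c d : ℝ} (hAB : A ≠ 0 ∨ B ≠ 0) (hab : a < b) (hbc : b ≤ c)
    (hcd : c < d) (heq : (A + B * a) / slopeNorm a = (A + B * b) / slopeNorm b) :
    (A + B * c) / slopeNorm c ≠ (A + B * d) / slopeNorm d := by
  intro heq'
  have hderiv := hasDerivAt_div_slopeNorm A B
  have hcont : Continuous fun a ↦ (A + B * a) / slopeNorm a :=
    continuous_iff_continuousAt.2 fun a ↦ (hderiv a).continuousAt
  obtain ⟨x, hx, hx₀⟩ := exists_hasDerivAt_eq_zero hab hcont.continuousOn heq fun x _ ↦ hderiv x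
  obtain ⟨y, hy, hy₀⟩ := exists_hasDerivAt_eq_zero hcd hcont.continuousOn heq' fun x _ ↦ hderiv x
  have hxy : y - x ≠ 0 := (sub_pos.2 (hx.2.trans_le (hbc.trans hy.1.le))).ne'
  have hBx : B - A * x = 0 :=
    (div_eq_zero_iff.1 hx₀).resolve_right (pow_pos (slopeNorm_pos x) 3).ne'
  have hBy : B - A * y = 0 :=
    (div_eq_zero_iff.1 hy₀).resolve_right (pow_pos (slopeNorm_pos y) 3).ne'
  have hA : A = 0 :=
    (mul_eq_zero.1 (by linear_combination hBx - hBy : A * (y - x) = 0)).resolve_right hxy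
  exact hAB.elim (fun h ↦ h hA) fun h ↦ h (by linear_combination hBx + x * hA)

/-- The signed distance from the point `p` to the line `y = q.1 * x + q.2`. -/
def lineSignedDist (p q : ℝ × ℝ) : ℝ := (p.2 - affineFun q p.1) / slopeNorm q.1

lemma lineSignedDist_sub (p p' q : ℝ × ℝ) : lineSignedDist p q - lineSignedDist p' q =
    (p.2 - p'.2 + -(p.1 - p'.1) * q.1) / slopeNorm q.1 := by
  unfold lineSignedDist affineFun
  ring

lemma lineSignedDist_ne_of_eq {p p' : ℝ × ℝ} (hpp' : p ≠ p') {q₁ q₂ q₃ q₄ : ℝ × ℝ}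
    (h₁₂ : q₁.1 < q₂.1) (h₂₃ : q₂.1 ≤ q₃.1) (h₃₄ : q₃.1 < q₄.1)
    (hp : lineSignedDist p q₁ = lineSignedDist p q₂)
    (hp' : lineSignedDist p' q₁ = lineSignedDist p' q₂)
    (hq : lineSignedDist p q₃ = lineSignedDist p q₄) :
    lineSignedDist p' q₃ ≠ lineSignedDist p' q₄ := by
  intro hq'
  have hne : p.2 - p'.2 ≠ 0 ∨ -(p.1 - p'.1) ≠ 0 := by
    by_contra! h
    exact hpp' (Prod.ext (sub_eq_zero.1 (neg_eq_zero.1 h.2)) (sub_eq_zero.1 h.1))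
  refine div_slopeNorm_ne_of_eq hne h₁₂ h₂₃ h₃₄ ?_ ?_
  · rw [← lineSignedDist_sub, ← lineSignedDist_sub, hp, hp']
  · rw [← lineSignedDist_sub, ← lineSignedDist_sub, hq, hq']

/-- The lines `y = a * x + b` at signed distance `c.2` from the point `c.1`, as a curve in the
plane of the parameters `(a, b)`. -/
def dualCurve (c : (ℝ × ℝ) × ℝ) (a : ℝ) : ℝ := c.1.2 - a * c.1.1 - c.2 * slopeNorm a

lemma continuous_dualCurve (c : (ℝ × ℝ) × ℝ) : Continuous (dualCurve c) := by
  have := continuous_slopeNorm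
  unfold dualCurve
  fun_prop

lemma dualCurve_eq_iff {c : (ℝ × ℝ) × ℝ} {q : ℝ × ℝ} :
    dualCurve c q.1 = q.2 ↔ lineSignedDist c.1 q = c.2 := by
  rw [lineSignedDist, div_eq_iff (slopeNorm_pos _).ne', dualCurve, affineFun]
  constructor <;> intro h <;> linarith

lemma meetAtMost_two_dualCurve (C : Finset ((ℝ × ℝ) × ℝ)) : MeetAtMost 2 dualCurve C := by
  intro c _ c' _ hne
  have hagree : ∀ a, dualCurve c a = dualCurve c' a →
      (c.1.2 - c'.1.2 + -(c.1.1 - c'.1.1) * a) / slopeNorm a = c.2 - c'.2 := by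
    intro a ha
    simp only [dualCurve] at ha
    rw [div_eq_iff (slopeNorm_pos a).ne']
    linarith
  by_contra! hlt
  obtain ⟨T, hT, hT_card⟩ := Set.exists_subset_encard_eq (Order.add_one_le_of_lt hlt)
  have hT_fin : T.Finite := Set.finite_of_encard_eq_coe (k := 3) hT_card
  have hcard : #hT_fin.toFinset = 3 := by
    rw [hT_fin.encard_eq_coe_toFinset_card] at hT_card
    exact_mod_cast hT_card
  set a := hT_fin.toFinset.orderEmbOfFin hcard
  have ha : ∀ i, (c.1.2 - c'.1.2 + -(c.1.1 - c'.1.1) * a i) / slopeNorm (a i) = c.2 - c'.2 :=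
    fun i ↦ hagree _ (hT (hT_fin.mem_toFinset.1 (orderEmbOfFin_mem _ hcard i)))
  have hcenter : c.1.2 - c'.1.2 ≠ 0 ∨ -(c.1.1 - c'.1.1) ≠ 0 := by
    by_contra! h
    refine hne (Prod.ext (Prod.ext (by linarith [h.2]) (by linarith [h.1])) ?_)
    simpa [h.1, h.2, eq_comm, sub_eq_zero] using ha 0
  exact div_slopeNorm_ne_of_eq hcenter (a.strictMono (by decide : (0 : Fin 3) < 1)) le_rfl
    (a.strictMono (by decide : (1 : Fin 3) < 2)) ((ha 0).trans (ha 1).symm)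
    ((ha 1).trans (ha 2).symm)

end DualCurves

section DistanceCount

/-- The points of `P` at the same signed distance from the two lines dual to `q` and `q'`. -/
def equidistant (P : Finset (ℝ × ℝ)) (q q' : ℝ × ℝ) : Finset (ℝ × ℝ) :=
  {p ∈ P | lineSignedDist p q = lineSignedDist p q'}

lemma isLineSection_equidistant (P : Finset (ℝ × ℝ)) {q q' : ℝ × ℝ} (h : q.1 ≠ q'.1) :
    IsLineSection P (equidistant P q q') := by
  refine ⟨q'.1 / slopeNorm q'.1 - q.1 / slopeNorm q.1, 1 / slopeNorm q.1 - 1 / slopeNorm q'.1,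
    q.2 / slopeNorm q.1 - q'.2 / slopeNorm q'.1, ?_, filter_congr fun p _ ↦ ?_⟩
  · by_contra! hzero
    have hnorm : slopeNorm q.1 = slopeNorm q'.1 := by
      simpa only [one_div, inv_inj] using sub_eq_zero.1 hzero.2
    rw [hnorm, ← sub_div, div_eq_zero_iff] at hzero
    exact h (sub_eq_zero.1 (hzero.1.resolve_right (slopeNorm_pos _).ne')).symm
  · rw [← sub_eq_zero, ← sub_eq_zero (a := _ + _)]
    refine Eq.congr_left ?_
    unfold lineSignedDist affineFun
    ring

variable {P Q : Finset (ℝ × ℝ)} {D : Finset ℝ}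

lemma sum_card_pointsOn_dualCurve (hD : ∀ p ∈ P, ∀ q ∈ Q, lineSignedDist p q ∈ D) :
    ∑ c ∈ P ×ˢ D, #(pointsOn dualCurve Q c) = #P * #Q := by
  rw [sum_product]
  refine sum_const_nat fun p hp ↦ ?_
  rw [card_eq_sum_card_fiberwise (hD p hp)]
  exact sum_congr rfl fun s _ ↦ congr_arg card (filter_congr fun q _ ↦ dualCurve_eq_iff)

namespace Arc

variable {C : Finset ((ℝ × ℝ) × ℝ)} {e e' : Arc ((ℝ × ℝ) × ℝ)}

lemma IsConsecutive.lineSignedDist_left (he : e.IsConsecutive dualCurve C Q) :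
    lineSignedDist e.curve.1 e.left = e.curve.2 :=
  dualCurve_eq_iff.1 (mem_pointsOn.1 he.left_mem).2

lemma IsConsecutive.lineSignedDist_right (he : e.IsConsecutive dualCurve C Q) :
    lineSignedDist e.curve.1 e.right = e.curve.2 :=
  dualCurve_eq_iff.1 (mem_pointsOn.1 he.right_mem).2

lemma IsConsecutive.mem_equidistant (he : e.IsConsecutive dualCurve (P ×ˢ D) Q) :
    e.curve.1 ∈ equidistant P e.left e.right :=
  mem_filter.2 ⟨(mem_product.1 he.curve_mem).1,
    he.lineSignedDist_left.trans he.lineSignedDist_right.symm⟩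

lemma IsConsecutive.left_le_left_of_equidistant (he : e.IsConsecutive dualCurve C Q)
    (he' : e'.IsConsecutive dualCurve C Q) (hcurve : e.curve = e'.curve)
    (heq : equidistant P e.left e.right = equidistant P e'.left e'.right)
    (hcard : 2 ≤ #(equidistant P e.left e.right)) : e'.left.1 ≤ e.left.1 := by
  by_contra! hlt
  obtain ⟨p, hp, hne⟩ := exists_mem_ne hcard e.curve.1
  have hp' : p ∈ equidistant P e'.left e'.right := heq ▸ hp
  exact lineSignedDist_ne_of_eq hne.symm he.left_lt_right (he.right_le_left he' hcurve hlt)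
    he'.left_lt_right (he.lineSignedDist_left.trans he.lineSignedDist_right.symm)
    (mem_filter.1 hp).2
    (hcurve ▸ he'.lineSignedDist_left.trans he'.lineSignedDist_right.symm)
    (mem_filter.1 hp').2

lemma IsConsecutive.ext_equidistant (he : e.IsConsecutive dualCurve C Q)
    (he' : e'.IsConsecutive dualCurve C Q) (hcurve : e.curve = e'.curve)
    (heq : equidistant P e.left e.right = equidistant P e'.left e'.right)
    (hcard : 2 ≤ #(equidistant P e.left e.right)) : e = e' :=
  he.ext_left he' hcurve <|
    (he'.left_le_left_of_equidistant he hcurve.symm heq.symm (heq ▸ hcard)).antisymm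
      (he.left_le_left_of_equidistant he' hcurve heq hcard)

end Arc

lemma card_arcs_equidistant_lt_le (P Q : Finset (ℝ × ℝ)) (D : Finset ℝ) {k K : ℕ} (hk : 1 ≤ k)
    (hK : 1 ≤ K) :
    (#{e ∈ arcs dualCurve (P ×ˢ D) Q | #(equidistant P e.left e.right) < k} : ℝ) ≤
      4 * (#P * #D) ^ 2 / (k * K ^ 2) + 3 * #Q * k * K := by
  set light := {e ∈ arcs dualCurve (P ×ˢ D) Q | #(equidistant P e.left e.right) < k}
  have hlight : ∀ e ∈ light, e.IsConsecutive dualCurve (P ×ˢ D) Q :=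
    fun e he ↦ mem_arcs.1 (mem_filter.1 he).1
  have hmul : ∀ q q', #{e ∈ light | e.left = q ∧ e.right = q'} ≤ k := by
    intro q q'
    rcases {e ∈ light | e.left = q ∧ e.right = q'}.eq_empty_or_nonempty with hempty | ⟨e₀, he₀⟩
    · simp [hempty]
    obtain ⟨he₀_light, rfl, rfl⟩ := mem_filter.1 he₀
    refine (card_le_card_of_injOn (fun e ↦ e.curve.1) (fun e he ↦ ?_)
      fun e he e' he' hcenter ↦ ?_)
      |>.trans (mem_filter.1 he₀_light).2.le
    · obtain ⟨he, hleft, hright⟩ := mem_filter.1 he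
      exact hleft ▸ hright ▸ (hlight e he).mem_equidistant
    · obtain ⟨he, hleft, -⟩ := mem_filter.1 he
      obtain ⟨he', hleft', -⟩ := mem_filter.1 he'
      have hdist : e.curve.2 = e'.curve.2 := by
        rw [← (hlight e he).lineSignedDist_left, ← (hlight e' he').lineSignedDist_left, hleft,
          hleft']
        exact congr_arg (lineSignedDist · _) hcenter
      exact (hlight e he).ext_left (hlight e' he') (Prod.ext hcenter hdist)
        (by rw [hleft, hleft'])
  have hbound := card_arcs_le (fun c _ ↦ continuous_dualCurve c)
    (meetAtMost_two_dualCurve (P ×ˢ D)) hlight hk hmul hK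
  rw [card_product] at hbound
  push_cast at hbound
  linarith

lemma card_arcs_le_equidistant_le (P Q : Finset (ℝ × ℝ)) (D : Finset ℝ) {k : ℕ} (hk : 2 ≤ k) :
    (#{e ∈ arcs dualCurve (P ×ˢ D) Q | k ≤ #(equidistant P e.left e.right)} : ℝ) ≤
      #D * (1024 * #P ^ 2 / k ^ 2 + 33 * #P) := by
  classical
  set heavy := {e ∈ arcs dualCurve (P ×ˢ D) Q | k ≤ #(equidistant P e.left e.right)}
  have hheavy : ∀ e ∈ heavy, e.IsConsecutive dualCurve (P ×ˢ D) Q :=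
    fun e he ↦ mem_arcs.1 (mem_filter.1 he).1
  set Λ := heavy.image fun e ↦ equidistant P e.left e.right
  have hΛ : ∀ S ∈ Λ, IsLineSection P S := forall_mem_image.2 fun e he ↦
    isLineSection_equidistant P (hheavy e he).left_lt_right.ne
  have hrich : ∀ S ∈ Λ, k ≤ #S := forall_mem_image.2 fun e he ↦ (mem_filter.1 he).2
  have hcard : #heavy ≤ #(D ×ˢ Λ.sigma id) := by
    refine card_le_card_of_injOn
      (fun e ↦ (e.curve.2, ⟨equidistant P e.left e.right, e.curve.1⟩)) (fun e he ↦ ?_)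
      fun e he e' he' heq ↦ ?_
    · exact mk_mem_product (mem_product.1 (hheavy e he).curve_mem).2 (mem_sigma.2
        ⟨mem_image_of_mem _ he, (hheavy e he).mem_equidistant⟩)
    · simp only [Prod.mk.injEq, Sigma.mk.injEq, heq_eq_eq] at heq
      exact (hheavy e he).ext_equidistant (hheavy e' he') (Prod.ext heq.2.2 heq.1) heq.2.1
        (hk.trans (mem_filter.1 he).2)
  rw [card_product, card_sigma] at hcard
  calc (#heavy : ℝ) ≤ #D * ∑ S ∈ Λ, #S := mod_cast hcard
    _ ≤ #D * (1024 * #P ^ 2 / k ^ 2 + 33 * #P) := by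
      gcongr
      exact_mod_cast sum_card_isLineSection_le_of_rich hk hΛ hrich

theorem card_mul_card_le (hD : ∀ p ∈ P, ∀ q ∈ Q, lineSignedDist p q ∈ D) {k K : ℕ} (hk : 2 ≤ k)
    (hK : 1 ≤ K) :
    (#P * #Q : ℝ) ≤ #P * #D + #D * (1024 * #P ^ 2 / k ^ 2 + 33 * #P) +
      (4 * (#P * #D) ^ 2 / (k * K ^ 2) + 3 * #Q * k * K) := by
  have hincidences := sum_card_pointsOn_le dualCurve (P ×ˢ D) Q
  rw [sum_card_pointsOn_dualCurve hD, card_product, ← card_filter_add_card_filter_not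
    (fun e : Arc _ ↦ k ≤ #(equidistant P e.left e.right))] at hincidences
  simp only [not_le] at hincidences
  have hheavy := card_arcs_le_equidistant_le P Q D hk
  have hlight := card_arcs_equidistant_lt_le P Q D (one_le_two.trans hk) hK
  replace hincidences := (Nat.cast_le (α := ℝ)).2 hincidences
  push_cast at hincidences
  linarith

end DistanceCount

section Optimization

variable {m n t v : ℝ}

lemma le_of_pow_five_le (hn : 0 ≤ n) (hmn : m ≤ 4 * n ^ 2) (ht : 10 ^ 50 * t ^ 5 ≤ m * n ^ 3) :
    10 ^ 10 * t ≤ 2 * n := by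
  refine le_of_pow_le_pow_left₀ (n := 5) (by norm_num) (by positivity) ?_
  calc (10 ^ 10 * t) ^ 5 = 10 ^ 50 * t ^ 5 := by ring
    _ ≤ m * n ^ 3 := ht
    _ ≤ 4 * n ^ 2 * n ^ 3 := by gcongr
    _ ≤ 32 * n ^ 2 * n ^ 3 := by gcongr; norm_num
    _ = (2 * n) ^ 5 := by ring

lemma sq_le_of_pow_five_le (hm : 0 ≤ m) (hn : 0 ≤ n) (ht₀ : 0 ≤ t) (hnm : n ≤ m ^ 3)
    (ht : 10 ^ 50 * t ^ 5 ≤ m * n ^ 3) : 10 ^ 20 * t ^ 2 ≤ m * n := by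
  refine le_of_pow_le_pow_left₀ (n := 5) (by norm_num) (by positivity) ?_
  calc (10 ^ 20 * t ^ 2) ^ 5 = (10 ^ 50 * t ^ 5) ^ 2 := by ring
    _ ≤ (m * n ^ 3) ^ 2 := by gcongr
    _ = m ^ 2 * n ^ 5 * n := by ring
    _ ≤ m ^ 2 * n ^ 5 * m ^ 3 := by gcongr
    _ = (m * n) ^ 5 := by ring

lemma sq_mul_le_of_pow_five_le (hm : 0 ≤ m) (hn : 0 < n) (hv : v ^ 2 * n = t * m)
    (ht : 10 ^ 50 * t ^ 5 ≤ m * n ^ 3) : 10 ^ 25 * (t ^ 2 * v) ≤ m * n := by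
  refine le_of_pow_le_pow_left₀ two_ne_zero (by positivity) (le_of_mul_le_mul_right ?_ hn)
  calc (10 ^ 25 * (t ^ 2 * v)) ^ 2 * n = 10 ^ 50 * t ^ 4 * (v ^ 2 * n) := by ring
    _ = 10 ^ 50 * t ^ 5 * m := by rw [hv]; ring
    _ ≤ m * n ^ 3 * m := by gcongr
    _ = (m * n) ^ 2 * n := by ring

lemma le_of_sq_mul_eq (hm : 1 ≤ m) (hn : 0 < n) (hv : v ^ 2 * n = t * m)
    (htn : 10 ^ 10 * t ≤ 2 * n) : 10 ^ 4 * v ≤ m := by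
  refine le_of_pow_le_pow_left₀ two_ne_zero (by positivity) (le_of_mul_le_mul_right ?_ hn)
  calc (10 ^ 4 * v) ^ 2 * n = 10 ^ 10 * t * m / 100 := by linear_combination 10 ^ 8 * hv
    _ ≤ 2 * n * m / 100 := by gcongr
    _ ≤ m * n * 1 := by nlinarith
    _ ≤ m * n * m := by gcongr
    _ = m ^ 2 * n := by ring

lemma exists_nat_params (hv : 0 ≤ v) (hvm : 10 ^ 4 * v ≤ m) (hm : 10 ^ 4 ≤ m) :
    ∃ k K : ℕ, 2 ≤ k ∧ 1 ≤ K ∧ 100 * v ≤ k ∧ k ≤ 100 * v + 3 ∧ 24 * k * K ≤ m ∧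
      m ≤ 48 * k * K := by
  obtain ⟨k, hk, hkv, hvk⟩ : ∃ k : ℕ, 2 ≤ k ∧ 100 * v ≤ k ∧ k ≤ 100 * v + 3 := by
    refine ⟨⌈100 * v⌉₊ + 2, by simp, ?_, ?_⟩ <;> push_cast
    · linarith [Nat.le_ceil (100 * v)]
    · linarith [Nat.ceil_lt_add_one (by positivity : 0 ≤ 100 * v)]
  have hk₀ : (0 : ℝ) < 24 * k := by positivity
  have hquot : 1 ≤ m / (24 * k) := (one_le_div hk₀).2 (by linarith)
  have hfloor := Nat.floor_le (zero_le_one.trans hquot)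
  have hlt := Nat.lt_floor_add_one (m / (24 * k))
  have hK : 1 ≤ ⌊m / (24 * (k : ℝ))⌋₊ := Nat.le_floor (mod_cast hquot)
  rw [le_div_iff₀' hk₀] at hfloor
  rw [div_lt_iff₀' hk₀] at hlt
  refine ⟨k, _, hk, hK, hkv, hvk, hfloor, hlt.le.trans ?_⟩
  calc 24 * k * (⌊m / (24 * (k : ℝ))⌋₊ + 1 : ℝ)
      ≤ 24 * k * (⌊m / (24 * (k : ℝ))⌋₊ + ⌊m / (24 * (k : ℝ))⌋₊) := by
        gcongr
        exact_mod_cast hK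
    _ = _ := by ring

lemma div_sq_le {k : ℝ} (hm : 0 ≤ m) (hn : 0 ≤ n) (hv₀ : 0 ≤ v) (hv : v ^ 2 * n = t * m)
    (hk : 0 < k) (hkv : 100 * v ≤ k) : t * (1024 * m ^ 2 / k ^ 2) ≤ m * n / 8 := by
  rw [mul_div_assoc', div_le_iff₀ (by positivity)]
  calc t * (1024 * m ^ 2) = 1024 * (m * (v ^ 2 * n)) := by rw [hv]; ring
    _ ≤ 1250 * (m * (v ^ 2 * n)) := by gcongr; norm_num
    _ = m * n / 8 * (100 * v) ^ 2 := by ring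
    _ ≤ m * n / 8 * k ^ 2 := by gcongr

lemma sq_div_le {k K : ℝ} (hm : 0 ≤ m) (hk : 0 < k) (hK : 0 < K)
    (ht : 10 ^ 20 * t ^ 2 ≤ m * n) (htv : 10 ^ 25 * (t ^ 2 * v) ≤ m * n)
    (hvk : k ≤ 100 * v + 3) (hmk : m ≤ 48 * k * K) :
    4 * (m * t) ^ 2 / (k * K ^ 2) ≤ m * n / 8 := by
  have htk : 10 ^ 10 * (t ^ 2 * k) ≤ m * n := by
    nlinarith [mul_le_mul_of_nonneg_left hvk (sq_nonneg t)]
  rw [div_le_iff₀ (by positivity)]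
  calc 4 * (m * t) ^ 2 = 4 * t ^ 2 * m ^ 2 := by ring
    _ ≤ 4 * t ^ 2 * (48 * k * K) ^ 2 := by gcongr
    _ = 9216 * (t ^ 2 * k) * (k * K ^ 2) := by ring
    _ ≤ m * n / 8 * (k * K ^ 2) := by
      gcongr
      nlinarith

/-- The terms balance when heavy arcs are those with at least `k ≈ 100 √(tm/n)`
equidistant points and `K` satisfies `k * K ≈ m`. -/
theorem mul_pow_three_le_of_forall_nat (hm : 1 ≤ m) (hn : 1 ≤ n) (ht : 1 ≤ t)
    (hmn : m ≤ 4 * n ^ 2) (hnm : n ≤ m ^ 3)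
    (hbound : ∀ k K : ℕ, 2 ≤ k → 1 ≤ K → m * n ≤ m * t + t * (1024 * m ^ 2 / k ^ 2 + 33 * m) +
      (4 * (m * t) ^ 2 / (k * K ^ 2) + 3 * n * k * K)) :
    m * n ^ 3 ≤ 10 ^ 50 * t ^ 5 := by
  by_contra! hlt
  have hn₀ : 0 < n := by positivity
  have hm_large : 10 ^ 4 ≤ m := by
    refine le_of_pow_le_pow_left₀ (n := 10) (by norm_num) (by positivity) ?_
    calc ((10 : ℝ) ^ 4) ^ 10 ≤ 10 ^ 50 * 1 ^ 5 := by norm_num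
      _ ≤ 10 ^ 50 * t ^ 5 := by gcongr
      _ ≤ m * n ^ 3 := hlt.le
      _ ≤ m * (m ^ 3) ^ 3 := by gcongr
      _ = m ^ 10 := by ring
  have htn := le_of_pow_five_le hn₀.le hmn hlt.le
  have ht_sq := sq_le_of_pow_five_le (by positivity) hn₀.le (by positivity) hnm hlt.le
  set v := √(t * m / n)
  have hv₀ : 0 ≤ v := Real.sqrt_nonneg _
  have hv : v ^ 2 * n = t * m := by rw [Real.sq_sqrt (by positivity), div_mul_cancel₀ _ hn₀.ne']
  obtain ⟨k, K, hk, hK, hkv, hvk, hkK, hmk⟩ :=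
    exists_nat_params hv₀ (le_of_sq_mul_eq hm hn₀ hv htn) hm_large
  have hheavy := div_sq_le (k := k) (by positivity) hn₀.le hv₀ hv (by positivity) hkv
  have hpairs := sq_div_le (by positivity) (by positivity) (by positivity) ht_sq
    (sq_mul_le_of_pow_five_le (by positivity) hn₀ hv hlt.le) hvk hmk
  have hsample : 3 * n * k * K ≤ m * n / 8 := by nlinarith
  have hlow : 34 * (m * t) ≤ m * n / 8 := by nlinarith
  have hpos : 0 < m * n := by positivity
  linarith [hbound k K hk hK]

end Optimization

section EuclideanPlane

/-- The coordinates of `x` with the `i`-th one taken as the abscissa. -/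
def coords (i : Fin 2) (x : Pt2) : ℝ × ℝ := (x i, x i.rev)

lemma coords_bijective (i : Fin 2) : Function.Bijective (coords i) := by
  refine ⟨fun x y hxy ↦ ?_, fun z ↦ ?_⟩
  · ext j
    fin_cases i <;> fin_cases j <;> simp_all [coords]
  · fin_cases i
    · exact ⟨!₂[z.1, z.2], by simp [coords]⟩
    · exact ⟨!₂[z.2, z.1], by simp [coords]⟩

lemma dist_sq_eq_coords (i : Fin 2) (x y : Pt2) : dist x y ^ 2 =
    ((coords i x).1 - (coords i y).1) ^ 2 + ((coords i x).2 - (coords i y).2) ^ 2 := by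
  rw [EuclideanSpace.dist_sq_eq, Fin.sum_univ_two]
  fin_cases i <;> simp [coords, Real.dist_eq, add_comm]

/-- The line `y = q.1 * x + q.2`, where `x` is the `i`-th coordinate and `y` the other one. -/
def graphLine (i : Fin 2) (q : ℝ × ℝ) : Set Pt2 := {x | (coords i x).2 = affineFun q (coords i x).1}

lemma exists_eq_graphLine {l : Set Pt2} (hl : IsLine2 l) :
    ∃ i q, l = graphLine i q := by
  obtain ⟨a, v, hv, rfl⟩ := hl
  obtain ⟨i, hi⟩ : ∃ i, v i ≠ 0 := by
    contrapose! hv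
    exact PiLp.ext hv
  refine ⟨i, (v i.rev / v i, a i.rev - v i.rev / v i * a i), Set.ext fun x ↦ ⟨?_, fun hx ↦ ?_⟩⟩
  · rintro ⟨t, rfl⟩
    simp only [graphLine, coords, affineFun, Set.mem_ofPred_eq, PiLp.add_apply, PiLp.smul_apply,
      smul_eq_mul]
    field_simp
    ring
  · simp only [graphLine, coords, affineFun, Set.mem_ofPred_eq] at hx
    refine ⟨(x i - a i) / v i, (coords_bijective i).injective (Prod.ext ?_ ?_)⟩ <;>
      simp only [coords, PiLp.add_apply, PiLp.smul_apply, smul_eq_mul]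
    · field_simp
      ring
    · rw [hx]
      ring

theorem infDist_graphLine (i : Fin 2) (p : Pt2) (q : ℝ × ℝ) :
    Metric.infDist p (graphLine i q) = |lineSignedDist (coords i p) q| := by
  have hpos := slopeNorm_pos q.1
  have hsq := slopeNorm_sq q.1
  set s := lineSignedDist (coords i p) q with hs
  rw [lineSignedDist, eq_div_iff hpos.ne', affineFun] at hs
  obtain ⟨x, hx⟩ := (coords_bijective i).surjective
    ((coords i p).1 + q.1 * s / slopeNorm q.1, (coords i p).2 - s / slopeNorm q.1)
  have hx_mem : x ∈ graphLine i q := by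
    rw [graphLine, Set.mem_ofPred_eq, hx, affineFun, ← sub_eq_zero]
    field_simp
    linear_combination -slopeNorm q.1 * hs + s * hsq
  have hx_dist : dist p x = |s| := by
    rw [← abs_of_nonneg (dist_nonneg (x := p)), ← sq_eq_sq_iff_abs_eq_abs, dist_sq_eq_coords i, hx]
    field_simp
    linear_combination -s ^ 2 * hsq
  refine (hx_dist ▸ Metric.infDist_le_dist_of_mem hx_mem).antisymm ?_
  refine (Metric.le_infDist ⟨x, hx_mem⟩).2 fun y hy ↦ abs_le_of_sq_le_sq ?_ dist_nonneg
  set u := (coords i p).1 - (coords i y).1 with hu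
  set w := (coords i p).2 - (coords i y).2 with hw
  have hy : s * slopeNorm q.1 = w - q.1 * u := by
    rw [graphLine, Set.mem_ofPred_eq, affineFun] at hy
    linear_combination hs - hw + q.1 * hu + hy
  rw [dist_sq_eq_coords i]
  refine le_of_mul_le_mul_right ?_ (pow_pos hpos 2)
  calc s ^ 2 * slopeNorm q.1 ^ 2 = (w - q.1 * u) ^ 2 := by rw [← mul_pow, hy]
    _ ≤ (w - q.1 * u) ^ 2 + (u + q.1 * w) ^ 2 := le_add_of_nonneg_right (sq_nonneg _)
    _ = (u ^ 2 + w ^ 2) * slopeNorm q.1 ^ 2 := by rw [hsq]; ring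

lemma exists_graphLine_mem {L : Finset (Set Pt2)} (hL : ∀ l ∈ L, IsLine2 l) :
    ∃ (i : Fin 2) (Q : Finset (ℝ × ℝ)), #L ≤ 2 * #Q ∧ #Q ≤ #L ∧ ∀ q ∈ Q, graphLine i q ∈ L := by
  choose! i q hq using fun l hl ↦ exists_eq_graphLine (hL l hl)
  obtain ⟨j, -, hj⟩ := exists_le_card_fiber_of_nsmul_le_card_of_maps_to (s := L) (t := univ)
    (f := i) (b := (#L / 2 : ℝ)) (fun _ _ ↦ mem_univ _) univ_nonempty (by simp; linarith)
  have hinj : Set.InjOn q ({l ∈ L | i l = j} : Finset _) := by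
    intro l hl l' hl' heq
    obtain ⟨hl, hlj⟩ := mem_filter.1 hl
    obtain ⟨hl', hlj'⟩ := mem_filter.1 hl'
    rw [hq l hl, hq l' hl', heq, hlj, hlj']
  refine ⟨j, {l ∈ L | i l = j}.image q, ?_, card_image_le.trans (card_filter_le _ _),
    forall_mem_image.2 fun l hl ↦ ?_⟩
  · rw [card_image_of_injOn hinj]
    exact_mod_cast (div_le_iff₀' two_pos).1 hj
  · obtain ⟨hlL, rfl⟩ := mem_filter.1 hl
    exact hq l hlL ▸ hlL

theorem card_mul_card_pow_three_le_of_lineSignedDist {P Q : Finset (ℝ × ℝ)} {D : Finset ℝ}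
    (hP : P.Nonempty) (hQ : Q.Nonempty) (hPQ : (#P : ℝ) ≤ 4 * #Q ^ 2) (hQP : (#Q : ℝ) ≤ #P ^ 3)
    (hD : ∀ p ∈ P, ∀ q ∈ Q, |lineSignedDist p q| ∈ D) :
    (#P * #Q ^ 3 : ℝ) ≤ 10 ^ 50 * (2 * #D) ^ 5 := by
  set D' := D ∪ D.image (- ·)
  have hD' : ∀ p ∈ P, ∀ q ∈ Q, lineSignedDist p q ∈ D' := by
    intro p hp q hq
    rcases abs_choice (lineSignedDist p q) with h | h
    · exact mem_union_left _ (h ▸ hD p hp q hq)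
    · exact mem_union_right _ (mem_image.2 ⟨_, hD p hp q hq, by rw [h, neg_neg]⟩)
  have hcard : #D' ≤ 2 * #D := by
    rw [two_mul]
    exact (card_union_le _ _).trans (Nat.add_le_add_left card_image_le _)
  have hD'_pos : 0 < #D' := by
    obtain ⟨p, hp⟩ := hP
    obtain ⟨q, hq⟩ := hQ
    exact card_pos.2 ⟨_, hD' p hp q hq⟩
  calc (#P * #Q ^ 3 : ℝ) ≤ 10 ^ 50 * #D' ^ 5 :=
        mul_pow_three_le_of_forall_nat (mod_cast hP.card_pos) (mod_cast hQ.card_pos)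
          (mod_cast hD'_pos) hPQ hQP fun k K hk hK ↦ card_mul_card_le hD' hk hK
    _ ≤ 10 ^ 50 * (2 * #D) ^ 5 := by
      gcongr
      exact_mod_cast hcard

theorem card_mul_card_pow_three_le_of_infDist {P : Finset Pt2} {L : Finset (Set Pt2)}
    {D : Finset ℝ} (hL : ∀ l ∈ L, IsLine2 l) (hPL : (#P : ℝ) ≤ #L ^ 2)
    (hLP : (#L : ℝ) ≤ #P ^ 3) (hD : ∀ p ∈ P, ∀ l ∈ L, Metric.infDist p l ∈ D) :
    (#P * #L ^ 3 : ℝ) ≤ (10 ^ 11 * #D) ^ 5 := by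
  obtain ⟨i, Q, hLQ, hQL, hQ⟩ := exists_graphLine_mem hL
  replace hLQ : (#L : ℝ) ≤ 2 * #Q := mod_cast hLQ
  replace hQL : (#Q : ℝ) ≤ #L := mod_cast hQL
  rcases P.eq_empty_or_nonempty with rfl | hP
  · simpa using by positivity
  rcases Q.eq_empty_or_nonempty with rfl | hQ_ne
  · have hL₀ : L = ∅ := by simpa using hLQ
    simpa [hL₀] using by positivity
  have hcard : #(P.image (coords i)) = #P :=
    card_image_of_injective P (coords_bijective i).injective
  have hbound : (#P * #Q ^ 3 : ℝ) ≤ 10 ^ 50 * (2 * #D) ^ 5 := by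
    rw [← hcard] at hPL hLP ⊢
    refine card_mul_card_pow_three_le_of_lineSignedDist (hP.image _) hQ_ne ?_ (hQL.trans hLP) <|
      forall_mem_image.2 fun p hp q hq ↦ infDist_graphLine i p q ▸ hD p hp _ (hQ q hq)
    calc _ ≤ (#L : ℝ) ^ 2 := hPL
      _ ≤ (2 * #Q) ^ 2 := by gcongr
      _ = 4 * #Q ^ 2 := by ring
  calc (#P * #L ^ 3 : ℝ) ≤ #P * (2 * #Q) ^ 3 := by gcongr
    _ = 8 * (#P * #Q ^ 3) := by ring
    _ ≤ 8 * (10 ^ 50 * (2 * #D) ^ 5) := by gcongr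
    _ = 256 * (10 ^ 50 * #D ^ 5) := by ring
    _ ≤ 10 ^ 5 * (10 ^ 50 * #D ^ 5) := by gcongr; norm_num
    _ = (10 ^ 11 * #D) ^ 5 := by ring

end EuclideanPlane

lemma rpow_mul_rpow_le_of_mul_pow_le {m n x : ℝ} (hm : 0 ≤ m) (hn : 0 ≤ n) (hx : 0 ≤ x)
    (h : m * n ^ 3 ≤ x ^ 5) : m ^ ((1 : ℝ) / 5) * n ^ ((3 : ℝ) / 5) ≤ x := by
  refine le_of_pow_le_pow_left₀ (n := 5) (by norm_num) hx ?_
  rw [mul_pow, ← Real.rpow_mul_natCast hm, ← Real.rpow_mul_natCast hn]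
  norm_num
  exact h

end PointLineDistance

open PointLineDistance Finset in
theorem distinct_point_line_distances_general :
    ∃ c : ℝ, 0 < c ∧
      ∀ (P : Finset Pt2) (L : Finset (Set Pt2)), (∀ l ∈ L, IsLine2 l) →
        (#P : ℝ) ^ ((1 : ℝ) / 2) ≤ #L → (#L : ℝ) ≤ (#P : ℝ) ^ 3 →
          c * (#P : ℝ) ^ ((1 : ℝ) / 5) * (#L : ℝ) ^ ((3 : ℝ) / 5) ≤
            (({d : ℝ | ∃ p ∈ P, ∃ l ∈ L, d = Metric.infDist p l}).ncard : ℝ) := by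
  classical
  refine ⟨1 / 10 ^ 11, by positivity, fun P L hL hPL hLP ↦ ?_⟩
  have hset : {d : ℝ | ∃ p ∈ P, ∃ l ∈ L, d = Metric.infDist p l} = image₂ Metric.infDist P L := by
    ext d
    simp only [Set.mem_ofPred_eq, coe_image₂, Set.mem_image2, mem_coe, eq_comm]
  rw [← Real.sqrt_eq_rpow, Real.sqrt_le_left (Nat.cast_nonneg _)] at hPL
  rw [hset, Set.ncard_coe_finset, mul_assoc, one_div_mul_eq_div, div_le_iff₀' (by positivity)]
  exact rpow_mul_rpow_le_of_mul_pow_le (Nat.cast_nonneg _) (Nat.cast_nonneg _) (by positivity)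
    (card_mul_card_pow_three_le_of_infDist hL hPL hLP fun p hp l hl ↦ mem_image₂_of_mem hp hl)

theorem distinct_point_line_distances :
    ∃ c : ℝ, 0 < c ∧
      ∀ (m n : ℕ), 0 < m → 0 < n →
        (m : ℝ) ^ ((1 : ℝ) / 2) ≤ (n : ℝ) → (n : ℝ) ≤ (m : ℝ) ^ 2 →
        ∀ (P : Finset Pt2) (L : Finset (Set Pt2)),
          P.card = m → L.card = n → (∀ l ∈ L, IsLine2 l) →
          c * (m : ℝ) ^ ((1 : ℝ) / 5) * (n : ℝ) ^ ((3 : ℝ) / 5) ≤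
            (({d : ℝ | ∃ p ∈ P, ∃ l ∈ L, d = Metric.infDist p l}).ncard : ℝ) := by
  obtain ⟨c, hc, hbound⟩ := distinct_point_line_distances_general
  refine ⟨c, hc, ?_⟩
  rintro m n hm - hmn hnm P L rfl rfl hL
  exact hbound P L hL hmn (hnm.trans (pow_le_pow_right₀ (mod_cast hm) (by norm_num)))
end
end

section
/- There exists an absolute constant c > 0 such that for all positive integers m and n with m^{1/2} ≤ n ≤ m^2, for every set P of m points and every set L of n lines in ℝ², there exists a single point p ∈ P such that the number of distinct distances from p to the lines of L satisfies |{d(p,ℓ) : ℓ ∈ L}| ≥ c · m^{1/5} n^{3/5}. -/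
/-!
Write a line in normal form `x cos θ + y sin θ = r` with `θ ∈ [0, π)` and regard it as the point
`(θ, r)`. A point `p` and a signed distance `t` then correspond to the curve of all lines at signed
distance `t` from `p`, that is, to a circle about `p` together with the lines tangent to it. If each
of the `m` points sees at most `T` signed distances, then at most `mT` curves have `mn` incidences
with the `n` points `(θ, r)`, and their arcs between consecutive points form a multigraph drawn on
these `n` points, in which two curves cross at most twice.

Arcs with the same endpoints belong to circles with two common tangents, whose centres therefore lie
on a bisector of these tangents. The Szemerédi–Trotter theorem shows that bisectors containing many
of the points are rare, so most arcs have small multiplicity. The crossing lemma for multigraphs,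
proved by sampling first edges and then vertices, bounds the number of these arcs from above. In it,
crossings of two arcs with a common endpoint are counted separately, since they survive the sampling
of vertices with probability `p ^ 3` rather than `p ^ 4`; they are few because a curve and the
centre of a second circle determine the arcs.
-/

noncomputable section

open scoped Finset

section Sampling

variable {α β : Type*} {V : Finset α} {p : ℝ}

/-- The expectation of `f W`, where `W` is the random subset of `V` that contains each element of
`V` independently with probability `p`. -/
def sampleMean (V : Finset α) (p : ℝ) (f : Finset α → ℝ) : ℝ :=
  ∑ W ∈ V.powerset, p ^ #W * (1 - p) ^ (#V - #W) * f W

theorem sum_Icc_pow_mul_pow [DecidableEq α] {S : Finset α} (hS : S ⊆ V) (p : ℝ) :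
    ∑ W ∈ Finset.Icc S V, p ^ #W * (1 - p) ^ (#V - #W) = p ^ #S := by
  have card_union {U : Finset α} (hU : U ∈ (V \ S).powerset) : #(S ∪ U) = #S + #U :=
    Finset.card_union_of_disjoint
      (Finset.disjoint_sdiff.mono_right (Finset.mem_powerset.1 hU))
  have union_injOn : Set.InjOn (S ∪ ·) ((V \ S).powerset : Set (Finset α)) := by
    intro U hU U' hU' h
    have hU := Finset.disjoint_sdiff.mono_right (Finset.mem_powerset.1 hU)
    have hU' := Finset.disjoint_sdiff.mono_right (Finset.mem_powerset.1 hU')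
    rw [← Finset.union_sdiff_cancel_left hU, ← Finset.union_sdiff_cancel_left hU']
    exact congrArg (· \ S) h
  calc ∑ W ∈ Finset.Icc S V, p ^ #W * (1 - p) ^ (#V - #W)
      = ∑ U ∈ (V \ S).powerset, p ^ #S * (p ^ #U * (1 - p) ^ (#(V \ S) - #U)) := by
        rw [Finset.Icc_eq_image_powerset hS, Finset.sum_image union_injOn]
        refine Finset.sum_congr rfl fun U hU ↦ ?_
        rw [card_union hU, Finset.card_sdiff_of_subset hS, pow_add, mul_assoc, Nat.sub_sub]
    _ = p ^ #S := by
        rw [← Finset.mul_sum, Finset.sum_pow_mul_eq_add_pow, add_sub_cancel, one_pow, mul_one]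

theorem sampleMean_add (f g : Finset α → ℝ) :
    sampleMean V p (fun W ↦ f W + g W) = sampleMean V p f + sampleMean V p g := by
  simp only [sampleMean, mul_add, Finset.sum_add_distrib]

theorem sampleMean_const_mul (c : ℝ) (f : Finset α → ℝ) :
    sampleMean V p (fun W ↦ c * f W) = c * sampleMean V p f := by
  simp only [sampleMean, Finset.mul_sum, mul_left_comm]

theorem sampleMean_const (c : ℝ) : sampleMean V p (fun _ ↦ c) = c := by
  rw [sampleMean, ← Finset.sum_mul, Finset.sum_pow_mul_eq_add_pow, add_sub_cancel, one_pow,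
    one_mul]

theorem sampleMean_mono (hp₀ : 0 ≤ p) (hp₁ : p ≤ 1) {f g : Finset α → ℝ}
    (hfg : ∀ W ⊆ V, f W ≤ g W) : sampleMean V p f ≤ sampleMean V p g :=
  Finset.sum_le_sum fun W hW ↦ mul_le_mul_of_nonneg_left (hfg W (Finset.mem_powerset.1 hW))
    (mul_nonneg (pow_nonneg hp₀ _) (pow_nonneg (sub_nonneg.2 hp₁) _))

theorem sampleMean_card_filter_subset [DecidableEq α] {X : Finset β} {S : β → Finset α}
    (hS : ∀ b ∈ X, S b ⊆ V) :
    sampleMean V p (fun W ↦ #{b ∈ X | S b ⊆ W}) = ∑ b ∈ X, p ^ #(S b) := by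
  simp only [sampleMean, Finset.card_filter, Nat.cast_sum, Finset.mul_sum, Nat.cast_ite,
    Nat.cast_one, Nat.cast_zero, mul_ite, mul_one, mul_zero]
  rw [Finset.sum_comm]
  refine Finset.sum_congr rfl fun b hb ↦ ?_
  rw [← Finset.sum_filter, ← sum_Icc_pow_mul_pow (hS b hb)]
  congr 1
  ext W
  simp only [Finset.mem_filter, Finset.mem_powerset, Finset.mem_Icc]
  exact and_comm

theorem sampleMean_card_filter_subset_of_card_eq [DecidableEq α] {X : Finset β}
    {S : β → Finset α} {j : ℕ} (hS : ∀ b ∈ X, S b ⊆ V) (hj : ∀ b ∈ X, #(S b) = j) :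
    sampleMean V p (fun W ↦ #{b ∈ X | S b ⊆ W}) = p ^ j * #X := by
  rw [sampleMean_card_filter_subset hS, Finset.sum_congr rfl fun b hb ↦ by rw [hj b hb],
    Finset.sum_const, nsmul_eq_mul, mul_comm]

theorem sampleMean_card_filter_subset_le [DecidableEq α] {X : Finset β} {S : β → Finset α} {j : ℕ}
    (hp₀ : 0 ≤ p) (hp₁ : p ≤ 1) (hS : ∀ b ∈ X, S b ⊆ V) (hj : ∀ b ∈ X, j ≤ #(S b)) :
    sampleMean V p (fun W ↦ #{b ∈ X | S b ⊆ W}) ≤ p ^ j * #X := by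
  rw [sampleMean_card_filter_subset hS, mul_comm, ← nsmul_eq_mul]
  exact Finset.sum_le_card_nsmul _ _ _ fun b hb ↦ pow_le_pow_of_le_one hp₀ hp₁ (hj b hb)

theorem sampleMean_card (V : Finset α) (p : ℝ) : sampleMean V p (fun W ↦ #W) = p * #V := by
  classical
  have h := sampleMean_card_filter_subset_of_card_eq (V := V) (p := p) (X := V) (S := ({·}))
    (fun v hv ↦ Finset.singleton_subset_iff.2 hv) (fun v _ ↦ Finset.card_singleton v)
  rw [pow_one] at h
  rw [← h]
  refine Finset.sum_congr rfl fun W hW ↦ ?_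
  simp only [Finset.singleton_subset_iff, Finset.filter_mem_eq_inter,
    Finset.inter_eq_right.2 (Finset.mem_powerset.1 hW)]

theorem sampleMean_card_filter_offDiag (V : Finset α) (p : ℝ) (r : α × α → Prop)
    [DecidablePred r] :
    sampleMean V p (fun W ↦ #{q ∈ W.offDiag | r q}) = p ^ 2 * #{q ∈ V.offDiag | r q} := by
  classical
  have pair_subset : ∀ q ∈ V.offDiag.filter r, ({q.1, q.2} : Finset α) ⊆ V := fun q hq ↦ by
    obtain ⟨h₁, h₂, -⟩ := Finset.mem_offDiag.1 (Finset.mem_filter.1 hq).1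
    exact Finset.insert_subset h₁ (Finset.singleton_subset_iff.2 h₂)
  have card_pair : ∀ q ∈ V.offDiag.filter r, #{q.1, q.2} = 2 := fun q hq ↦
    Finset.card_pair (Finset.mem_offDiag.1 (Finset.mem_filter.1 hq).1).2.2
  rw [← sampleMean_card_filter_subset_of_card_eq pair_subset card_pair]
  refine Finset.sum_congr rfl fun W hW ↦ ?_
  have filter_eq : W.offDiag.filter r =
      {q ∈ V.offDiag.filter r | ({q.1, q.2} : Finset α) ⊆ W} := by
    ext q
    have hWV := Finset.mem_powerset.1 hW
    simp only [Finset.mem_filter, Finset.mem_offDiag, Finset.insert_subset_iff,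
      Finset.singleton_subset_iff]
    exact ⟨fun ⟨⟨h₁, h₂, hne⟩, hr⟩ ↦ ⟨⟨⟨hWV h₁, hWV h₂, hne⟩, hr⟩, h₁, h₂⟩,
      fun ⟨⟨⟨_, _, hne⟩, hr⟩, h₁, h₂⟩ ↦ ⟨⟨h₁, h₂, hne⟩, hr⟩⟩
  simp only [filter_eq]

end Sampling

/-- An arc of a member of a family of curves indexed by `γ`, given by its two endpoints. -/
@[ext] structure CurveArc (γ : Type*) where
  curve : γ
  left : ℝ × ℝ
  right : ℝ × ℝ

section Drawings

open scoped Classical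

variable {γ : Type*} {F : γ → ℝ → ℝ} {V : Finset (ℝ × ℝ)} {E : Finset (CurveArc γ)}
  {e e' g : CurveArc γ} {w : ℝ × ℝ}

namespace CurveArc

/-- The open interval over which an arc runs. -/
def span (e : CurveArc γ) : Set ℝ := Set.Ioo e.left.1 e.right.1

/-- The closed interval over which an arc runs. -/
def closedSpan (e : CurveArc γ) : Set ℝ := Set.Icc e.left.1 e.right.1

/-- The set of the two endpoints of an arc. -/
def ends (e : CurveArc γ) : Finset (ℝ × ℝ) := {e.left, e.right}

/-- Two arcs are parallel if they have the same endpoints. -/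
def Parallel (e e' : CurveArc γ) : Prop := e.left = e'.left ∧ e.right = e'.right

/-- Two arcs cross if they meet at an interior point of both. -/
def Crosses (F : γ → ℝ → ℝ) (e e' : CurveArc γ) : Prop :=
  ∃ z ∈ e.span ∩ e'.span, F e.curve z = F e'.curve z

/-- The arc `e` is somewhere strictly below the arc `e'`. -/
def Below (F : γ → ℝ → ℝ) (e e' : CurveArc γ) : Prop :=
  ∃ z ∈ e.closedSpan ∩ e'.closedSpan, F e.curve z < F e'.curve z

theorem span_subset_closedSpan (e : CurveArc γ) : e.span ⊆ e.closedSpan := Set.Ioo_subset_Icc_self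

theorem Below.ne (h : Below F e e') : e ≠ e' := by
  rintro rfl
  obtain ⟨z, -, hz⟩ := h
  exact lt_irrefl _ hz

end CurveArc

open CurveArc

/-- `E` is a drawing of a multigraph with vertex set `V`, in which every edge is an arc of the graph
of one of the functions `F c`, has its endpoints in `V` and contains no further point of `V`. -/
structure IsDrawing (F : γ → ℝ → ℝ) (V : Finset (ℝ × ℝ)) (E : Finset (CurveArc γ)) : Prop where
  continuous : ∀ e ∈ E, Continuous (F e.curve)
  left_mem : ∀ e ∈ E, e.left ∈ V
  right_mem : ∀ e ∈ E, e.right ∈ V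
  left_lt_right : ∀ e ∈ E, e.left.1 < e.right.1
  apply_left : ∀ e ∈ E, F e.curve e.left.1 = e.left.2
  apply_right : ∀ e ∈ E, F e.curve e.right.1 = e.right.2
  apply_ne : ∀ e ∈ E, ∀ v ∈ V, v.1 ∈ e.span → F e.curve v.1 ≠ v.2

/-- A drawing is plane if no two of its edges cross or are parallel. -/
structure IsPlaneDrawing (F : γ → ℝ → ℝ) (V : Finset (ℝ × ℝ)) (E : Finset (CurveArc γ)) : Prop
    extends IsDrawing F V E where
  not_crosses : ∀ e ∈ E, ∀ e' ∈ E, e ≠ e' → ¬ Crosses F e e'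
  not_parallel : ∀ e ∈ E, ∀ e' ∈ E, e ≠ e' → ¬ Parallel e e'

theorem exists_eq_of_lt_of_lt {f g : ℝ → ℝ} (hf : Continuous f) (hg : Continuous g) {x y : ℝ}
    (hx : f x < g x) (hy : g y < f y) : ∃ z ∈ Set.Ioo (min x y) (max x y), f z = g z := by
  have hfg {a b : ℝ} : ContinuousOn (fun z ↦ f z - g z) (Set.Icc a b) := (hf.sub hg).continuousOn
  rcases lt_trichotomy x y with h | rfl | h
  · obtain ⟨z, hz, hz₀⟩ := intermediate_value_Ioo h.le hfg
      (Set.mem_Ioo.2 ⟨sub_neg.2 hx, sub_pos.2 hy⟩)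
    exact ⟨z, by rwa [min_eq_left h.le, max_eq_right h.le], sub_eq_zero.1 hz₀⟩
  · exact absurd hx hy.not_gt
  · obtain ⟨z, hz, hz₀⟩ := intermediate_value_Ioo' h.le hfg
      (Set.mem_Ioo.2 ⟨sub_neg.2 hx, sub_pos.2 hy⟩)
    exact ⟨z, by rwa [min_eq_right h.le, max_eq_left h.le], sub_eq_zero.1 hz₀⟩

namespace IsPlaneDrawing

theorem le_of_below (hD : IsPlaneDrawing F V E) (he : e ∈ E) (he' : e' ∈ E) (h : Below F e e')
    {z : ℝ} (hz : z ∈ e.closedSpan) (hz' : z ∈ e'.closedSpan) : F e.curve z ≤ F e'.curve z := by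
  by_contra! hlt
  obtain ⟨x, ⟨hx, hx'⟩, hxlt⟩ := id h
  obtain ⟨y, hy, heq⟩ :=
    exists_eq_of_lt_of_lt (hD.continuous e he) (hD.continuous e' he') hxlt hlt
  exact hD.not_crosses e he e' he' h.ne ⟨y, ⟨⟨(le_min hx.1 hz.1).trans_lt hy.1,
    hy.2.trans_le (max_le hx.2 hz.2)⟩, ⟨(le_min hx'.1 hz'.1).trans_lt hy.1,
    hy.2.trans_le (max_le hx'.2 hz'.2)⟩⟩, heq⟩

theorem lt_of_below (hD : IsPlaneDrawing F V E) (he : e ∈ E) (he' : e' ∈ E) (h : Below F e e')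
    {z : ℝ} (hz : z ∈ e.span) (hz' : z ∈ e'.span) : F e.curve z < F e'.curve z :=
  (hD.le_of_below he he' h (span_subset_closedSpan e hz) (span_subset_closedSpan e' hz')).lt_of_ne
    fun heq ↦ hD.not_crosses e he e' he' h.ne ⟨z, ⟨hz, hz'⟩, heq⟩

theorem below_or_below (hD : IsPlaneDrawing F V E) (he : e ∈ E) (he' : e' ∈ E) (hne : e ≠ e')
    {z : ℝ} (hz : z ∈ e.span) (hz' : z ∈ e'.span) : Below F e e' ∨ Below F e' e := by
  have hz₁ := span_subset_closedSpan e hz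
  have hz₂ := span_subset_closedSpan e' hz'
  rcases lt_trichotomy (F e.curve z) (F e'.curve z) with h | h | h
  · exact Or.inl ⟨z, ⟨hz₁, hz₂⟩, h⟩
  · exact absurd ⟨z, ⟨hz, hz'⟩, h⟩ (hD.not_crosses e he e' he' hne)
  · exact Or.inr ⟨z, ⟨hz₂, hz₁⟩, h⟩

/-- Another edge leaves the left endpoint of `e` above `e`. -/
def CoveredLeft (F : γ → ℝ → ℝ) (E : Finset (CurveArc γ)) (e : CurveArc γ) : Prop :=
  ∃ g ∈ E, g.left = e.left ∧ Below F e g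

/-- Another edge enters the right endpoint of `e` above `e`. -/
def CoveredRight (F : γ → ℝ → ℝ) (E : Finset (CurveArc γ)) (e : CurveArc γ) : Prop :=
  ∃ g ∈ E, g.right = e.right ∧ Below F e g

/-- The point `w` lies above `e` and no edge of `E` separates it from `e`. -/
def SeesAbove (F : γ → ℝ → ℝ) (E : Finset (CurveArc γ)) (e : CurveArc γ) (w : ℝ × ℝ) : Prop :=
  w.1 ∈ e.span ∧ F e.curve w.1 < w.2 ∧
    ∀ g ∈ E, w.1 ∈ g.span → F e.curve w.1 < F g.curve w.1 → w.2 ≤ F g.curve w.1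

theorem card_filter_not_coveredLeft_le (hD : IsPlaneDrawing F V E) :
    #{e ∈ E | ¬ CoveredLeft F E e} ≤ #V := by
  refine Finset.card_le_card_of_injOn left
    (fun e he ↦ hD.left_mem e (Finset.mem_filter.1 he).1) fun e he e' he' hleft ↦ ?_
  obtain ⟨he, hcov⟩ := Finset.mem_filter.1 he
  obtain ⟨he', hcov'⟩ := Finset.mem_filter.1 he'
  by_contra hne
  obtain ⟨z, hz, hz'⟩ := exists_between
    (lt_min (hD.left_lt_right e he) (hleft ▸ hD.left_lt_right e' he'))
  rcases hD.below_or_below he he' hne ⟨hz, hz'.trans_le (min_le_left _ _)⟩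
    ⟨hleft ▸ hz, hz'.trans_le (min_le_right _ _)⟩ with h | h
  · exact hcov ⟨e', he', hleft.symm, h⟩
  · exact hcov' ⟨e, he, hleft, h⟩

theorem card_filter_not_coveredRight_le (hD : IsPlaneDrawing F V E) :
    #{e ∈ E | ¬ CoveredRight F E e} ≤ #V := by
  refine Finset.card_le_card_of_injOn right
    (fun e he ↦ hD.right_mem e (Finset.mem_filter.1 he).1) fun e he e' he' hright ↦ ?_
  obtain ⟨he, hcov⟩ := Finset.mem_filter.1 he
  obtain ⟨he', hcov'⟩ := Finset.mem_filter.1 he'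
  by_contra hne
  obtain ⟨z, hz, hz'⟩ := exists_between
    (max_lt (hD.left_lt_right e he) (hright ▸ hD.left_lt_right e' he'))
  rcases hD.below_or_below he he' hne ⟨(le_max_left _ _).trans_lt hz, hz'⟩
    ⟨(le_max_right _ _).trans_lt hz, hright ▸ hz'⟩ with h | h
  · exact hcov ⟨e', he', hright.symm, h⟩
  · exact hcov' ⟨e, he, hright, h⟩

theorem card_filter_seesAbove_le (hD : IsPlaneDrawing F V E) :
    #{e ∈ E | ∃ w ∈ V, SeesAbove F E e w} ≤ #V := by
  refine Finset.card_le_card_of_forall_subsingleton (SeesAbove F E)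
    (fun e he ↦ (Finset.mem_filter.1 he).2) fun w _ e he e' he' ↦ ?_
  obtain ⟨he, hspan, hlt, hsep⟩ := And.imp_left (fun h ↦ (Finset.mem_filter.1 h).1) he
  obtain ⟨he', hspan', hlt', hsep'⟩ := And.imp_left (fun h ↦ (Finset.mem_filter.1 h).1) he'
  by_contra hne
  rcases lt_trichotomy (F e.curve w.1) (F e'.curve w.1) with h | h | h
  · exact (hsep e' he' hspan' h).not_gt hlt'
  · exact hD.not_crosses e he e' he' hne ⟨w.1, ⟨hspan, hspan'⟩, h⟩
  · exact (hsep' e he hspan h).not_gt hlt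

theorem exists_lowest_cover (hD : IsPlaneDrawing F V E) (h : CoveredLeft F E e) :
    ∃ e' ∈ E, e'.left = e.left ∧ Below F e e' ∧
      ∀ g ∈ E, g.left = e.left → Below F e g → ¬ Below F g e' := by
  let C := {g ∈ E | g.left = e.left ∧ Below F e g}
  have mem_C {g} : g ∈ C ↔ g ∈ E ∧ g.left = e.left ∧ Below F e g := Finset.mem_filter
  obtain ⟨ξ, hξ⟩ : ∃ ξ, ∀ g ∈ C, ξ ∈ g.span :=
    ((Filter.eventually_all_finset C).2 fun g hg ↦ by
      rw [span, (mem_C.1 hg).2.1]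
      exact Ioo_mem_nhdsGT ((mem_C.1 hg).2.1 ▸ hD.left_lt_right g (mem_C.1 hg).1)).exists
  obtain ⟨e', he', hmin⟩ := C.exists_min_image (fun g ↦ F g.curve ξ) (h.imp fun g hg ↦ mem_C.2 hg)
  obtain ⟨heE, hleft, hbelow⟩ := mem_C.1 he'
  refine ⟨e', heE, hleft, hbelow, fun g hg hgleft hgbelow hlt ↦ ?_⟩
  have hgC := mem_C.2 ⟨hg, hgleft, hgbelow⟩
  exact (hmin g hgC).not_gt (hD.lt_of_below hg heE hlt (hξ g hgC) (hξ e' he'))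

/-- The vertices in the region above `e` and weakly below `e'`, where `e` and `e'` are edges with a
common left endpoint. -/
def wedge (F : γ → ℝ → ℝ) (V : Finset (ℝ × ℝ)) (e e' : CurveArc γ) : Finset (ℝ × ℝ) :=
  {v ∈ V | v.1 ∈ e.span ∧ v.1 ≤ e'.right.1 ∧ F e.curve v.1 < v.2 ∧ v.2 ≤ F e'.curve v.1}

theorem left_mem_wedge_or_left_eq (hD : IsPlaneDrawing F V E) (he : e ∈ E) (he' : e' ∈ E)
    (hg : g ∈ E) (hleft : e'.left = e.left) (heg : Below F e g) (hge' : Below F g e')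
    (hgr : g.left.1 < e.right.1) (hgr' : g.left.1 ≤ e'.right.1) (hgl : e.left.1 < g.right.1) :
    g.left ∈ wedge F V e e' ∨ g.left = e.left := by
  rcases lt_or_ge e.left.1 g.left.1 with hlt | hle
  · have hz : g.left.1 ∈ g.closedSpan := ⟨le_rfl, (hD.left_lt_right g hg).le⟩
    have hle := hD.le_of_below he hg heg ⟨hlt.le, hgr.le⟩ hz
    have hle' := hD.le_of_below hg he' hge' hz ⟨hleft ▸ hlt.le, hgr'⟩
    rw [hD.apply_left g hg] at hle hle'
    exact Or.inl (Finset.mem_filter.2 ⟨hD.left_mem g hg, ⟨hlt, hgr⟩, hgr',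
      hle.lt_of_ne (hD.apply_ne e he _ (hD.left_mem g hg) ⟨hlt, hgr⟩), hle'⟩)
  · have hz : e.left.1 ∈ g.closedSpan := ⟨hle, hgl.le⟩
    have heq : F g.curve e.left.1 = e.left.2 := le_antisymm
      ((hD.le_of_below hg he' hge' hz
        ⟨by rw [hleft], hleft ▸ (hD.left_lt_right e' he').le⟩).trans_eq
          (by rw [← hleft, hD.apply_left e' he']))
      ((hD.apply_left e he).ge.trans
        (hD.le_of_below he hg heg ⟨le_rfl, (hD.left_lt_right e he).le⟩ hz))
    rcases hle.lt_or_eq with hlt | h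
    · exact absurd heq (hD.apply_ne g hg _ (hD.left_mem e he) ⟨hlt, hgl⟩)
    · exact Or.inr (Prod.ext h (by rw [← hD.apply_left g hg, h, heq]))

theorem wedge_nonempty (hD : IsPlaneDrawing F V E) (he : e ∈ E) (hcov : CoveredRight F E e)
    (he' : e' ∈ E) (hleft : e'.left = e.left) (hbelow : Below F e e')
    (hlowest : ∀ g ∈ E, g.left = e.left → Below F e g → ¬ Below F g e') :
    (wedge F V e e').Nonempty := by
  have hll : e.left.1 < e'.right.1 := hleft ▸ hD.left_lt_right e' he'
  rcases lt_or_ge e'.right.1 e.right.1 with hlt | hle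
  · have h := hD.le_of_below he he' hbelow ⟨hll.le, hlt.le⟩ ⟨hleft ▸ hll.le, le_rfl⟩
    rw [hD.apply_right e' he'] at h
    exact ⟨e'.right, Finset.mem_filter.2 ⟨hD.right_mem e' he', ⟨hll, hlt⟩, le_rfl,
      h.lt_of_ne (hD.apply_ne e he _ (hD.right_mem e' he') ⟨hll, hlt⟩),
      (hD.apply_right e' he').ge⟩⟩
  obtain ⟨g, hg, hright, heg⟩ := hcov
  have hz : e.right.1 ∈ e'.closedSpan := ⟨hleft ▸ (hD.left_lt_right e he).le, hle⟩
  have right_ne : F e'.curve e.right.1 ≠ e.right.2 := fun heq ↦ by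
    rcases hle.lt_or_eq with hlt | h
    · exact hD.apply_ne e' he' _ (hD.right_mem e he)
        ⟨hleft ▸ hD.left_lt_right e he, hlt⟩ heq
    · exact hD.not_parallel e he e' he' hbelow.ne
        ⟨hleft.symm, Prod.ext h (by rw [← heq, h, hD.apply_right e' he'])⟩
  have hge' : Below F g e' := by
    refine ⟨e.right.1, ⟨⟨hright ▸ (hD.left_lt_right g hg).le, hright ▸ le_rfl⟩, hz⟩, ?_⟩
    rw [show F g.curve e.right.1 = e.right.2 by rw [← hright, hD.apply_right g hg]]
    refine lt_of_le_of_ne ?_ right_ne.symm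
    rw [← hD.apply_right e he]
    exact hD.le_of_below he he' hbelow ⟨(hD.left_lt_right e he).le, le_rfl⟩ hz
  have hgr : g.left.1 < e.right.1 := hright ▸ hD.left_lt_right g hg
  rcases hD.left_mem_wedge_or_left_eq he he' hg hleft heg hge' hgr (hgr.le.trans hle)
    (hright ▸ hD.left_lt_right e he) with h | h
  · exact ⟨_, h⟩
  · exact absurd hge' (hlowest g hg h heg)

theorem exists_seesAbove (hD : IsPlaneDrawing F V E) (he : e ∈ E) (hl : CoveredLeft F E e)
    (hr : CoveredRight F E e) : ∃ w ∈ V, SeesAbove F E e w := by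
  obtain ⟨e', he', hleft, hbelow, hlowest⟩ := hD.exists_lowest_cover hl
  obtain ⟨w, hw, hleftmost⟩ := (wedge F V e e').exists_min_image Prod.fst
    (hD.wedge_nonempty he hr he' hleft hbelow hlowest)
  obtain ⟨hwV, hspan, hle, hlt, hle'⟩ := Finset.mem_filter.1 hw
  refine ⟨w, hwV, hspan, hlt, fun g hg hgspan heg ↦ ?_⟩
  by_contra! hgw
  have hz := span_subset_closedSpan g hgspan
  have heg : Below F e g := ⟨w.1, ⟨span_subset_closedSpan e hspan, hz⟩, heg⟩
  have hge' : Below F g e' := ⟨w.1, ⟨hz, hleft ▸ hspan.1.le, hle⟩, hgw.trans_le hle'⟩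
  rcases hD.left_mem_wedge_or_left_eq he he' hg hleft heg hge' (hgspan.1.trans hspan.2)
    (hgspan.1.le.trans hle) (hspan.1.trans hgspan.2) with h | h
  · exact (hleftmost _ h).not_gt hgspan.1
  · exact hlowest g hg h heg hge'

theorem card_le (hD : IsPlaneDrawing F V E) : #E ≤ 3 * #V := by
  have hsub : E ⊆ {e ∈ E | ¬ CoveredLeft F E e} ∪ {e ∈ E | ¬ CoveredRight F E e} ∪
      {e ∈ E | ∃ w ∈ V, SeesAbove F E e w} := fun e he ↦ by
    simp only [Finset.mem_union, Finset.mem_filter, he, true_and]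
    by_cases hl : CoveredLeft F E e
    · by_cases hr : CoveredRight F E e
      · exact Or.inr (hD.exists_seesAbove he hl hr)
      · exact Or.inl (Or.inr hr)
    · exact Or.inl (Or.inl hl)
  have := (Finset.card_le_card hsub).trans
    ((Finset.card_union_le _ _).trans (Nat.add_le_add_right (Finset.card_union_le _ _) _))
  linarith [hD.card_filter_not_coveredLeft_le, hD.card_filter_not_coveredRight_le,
    hD.card_filter_seesAbove_le]

end IsPlaneDrawing

/-- The ordered pairs of distinct parallel arcs. -/
def parallelPairs (E : Finset (CurveArc γ)) : Finset (CurveArc γ × CurveArc γ) :=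
  {q ∈ E.offDiag | Parallel q.1 q.2}

/-- The ordered pairs of distinct crossing arcs. -/
def crossingPairs (F : γ → ℝ → ℝ) (E : Finset (CurveArc γ)) : Finset (CurveArc γ × CurveArc γ) :=
  {q ∈ E.offDiag | Crosses F q.1 q.2}

/-- The ordered pairs of distinct crossing arcs with a common left or a common right endpoint. -/
def adjacentCrossingPairs (F : γ → ℝ → ℝ) (E : Finset (CurveArc γ)) :
    Finset (CurveArc γ × CurveArc γ) :=
  {q ∈ E.offDiag | Crosses F q.1 q.2 ∧ (q.1.left = q.2.left ∨ q.1.right = q.2.right)}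

namespace IsDrawing

theorem mono (hD : IsDrawing F V E) {W : Finset (ℝ × ℝ)} {E' : Finset (CurveArc γ)} (hW : W ⊆ V)
    (hE : E' ⊆ E) (hends : ∀ e ∈ E', e.ends ⊆ W) : IsDrawing F W E' where
  continuous e he := hD.continuous e (hE he)
  left_mem e he := hends e he (Finset.mem_insert_self _ _)
  right_mem e he := hends e he (Finset.mem_insert_of_mem (Finset.mem_singleton_self _))
  left_lt_right e he := hD.left_lt_right e (hE he)
  apply_left e he := hD.apply_left e (hE he)
  apply_right e he := hD.apply_right e (hE he)
  apply_ne e he v hv := hD.apply_ne e (hE he) v (hW hv)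

theorem ends_subset (hD : IsDrawing F V E) (he : e ∈ E) : e.ends ⊆ V :=
  Finset.insert_subset (hD.left_mem e he) (Finset.singleton_subset_iff.2 (hD.right_mem e he))

theorem left_ne_right (hD : IsDrawing F V E) (he : e ∈ E) : e.left ≠ e.right :=
  fun h ↦ (hD.left_lt_right e he).ne (congrArg Prod.fst h)

theorem card_ends (hD : IsDrawing F V E) (he : e ∈ E) : #e.ends = 2 :=
  Finset.card_pair (hD.left_ne_right he)

theorem card_le (hD : IsDrawing F V E) :
    #E ≤ 3 * #V + #(parallelPairs E ∪ crossingPairs F E) := by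
  set bad := parallelPairs E ∪ crossingPairs F E
  have notMem_bad {e e'} (he : e ∈ E \ bad.image Prod.fst) : (e, e') ∉ bad := fun h ↦
    (Finset.mem_sdiff.1 he).2 (Finset.mem_image_of_mem Prod.fst h)
  have hplane : IsPlaneDrawing F V (E \ bad.image Prod.fst) :=
    { hD.mono subset_rfl Finset.sdiff_subset
        fun e he ↦ hD.ends_subset (Finset.mem_sdiff.1 he).1 with
      not_crosses := fun e he e' he' hne h ↦ notMem_bad he <| Finset.mem_union_right _ <|
        Finset.mem_filter.2 ⟨Finset.mem_offDiag.2
          ⟨(Finset.mem_sdiff.1 he).1, (Finset.mem_sdiff.1 he').1, hne⟩, h⟩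
      not_parallel := fun e he e' he' hne h ↦ notMem_bad he <| Finset.mem_union_left _ <|
        Finset.mem_filter.2 ⟨Finset.mem_offDiag.2
          ⟨(Finset.mem_sdiff.1 he).1, (Finset.mem_sdiff.1 he').1, hne⟩, h⟩ }
  calc #E ≤ #(E \ bad.image Prod.fst) + #(bad.image Prod.fst) :=
        Finset.card_le_card_sdiff_add_card
    _ ≤ 3 * #V + #bad := Nat.add_le_add hplane.card_le Finset.card_image_le

theorem two_le_card_ends_union (hD : IsDrawing F V E) (he : e ∈ E) (e' : CurveArc γ) :
    2 ≤ #(e.ends ∪ e'.ends) :=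
  (hD.card_ends he).ge.trans (Finset.card_le_card Finset.subset_union_left)

theorem three_le_card_ends_union (hD : IsDrawing F V E) (he : e ∈ E) (he' : e' ∈ E)
    (hadj : e.left = e'.left ∨ e.right = e'.right) (hpar : ¬ Parallel e e') :
    3 ≤ #(e.ends ∪ e'.ends) := by
  have hsub : ({e.left, e.right, if e.left = e'.left then e'.right else e'.left} :
      Finset (ℝ × ℝ)) ⊆ e.ends ∪ e'.ends := by
    intro v
    simp only [ends, Finset.mem_insert, Finset.mem_singleton, Finset.mem_union]
    split_ifs <;> tauto
  refine le_trans ?_ (Finset.card_le_card hsub)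
  have h := hD.left_ne_right he
  have h' := hD.left_ne_right he'
  rw [Finset.card_eq_three.2 ⟨_, _, _, h, ?_, ?_, rfl⟩] <;>
  · simp only [Parallel, not_and] at hpar
    split_ifs <;> grind

theorem four_le_card_ends_union (hD : IsDrawing F V E) (he : e ∈ E) (he' : e' ∈ E)
    (hcr : Crosses F e e') (hadj : ¬ (e.left = e'.left ∨ e.right = e'.right)) :
    4 ≤ #(e.ends ∪ e'.ends) := by
  obtain ⟨hleft, hright⟩ := not_or.1 hadj
  obtain ⟨z, ⟨hz, hz'⟩, -⟩ := hcr
  have hlr : e.left ≠ e'.right := fun h ↦ (hz.1.trans hz'.2).ne (congrArg Prod.fst h)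
  have hrl : e.right ≠ e'.left := fun h ↦ (hz'.1.trans hz.2).ne' (congrArg Prod.fst h)
  rw [Finset.card_union_of_disjoint, hD.card_ends he, hD.card_ends he']
  simp only [ends, Finset.disjoint_insert_left, Finset.disjoint_singleton_left, Finset.mem_insert,
    Finset.mem_singleton, not_or]
  exact ⟨⟨hleft, hlr⟩, hrl, hright⟩

theorem card_filter_ends_subset_le (hD : IsDrawing F V E) {W : Finset (ℝ × ℝ)} (hW : W ⊆ V) :
    #{e ∈ E | e.ends ⊆ W} ≤ 3 * #W + (#{q ∈ parallelPairs E | q.1.ends ∪ q.2.ends ⊆ W} +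
      #{q ∈ adjacentCrossingPairs F E \ parallelPairs E | q.1.ends ∪ q.2.ends ⊆ W} +
      #{q ∈ crossingPairs F E \ adjacentCrossingPairs F E | q.1.ends ∪ q.2.ends ⊆ W}) := by
  have hDW : IsDrawing F W {e ∈ E | e.ends ⊆ W} :=
    hD.mono hW (Finset.filter_subset _ _) fun e he ↦ (Finset.mem_filter.1 he).2
  refine hDW.card_le.trans (Nat.add_le_add_left ?_ _)
  refine le_trans (Finset.card_le_card fun q ↦ ?_) ((Finset.card_union_le _ _).trans
    (Nat.add_le_add_right (Finset.card_union_le _ _) _))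
  simp only [parallelPairs, crossingPairs, adjacentCrossingPairs, Finset.mem_union,
    Finset.mem_filter, Finset.mem_sdiff, Finset.mem_offDiag, Finset.union_subset_iff]
  tauto

theorem sq_mul_card_le (hD : IsDrawing F V E) {p : ℝ} (hp₀ : 0 ≤ p) (hp₁ : p ≤ 1) :
    p ^ 2 * #E ≤ 3 * (p * #V) + (p ^ 2 * #(parallelPairs E) +
      p ^ 3 * #(adjacentCrossingPairs F E) + p ^ 4 * #(crossingPairs F E)) := by
  have sample_le {X Y : Finset (CurveArc γ × CurveArc γ)} {j : ℕ} (hX : X ⊆ E.offDiag)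
      (hXY : X ⊆ Y) (hj : ∀ q ∈ X, j ≤ #(q.1.ends ∪ q.2.ends)) :
      sampleMean V p (fun W ↦ #{q ∈ X | q.1.ends ∪ q.2.ends ⊆ W}) ≤ p ^ j * #Y := by
    refine (sampleMean_card_filter_subset_le hp₀ hp₁ (fun q hq ↦ ?_) hj).trans
      (mul_le_mul_of_nonneg_left (mod_cast Finset.card_le_card hXY) (pow_nonneg hp₀ j))
    obtain ⟨h₁, h₂, -⟩ := Finset.mem_offDiag.1 (hX hq)
    exact Finset.union_subset (hD.ends_subset h₁) (hD.ends_subset h₂)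
  have hpar := sample_le (X := parallelPairs E) (j := 2) (Finset.filter_subset _ _) subset_rfl
    fun q hq ↦ hD.two_le_card_ends_union
      (Finset.mem_offDiag.1 (Finset.mem_filter.1 hq).1).1 _
  have hadj := sample_le (X := adjacentCrossingPairs F E \ parallelPairs E) (j := 3)
    (Finset.sdiff_subset.trans (Finset.filter_subset _ _)) Finset.sdiff_subset fun q hq ↦ by
      obtain ⟨hq, hpar⟩ := Finset.mem_sdiff.1 hq
      obtain ⟨hoff, -, hadj⟩ := Finset.mem_filter.1 hq
      obtain ⟨h₁, h₂, -⟩ := Finset.mem_offDiag.1 hoff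
      exact hD.three_le_card_ends_union h₁ h₂ hadj
        fun h ↦ hpar (Finset.mem_filter.2 ⟨hoff, h⟩)
  have hcr := sample_le (X := crossingPairs F E \ adjacentCrossingPairs F E) (j := 4)
    (Finset.sdiff_subset.trans (Finset.filter_subset _ _)) Finset.sdiff_subset fun q hq ↦ by
      obtain ⟨hq, hadj⟩ := Finset.mem_sdiff.1 hq
      obtain ⟨hoff, hcr⟩ := Finset.mem_filter.1 hq
      obtain ⟨h₁, h₂, -⟩ := Finset.mem_offDiag.1 hoff
      exact hD.four_le_card_ends_union h₁ h₂ hcr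
        fun h ↦ hadj (Finset.mem_filter.2 ⟨hoff, hcr, h⟩)
  have hmean := sampleMean_mono hp₀ hp₁ fun W hW ↦
    (Nat.cast_le (α := ℝ)).2 (hD.card_filter_ends_subset_le hW)
  simp only [Nat.cast_add, Nat.cast_mul, Nat.cast_ofNat, sampleMean_add,
    sampleMean_const_mul, sampleMean_card, sampleMean_card_filter_subset_of_card_eq
      (fun _ he ↦ hD.ends_subset he) (fun _ he ↦ hD.card_ends he)] at hmean
  linarith

theorem mul_sq_mul_card_le (hD : IsDrawing F V E) {p κ : ℝ} (hp₀ : 0 ≤ p) (hp₁ : p ≤ 1)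
    (hκ₀ : 0 ≤ κ) (hκ₁ : κ ≤ 1) :
    κ * (p ^ 2 * #E) ≤ 3 * (p * #V) + κ ^ 2 * (p ^ 2 * #(parallelPairs E) +
      p ^ 3 * #(adjacentCrossingPairs F E) + p ^ 4 * #(crossingPairs F E)) := by
  have hmean := sampleMean_mono (V := E) hκ₀ hκ₁ fun E' hE' ↦
    (hD.mono subset_rfl hE' fun e he ↦ hD.ends_subset (hE' he)).sq_mul_card_le hp₀ hp₁
  simp only [parallelPairs, adjacentCrossingPairs, crossingPairs, sampleMean_add,
    sampleMean_const_mul, sampleMean_const, sampleMean_card, sampleMean_card_filter_offDiag]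
    at hmean
  simp only [parallelPairs, adjacentCrossingPairs, crossingPairs]
  linarith

theorem card_pow_three_le (hD : IsDrawing F V E) {k : ℝ} (hk : 1 ≤ k)
    (hpar : #(parallelPairs E) ≤ k * #E) (hE : 48 * k * #V ≤ #E) :
    (#E : ℝ) ^ 3 ≤ 24 * #V * #(adjacentCrossingPairs F E) * #E +
      1152 * k * #V ^ 2 * #(crossingPairs F E) := by
  rcases E.eq_empty_or_nonempty with rfl | ⟨e, he⟩
  · simp [adjacentCrossingPairs, crossingPairs]
  have hE₀ : (0 : ℝ) < #E := Nat.cast_pos.2 (Finset.card_pos.2 ⟨e, he⟩)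
  have hV₀ : (0 : ℝ) < #V := Nat.cast_pos.2 (Finset.card_pos.2 ⟨_, hD.left_mem e he⟩)
  -- With this `p` and `κ = 1 / (4 * k)`, the vertices and the parallel pairs each account for at
  -- most a quarter of the expected number of edges.
  obtain ⟨p, hp, hp₁, hpE⟩ : ∃ p : ℝ, 0 < p ∧ p ≤ 1 ∧ p * #E = 48 * k * #V :=
    ⟨48 * k * #V / #E, by positivity, (div_le_one hE₀).2 hE, div_mul_cancel₀ _ hE₀.ne'⟩
  have hsample := hD.mul_sq_mul_card_le hp.le hp₁ (κ := 1 / (4 * k)) (by positivity)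
    ((div_le_one (by positivity)).2 (by linarith))
  have hcleared : p ^ 2 * (2 * k * #E) ≤
      p ^ 2 * (p * #(adjacentCrossingPairs F E) + p ^ 2 * #(crossingPairs F E)) := by
    have hpar' := mul_le_mul_of_nonneg_left hpar (sq_nonneg p)
    field_simp at hsample
    linear_combination p * hsample + hpar' - k * p * hpE
  have hedges := le_of_mul_le_mul_left hcleared (by positivity)
  refine le_of_mul_le_mul_left (a := 2 * k) ?_ (by positivity)
  calc 2 * k * (#E : ℝ) ^ 3 = 2 * k * #E * #E ^ 2 := by ring
    _ ≤ (p * #(adjacentCrossingPairs F E) + p ^ 2 * #(crossingPairs F E)) * #E ^ 2 := by gcongr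
    _ = (p * #E) * #(adjacentCrossingPairs F E) * #E + (p * #E) ^ 2 * #(crossingPairs F E) := by
        ring
    _ = 2 * k * (24 * #V * #(adjacentCrossingPairs F E) * #E +
          1152 * k * #V ^ 2 * #(crossingPairs F E)) := by rw [hpE]; ring

end IsDrawing

/-- The incidences between the graphs of the functions `F g`, `g ∈ Γ`, and the points of `V`. -/
def incidences (F : γ → ℝ → ℝ) (Γ : Finset γ) (V : Finset (ℝ × ℝ)) : Finset (γ × ℝ × ℝ) :=
  {q ∈ Γ ×ˢ V | F q.1 q.2.1 = q.2.2}

variable {Γ : Finset γ}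

theorem mul_card_le_card_incidences {k : ℝ} (hrich : ∀ g ∈ Γ, k ≤ #{v ∈ V | F g v.1 = v.2}) :
    k * #Γ ≤ #(incidences F Γ V) := by
  have hfibre : #(incidences F Γ V) = ∑ g ∈ Γ, #{v ∈ V | F g v.1 = v.2} := by
    simp only [incidences, Finset.card_filter, Finset.sum_product]
  rw [hfibre, Nat.cast_sum, mul_comm, ← nsmul_eq_mul]
  exact Finset.card_nsmul_le_sum _ _ _ hrich

/-- The arcs of the curves in `Γ` between consecutive points of `V`. -/
def consecutiveArcs (F : γ → ℝ → ℝ) (Γ : Finset γ) (V : Finset (ℝ × ℝ)) : Finset (CurveArc γ) :=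
  {e ∈ (Γ ×ˢ V ×ˢ V).image fun t ↦ ⟨t.1, t.2.1, t.2.2⟩ | e.left.1 < e.right.1 ∧
    F e.curve e.left.1 = e.left.2 ∧ F e.curve e.right.1 = e.right.2 ∧
    ∀ v ∈ V, v.1 ∈ e.span → F e.curve v.1 ≠ v.2}

theorem mem_consecutiveArcs : e ∈ consecutiveArcs F Γ V ↔
    (e.curve ∈ Γ ∧ e.left ∈ V ∧ e.right ∈ V) ∧ e.left.1 < e.right.1 ∧
    F e.curve e.left.1 = e.left.2 ∧ F e.curve e.right.1 = e.right.2 ∧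
    ∀ v ∈ V, v.1 ∈ e.span → F e.curve v.1 ≠ v.2 := by
  rw [consecutiveArcs, Finset.mem_filter, Finset.mem_image]
  refine and_congr_left' ⟨?_, fun h ↦ ⟨⟨e.curve, e.left, e.right⟩, ?_, rfl⟩⟩
  · rintro ⟨t, ht, rfl⟩
    simpa only [Finset.mem_product] using ht
  · simpa only [Finset.mem_product] using h

theorem curve_mem_of_mem_consecutiveArcs (he : e ∈ consecutiveArcs F Γ V) : e.curve ∈ Γ :=
  (mem_consecutiveArcs.1 he).1.1

theorem isDrawing_consecutiveArcs (hF : ∀ g ∈ Γ, Continuous (F g)) :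
    IsDrawing F V (consecutiveArcs F Γ V) where
  continuous _ he := hF _ (curve_mem_of_mem_consecutiveArcs he)
  left_mem _ he := (mem_consecutiveArcs.1 he).1.2.1
  right_mem _ he := (mem_consecutiveArcs.1 he).1.2.2
  left_lt_right _ he := (mem_consecutiveArcs.1 he).2.1
  apply_left _ he := (mem_consecutiveArcs.1 he).2.2.1
  apply_right _ he := (mem_consecutiveArcs.1 he).2.2.2.1
  apply_ne _ he := (mem_consecutiveArcs.1 he).2.2.2.2

theorem exists_mem_consecutiveArcs_left_eq {c : γ} {v v' : ℝ × ℝ} (hv : (c, v) ∈ incidences F Γ V)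
    (hv' : (c, v') ∈ incidences F Γ V) (hlt : v.1 < v'.1) :
    ∃ e ∈ consecutiveArcs F Γ V, (e.curve, e.left) = (c, v) := by
  simp only [incidences, Finset.mem_filter, Finset.mem_product] at hv hv'
  obtain ⟨u, hu, hmin⟩ := {u ∈ V | F c u.1 = u.2 ∧ v.1 < u.1}.exists_min_image Prod.fst
    ⟨v', Finset.mem_filter.2 ⟨hv'.1.2, hv'.2, hlt⟩⟩
  obtain ⟨huV, hcu, hvu⟩ := Finset.mem_filter.1 hu
  refine ⟨⟨c, v, u⟩, mem_consecutiveArcs.2 ⟨⟨hv.1.1, hv.1.2, huV⟩, hvu, hv.2, hcu, ?_⟩, rfl⟩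
  exact fun x hx hspan hcx ↦ (hmin x (Finset.mem_filter.2 ⟨hx, hcx, hspan.1⟩)).not_gt hspan.2

theorem card_incidences_le : #(incidences F Γ V) ≤ #(consecutiveArcs F Γ V) + #Γ := by
  set starts := (consecutiveArcs F Γ V).image fun e ↦ (e.curve, e.left)
  have hlast : #(incidences F Γ V \ starts) ≤ #Γ := by
    refine Finset.card_le_card_of_injOn Prod.fst (fun q hq ↦ ?_) ?_
    · exact (Finset.mem_product.1 (Finset.mem_filter.1 (Finset.mem_sdiff.1 hq).1).1).1
    rintro ⟨c, v⟩ hv ⟨_, v'⟩ hv' rfl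
    obtain ⟨hv, hlast⟩ := Finset.mem_sdiff.1 hv
    obtain ⟨hv', hlast'⟩ := Finset.mem_sdiff.1 hv'
    rcases lt_trichotomy v.1 v'.1 with h | h | h
    · exact absurd (Finset.mem_image.2 (exists_mem_consecutiveArcs_left_eq hv hv' h)) hlast
    · have hcv : F c v.1 = v.2 := (Finset.mem_filter.1 hv).2
      have hcv' : F c v'.1 = v'.2 := (Finset.mem_filter.1 hv').2
      exact congrArg (c, ·) (Prod.ext h (by rw [← hcv, h, hcv']))
    · exact absurd (Finset.mem_image.2 (exists_mem_consecutiveArcs_left_eq hv' hv h)) hlast'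
  calc #(incidences F Γ V) ≤ #(incidences F Γ V \ starts) + #starts :=
        Finset.card_le_card_sdiff_add_card
    _ ≤ #Γ + #(consecutiveArcs F Γ V) := Nat.add_le_add hlast Finset.card_image_le
    _ = _ := add_comm _ _

theorem eq_of_mem_span (he : e ∈ consecutiveArcs F Γ V) (he' : e' ∈ consecutiveArcs F Γ V)
    (hcurve : e.curve = e'.curve) {z : ℝ} (hz : z ∈ e.span) (hz' : z ∈ e'.span) : e = e' := by
  obtain ⟨⟨-, hlV, hrV⟩, -, hl, hr, hne⟩ := mem_consecutiveArcs.1 he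
  obtain ⟨⟨-, hlV', hrV'⟩, -, hl', hr', hne'⟩ := mem_consecutiveArcs.1 he'
  have hleft : e.left.1 = e'.left.1 := by
    rcases lt_trichotomy e.left.1 e'.left.1 with h | h | h
    · exact absurd (hcurve ▸ hl') (hne _ hlV' ⟨h, hz'.1.trans hz.2⟩)
    · exact h
    · exact absurd (hcurve ▸ hl) (hne' _ hlV ⟨h, hz.1.trans hz'.2⟩)
  have hright : e.right.1 = e'.right.1 := by
    rcases lt_trichotomy e.right.1 e'.right.1 with h | h | h
    · exact absurd (hcurve ▸ hr) (hne' _ hrV ⟨hz'.1.trans hz.2, h⟩)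
    · exact h
    · exact absurd (hcurve ▸ hr') (hne _ hrV' ⟨hz.1.trans hz'.2, h⟩)
  refine CurveArc.ext hcurve (Prod.ext hleft ?_) (Prod.ext hright ?_)
  · rw [← hl, ← hl', hleft, hcurve]
  · rw [← hr, ← hr', hright, hcurve]

theorem curve_ne_of_mem_crossingPairs {q : CurveArc γ × CurveArc γ}
    (hq : q ∈ crossingPairs F (consecutiveArcs F Γ V)) : q.1.curve ≠ q.2.curve := by
  obtain ⟨hoff, z, ⟨hz, hz'⟩, -⟩ := Finset.mem_filter.1 hq
  obtain ⟨he, he', hne⟩ := Finset.mem_offDiag.1 hoff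
  exact fun h ↦ hne (eq_of_mem_span he he' h hz hz')

theorem card_filter_curve_crossingPairs_le {I : Set ℝ} [I.OrdConnected] (hV : ∀ v ∈ V, v.1 ∈ I)
    (c c' : γ) :
    (#{q ∈ crossingPairs F (consecutiveArcs F Γ V) | (q.1.curve, q.2.curve) = (c, c')} : ℕ∞) ≤
      {z ∈ I | F c z = F c' z}.encard := by
  rw [← Set.encard_coe_eq_coe_finsetCard]
  have of_mem {q} (hq : q ∈ {q ∈ crossingPairs F (consecutiveArcs F Γ V) |
      (q.1.curve, q.2.curve) = (c, c')}) : (q.1 ∈ consecutiveArcs F Γ V ∧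
        q.2 ∈ consecutiveArcs F Γ V) ∧ (q.1.curve = c ∧ q.2.curve = c') ∧ Crosses F q.1 q.2 := by
    simp only [crossingPairs, Finset.mem_filter, Finset.mem_offDiag, Prod.mk.injEq] at hq
    tauto
  choose! z hz hFz using fun q hq ↦ (of_mem (q := q) hq).2.2
  refine Set.encard_le_encard_of_injOn (f := z) (fun q hq ↦ ?_) fun q hq q' hq' hzz ↦ ?_
  · obtain ⟨⟨he, -⟩, ⟨rfl, rfl⟩, -⟩ := of_mem hq
    obtain ⟨⟨-, hl, hr⟩, -⟩ := mem_consecutiveArcs.1 he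
    exact ⟨Set.OrdConnected.out ‹_› (hV _ hl) (hV _ hr) (span_subset_closedSpan _ (hz q hq).1),
      hFz q hq⟩
  · obtain ⟨⟨h₁, h₂⟩, ⟨hc, hc'⟩, -⟩ := of_mem hq
    obtain ⟨⟨h₁', h₂'⟩, ⟨rfl, rfl⟩, -⟩ := of_mem hq'
    exact Prod.ext (eq_of_mem_span h₁ h₁' hc (hz q hq).1 (hzz ▸ (hz q' hq').1))
      (eq_of_mem_span h₂ h₂' hc' (hz q hq).2 (hzz ▸ (hz q' hq').2))

theorem card_crossingPairs_consecutiveArcs_le {I : Set ℝ} [I.OrdConnected] {d : ℕ}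
    (hV : ∀ v ∈ V, v.1 ∈ I)
    (hF : ∀ g ∈ Γ, ∀ g' ∈ Γ, g ≠ g' → {z ∈ I | F g z = F g' z}.encard ≤ d) :
    #(crossingPairs F (consecutiveArcs F Γ V)) ≤ d * #Γ ^ 2 := by
  rw [sq, ← Finset.card_product]
  refine Finset.card_le_mul_card_image_of_maps_to (f := fun q ↦ (q.1.curve, q.2.curve))
    (fun q hq ↦ ?_) _ ?_
  · obtain ⟨h₁, h₂, -⟩ := Finset.mem_offDiag.1 (Finset.mem_filter.1 hq).1
    exact Finset.mem_product.2 ⟨curve_mem_of_mem_consecutiveArcs h₁,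
      curve_mem_of_mem_consecutiveArcs h₂⟩
  · rintro ⟨c, c'⟩ hc
    obtain ⟨hc, hc'⟩ := Finset.mem_product.1 hc
    rcases eq_or_ne c c' with rfl | hne
    · rw [Finset.filter_false_of_mem fun q hq h ↦ curve_ne_of_mem_crossingPairs hq
        ((Prod.mk.inj h).1.trans (Prod.mk.inj h).2.symm), Finset.card_empty]
      exact zero_le
    · exact Nat.cast_le.1 ((card_filter_curve_crossingPairs_le hV c c').trans
        (hF c hc c' hc' hne))

end Drawings

section SzemerediTrotter

open scoped Classical

/-- The line with slope `l.1` and intercept `l.2`, as a function. -/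
def lineFun (l : ℝ × ℝ) (x : ℝ) : ℝ := l.1 * x + l.2

theorem continuous_lineFun (l : ℝ × ℝ) : Continuous (lineFun l) := by
  unfold lineFun
  fun_prop

theorem eq_of_lineFun_eq {l l' : ℝ × ℝ} {x y : ℝ} (hxy : x ≠ y) (hx : lineFun l x = lineFun l' x)
    (hy : lineFun l y = lineFun l' y) : l = l' := by
  unfold lineFun at hx hy
  have hslope : l.1 = l'.1 := mul_right_cancel₀ (sub_ne_zero.2 hxy) (by linear_combination hx - hy)
  exact Prod.ext hslope (by rw [hslope] at hx; exact add_left_cancel hx)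

variable {Λ V : Finset (ℝ × ℝ)}

theorem not_crosses_of_left_eq_or_right_eq {e e' : CurveArc (ℝ × ℝ)}
    (he : e ∈ consecutiveArcs lineFun Λ V) (he' : e' ∈ consecutiveArcs lineFun Λ V) (hne : e ≠ e')
    (hadj : e.left = e'.left ∨ e.right = e'.right) : ¬ CurveArc.Crosses lineFun e e' := by
  rintro ⟨z, ⟨hz, hz'⟩, heq⟩
  have hD := isDrawing_consecutiveArcs (V := V) fun l (_ : l ∈ Λ) ↦ continuous_lineFun l
  refine hne (eq_of_mem_span he he' ?_ hz hz')
  rcases hadj with h | h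
  · exact eq_of_lineFun_eq hz.1.ne (by rw [hD.apply_left e he, h, hD.apply_left e' he']) heq
  · exact eq_of_lineFun_eq hz.2.ne' (by rw [hD.apply_right e he, h, hD.apply_right e' he']) heq

theorem adjacentCrossingPairs_lineFun_eq_empty :
    adjacentCrossingPairs lineFun (consecutiveArcs lineFun Λ V) = ∅ :=
  Finset.filter_false_of_mem fun _ hq ⟨hcr, hadj⟩ ↦
    have ⟨h₁, h₂, hne⟩ := Finset.mem_offDiag.1 hq
    not_crosses_of_left_eq_or_right_eq h₁ h₂ hne hadj hcr

theorem parallelPairs_lineFun_eq_empty :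
    parallelPairs (consecutiveArcs lineFun Λ V) = ∅ := by
  refine Finset.filter_false_of_mem fun q hq hpar ↦ ?_
  obtain ⟨h₁, h₂, hne⟩ := Finset.mem_offDiag.1 hq
  have hD := isDrawing_consecutiveArcs (V := V) fun l (_ : l ∈ Λ) ↦ continuous_lineFun l
  have hlr := hD.left_lt_right _ h₁
  have hcurve : q.1.curve = q.2.curve := eq_of_lineFun_eq hlr.ne
    (by rw [hD.apply_left _ h₁, hpar.1, hD.apply_left _ h₂])
    (by rw [hD.apply_right _ h₁, hpar.2, hD.apply_right _ h₂])
  exact hne (CurveArc.ext hcurve hpar.1 hpar.2)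

theorem card_crossingPairs_lineFun_le :
    #(crossingPairs lineFun (consecutiveArcs lineFun Λ V)) ≤ #Λ ^ 2 := by
  rw [← one_mul (#Λ ^ 2)]
  refine card_crossingPairs_consecutiveArcs_le (I := Set.univ) (fun _ _ ↦ Set.mem_univ _)
    fun l _ l' _ hne ↦ Set.encard_le_one_iff.2 fun x y hx hy ↦ ?_
  by_contra hxy
  exact hne (eq_of_lineFun_eq hxy hx.2 hy.2)

theorem card_consecutiveArcs_lineFun_pow_three_le
    (hV : 48 * (#V : ℝ) ≤ #(consecutiveArcs lineFun Λ V)) :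
    (#(consecutiveArcs lineFun Λ V) : ℝ) ^ 3 ≤ 1152 * #V ^ 2 * #Λ ^ 2 := by
  have hD := isDrawing_consecutiveArcs (V := V) fun l (_ : l ∈ Λ) ↦ continuous_lineFun l
  have h := hD.card_pow_three_le le_rfl
    (by rw [parallelPairs_lineFun_eq_empty, Finset.card_empty, Nat.cast_zero]; positivity)
    (by rwa [mul_one])
  rw [adjacentCrossingPairs_lineFun_eq_empty, Finset.card_empty, Nat.cast_zero, mul_zero,
    zero_mul, zero_add, mul_one] at h
  exact h.trans (mul_le_mul_of_nonneg_left (mod_cast card_crossingPairs_lineFun_le)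
    (by positivity))

theorem card_incidences_lineFun_le {k : ℝ} (hk : 2 ≤ k)
    (hrich : ∀ l ∈ Λ, k ≤ #{v ∈ V | lineFun l v.1 = v.2}) :
    (#(incidences lineFun Λ V) : ℝ) ≤ 9216 * #V ^ 2 / k ^ 2 + 96 * #V := by
  have hlines := mul_card_le_card_incidences hrich
  have hconsec : (#(incidences lineFun Λ V) : ℝ) ≤ #(consecutiveArcs lineFun Λ V) + #Λ :=
    mod_cast card_incidences_le
  have hcube := card_consecutiveArcs_lineFun_pow_three_le (Λ := Λ) (V := V)
  set i : ℝ := (#(incidences lineFun Λ V) : ℝ)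
  set a : ℝ := (#(consecutiveArcs lineFun Λ V) : ℝ)
  have hia : i ≤ 2 * a := by
    linarith [mul_le_mul_of_nonneg_right hk (Nat.cast_nonneg (α := ℝ) #Λ)]
  have hfirst : 0 ≤ 9216 * (#V : ℝ) ^ 2 / k ^ 2 := by positivity
  rcases lt_or_ge a (48 * #V) with hlt | hge
  · linarith
  suffices h : i * k ^ 2 ≤ 9216 * #V ^ 2 from
    ((le_div_iff₀ (by positivity)).2 h).trans (le_add_of_nonneg_right (by positivity))
  rcases (Nat.cast_nonneg _ : 0 ≤ a).eq_or_lt with ha | ha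
  · have hi : i ≤ 0 := by linarith
    exact (mul_nonpos_of_nonpos_of_nonneg hi (sq_nonneg k)).trans (by positivity)
  refine le_of_mul_le_mul_left (a := a ^ 2) ?_ (by positivity)
  calc a ^ 2 * (i * k ^ 2) ≤ a ^ 2 * (2 * a * k ^ 2) := by gcongr
    _ = 2 * a ^ 3 * k ^ 2 := by ring
    _ ≤ 2 * (1152 * #V ^ 2 * #Λ ^ 2) * k ^ 2 := by gcongr; exact hcube hge
    _ = 2304 * #V ^ 2 * (k * #Λ) ^ 2 := by ring
    _ ≤ 2304 * #V ^ 2 * (2 * a) ^ 2 := mul_le_mul_of_nonneg_left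
        (pow_le_pow_left₀ (by positivity) (hlines.trans hia) 2) (by positivity)
    _ = a ^ 2 * (9216 * #V ^ 2) := by ring

end SzemerediTrotter

section Tangencies

open scoped Classical

variable {P L : Finset (ℝ × ℝ)} {e e' : CurveArc ((ℝ × ℝ) × ℝ)}

/-- The signed distance from the point `p` to the line with the equation
`x * cos l.1 + y * sin l.1 = l.2`. -/
def signedLineDist (p l : ℝ × ℝ) : ℝ := l.2 - (p.1 * Real.cos l.1 + p.2 * Real.sin l.1)

/-- The curve dual to the circle with centre `g.1` and signed radius `g.2`: its graph consists of
the pairs `(θ, r)` for which the line `x * cos θ + y * sin θ = r` is tangent to the circle. -/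
def tangentCurve (g : (ℝ × ℝ) × ℝ) (θ : ℝ) : ℝ :=
  g.1.1 * Real.cos θ + g.1.2 * Real.sin θ + g.2

theorem continuous_tangentCurve (g : (ℝ × ℝ) × ℝ) : Continuous (tangentCurve g) := by
  unfold tangentCurve
  fun_prop

theorem tangentCurve_eq_iff {g : (ℝ × ℝ) × ℝ} {l : ℝ × ℝ} :
    tangentCurve g l.1 = l.2 ↔ signedLineDist g.1 l = g.2 := by
  rw [tangentCurve, signedLineDist, sub_eq_iff_eq_add, add_comm, eq_comm]

theorem sin_half_sub_ne_zero {z w : ℝ} (hz : z ∈ Set.Ico 0 Real.pi) (hw : w ∈ Set.Ico 0 Real.pi)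
    (hne : z ≠ w) : Real.sin ((z - w) / 2) ≠ 0 := by
  rw [Ne, Real.sin_eq_zero_iff_of_lt_of_lt (by linarith [hz.1, hw.2, Real.pi_pos])
    (by linarith [hz.2, hw.1, Real.pi_pos])]
  exact fun h ↦ hne (by linarith)

theorem mul_sin_half_add_eq {a b z w : ℝ} (hzw : Real.sin ((z - w) / 2) ≠ 0)
    (h : a * Real.cos z + b * Real.sin z = a * Real.cos w + b * Real.sin w) :
    a * Real.sin ((z + w) / 2) = b * Real.cos ((z + w) / 2) := by
  refine mul_left_cancel₀ hzw ?_
  linear_combination (-1 / 2) * h + (a / 2) * Real.cos_sub_cos z w + (b / 2) * Real.sin_sub_sin z w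

theorem eq_of_mul_sin_eq_mul_cos {a b z w : ℝ} (hab : a ≠ 0 ∨ b ≠ 0) (hz : z ∈ Set.Ico 0 Real.pi)
    (hw : w ∈ Set.Ico 0 Real.pi) (haz : a * Real.sin z = b * Real.cos z)
    (haw : a * Real.sin w = b * Real.cos w) : z = w := by
  have hsin : Real.sin (z - w) = 0 := by
    rw [Real.sin_sub]
    rcases hab with h | h
    · exact mul_left_cancel₀ h (by linear_combination Real.cos w * haz - Real.cos z * haw)
    · exact mul_left_cancel₀ h (by linear_combination Real.sin w * haz - Real.sin z * haw)
  exact sub_eq_zero.1 ((Real.sin_eq_zero_iff_of_lt_of_lt (by linarith [hz.1, hw.2])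
    (by linarith [hz.2, hw.1])).1 hsin)

theorem sub_ne_zero_or_sub_ne_zero {p p' : ℝ × ℝ} (h : p ≠ p') :
    p.1 - p'.1 ≠ 0 ∨ p.2 - p'.2 ≠ 0 := by
  contrapose! h
  exact Prod.ext (sub_eq_zero.1 h.1) (sub_eq_zero.1 h.2)

theorem fst_ne_of_tangentCurve_eq {g g' : (ℝ × ℝ) × ℝ} {z : ℝ} (hne : g ≠ g')
    (h : tangentCurve g z = tangentCurve g' z) : g.1 ≠ g'.1 := fun heq ↦ hne <| by
  unfold tangentCurve at h
  exact Prod.ext heq (by rw [heq] at h; exact add_left_cancel h)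

theorem mul_sin_half_add_eq_of_tangentCurve_eq {g g' : (ℝ × ℝ) × ℝ} {z w : ℝ}
    (hz : z ∈ Set.Ico 0 Real.pi) (hw : w ∈ Set.Ico 0 Real.pi) (hzw : z ≠ w)
    (hgz : tangentCurve g z = tangentCurve g' z) (hgw : tangentCurve g w = tangentCurve g' w) :
    (g.1.1 - g'.1.1) * Real.sin ((z + w) / 2) = (g.1.2 - g'.1.2) * Real.cos ((z + w) / 2) := by
  refine mul_sin_half_add_eq (sin_half_sub_ne_zero hz hw hzw) ?_
  unfold tangentCurve at hgz hgw
  linear_combination hgz - hgw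

theorem half_add_mem_Ico {a b z w : ℝ} (hz : z ∈ Set.Ico a b) (hw : w ∈ Set.Ico a b) :
    (z + w) / 2 ∈ Set.Ico a b :=
  ⟨by linarith [hz.1, hw.1], by linarith [hz.2, hw.2]⟩

theorem encard_setOf_tangentCurve_eq_le {g g' : (ℝ × ℝ) × ℝ} (hne : g ≠ g') :
    {z ∈ Set.Ico 0 Real.pi | tangentCurve g z = tangentCurve g' z}.encard ≤ 2 := by
  by_contra! hlt
  obtain ⟨t, hts, ht⟩ := Set.exists_subset_encard_eq (Order.add_one_le_of_lt hlt)
  obtain ⟨x, y, z, hxy, hxz, hyz, rfl⟩ := Set.encard_eq_three.1 ht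
  have hx := hts (Set.mem_insert x _)
  have hy := hts (Set.mem_insert_of_mem _ (Set.mem_insert y _))
  have hz := hts (Set.mem_insert_of_mem _ (Set.mem_insert_of_mem _ (Set.mem_singleton z)))
  have hmid := eq_of_mul_sin_eq_mul_cos
    (sub_ne_zero_or_sub_ne_zero (fst_ne_of_tangentCurve_eq hne hx.2))
    (half_add_mem_Ico hx.1 hy.1) (half_add_mem_Ico hx.1 hz.1)
    (mul_sin_half_add_eq_of_tangentCurve_eq hx.1 hy.1 hxy hx.2 hy.2)
    (mul_sin_half_add_eq_of_tangentCurve_eq hx.1 hz.1 hxz hx.2 hz.2)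
  exact hyz (by linarith)

/-- The circles with a centre in `P` that are tangent to a line of `L`, each given by its centre and
its signed radius. -/
def tangentCircles (P L : Finset (ℝ × ℝ)) : Finset ((ℝ × ℝ) × ℝ) :=
  P.biUnion fun p ↦ L.image fun l ↦ (p, signedLineDist p l)

/-- The arcs into which the lines of `L` cut the curves dual to the tangent circles. -/
def tangencyArcs (P L : Finset (ℝ × ℝ)) : Finset (CurveArc ((ℝ × ℝ) × ℝ)) :=
  consecutiveArcs tangentCurve (tangentCircles P L) L

theorem fst_mem_of_mem_tangentCircles {g : (ℝ × ℝ) × ℝ} (hg : g ∈ tangentCircles P L) :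
    g.1 ∈ P := by
  obtain ⟨p, hp, hg⟩ := Finset.mem_biUnion.1 hg
  obtain ⟨l, -, rfl⟩ := Finset.mem_image.1 hg
  exact hp

theorem card_tangentCircles_le {T : ℕ} (hT : ∀ p ∈ P, #(L.image (signedLineDist p)) ≤ T) :
    #(tangentCircles P L) ≤ #P * T := by
  refine Finset.card_biUnion_le_card_mul _ _ _ fun p hp ↦ ?_
  rw [← Function.comp_def (Prod.mk p) (signedLineDist p), ← Finset.image_image]
  exact Finset.card_image_le.trans (hT p hp)

theorem card_mul_card_le_card_incidences :
    #P * #L ≤ #(incidences tangentCurve (tangentCircles P L) L) := by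
  rw [← Finset.card_product]
  refine Finset.card_le_card_of_injOn (fun q ↦ ((q.1, signedLineDist q.1 q.2), q.2))
    (fun q hq ↦ ?_) fun q _ q' _ h ↦ ?_
  · obtain ⟨hp, hl⟩ := Finset.mem_product.1 hq
    exact Finset.mem_filter.2 ⟨Finset.mem_product.2 ⟨Finset.mem_biUnion.2
      ⟨_, hp, Finset.mem_image_of_mem _ hl⟩, hl⟩, tangentCurve_eq_iff.2 rfl⟩
  · simp only [Prod.mk.injEq] at h
    exact Prod.ext h.1.1 h.2

theorem card_mul_card_le {T : ℕ} (hT : ∀ p ∈ P, #(L.image (signedLineDist p)) ≤ T) :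
    #P * #L ≤ #(tangencyArcs P L) + #P * T :=
  (card_mul_card_le_card_incidences.trans card_incidences_le).trans
    (Nat.add_le_add_left (card_tangentCircles_le hT) _)

theorem isDrawing_tangencyArcs (P L : Finset (ℝ × ℝ)) :
    IsDrawing tangentCurve L (tangencyArcs P L) :=
  isDrawing_consecutiveArcs fun g _ ↦ continuous_tangentCurve g

theorem curve_mem_of_mem_tangencyArcs (he : e ∈ tangencyArcs P L) :
    e.curve ∈ tangentCircles P L := curve_mem_of_mem_consecutiveArcs he

theorem closedSpan_subset_Ico (hL : ∀ l ∈ L, l.1 ∈ Set.Ico 0 Real.pi) (he : e ∈ tangencyArcs P L) :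
    e.closedSpan ⊆ Set.Ico 0 Real.pi :=
  Set.OrdConnected.out inferInstance (hL _ ((isDrawing_tangencyArcs P L).left_mem e he))
    (hL _ ((isDrawing_tangencyArcs P L).right_mem e he))

theorem card_crossingPairs_tangencyArcs_le (hL : ∀ l ∈ L, l.1 ∈ Set.Ico 0 Real.pi) :
    #(crossingPairs tangentCurve (tangencyArcs P L)) ≤ 2 * #(tangentCircles P L) ^ 2 :=
  card_crossingPairs_consecutiveArcs_le hL fun _ _ _ _ ↦ encard_setOf_tangentCurve_eq_le

theorem signedLineDist_left (he : e ∈ tangencyArcs P L) :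
    signedLineDist e.curve.1 e.left = e.curve.2 :=
  tangentCurve_eq_iff.1 ((isDrawing_tangencyArcs P L).apply_left e he)

theorem signedLineDist_right (he : e ∈ tangencyArcs P L) :
    signedLineDist e.curve.1 e.right = e.curve.2 :=
  tangentCurve_eq_iff.1 ((isDrawing_tangencyArcs P L).apply_right e he)

theorem half_add_mem_span {v : ℝ × ℝ} {z : ℝ} (hv : v = e.left ∨ v = e.right) (hz : z ∈ e.span) :
    (v.1 + z) / 2 ∈ e.span := by
  rcases hv with rfl | rfl
  · exact ⟨by linarith [hz.1], by linarith [hz.1, hz.2]⟩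
  · exact ⟨by linarith [hz.1, hz.2], by linarith [hz.2]⟩

/-- A choice of an endpoint of every arc. -/
def IsEndpointChoice (s : CurveArc ((ℝ × ℝ) × ℝ) → ℝ × ℝ) : Prop :=
  ∀ e, s e = e.left ∨ s e = e.right

theorem IsEndpointChoice.signedLineDist_eq {s : CurveArc ((ℝ × ℝ) × ℝ) → ℝ × ℝ}
    (hs : IsEndpointChoice s) (he : e ∈ tangencyArcs P L) :
    signedLineDist e.curve.1 (s e) = e.curve.2 := by
  rcases hs e with h | h
  · rw [h, signedLineDist_left he]
  · rw [h, signedLineDist_right he]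

theorem IsEndpointChoice.exists_mem_span_of_crosses {s : CurveArc ((ℝ × ℝ) × ℝ) → ℝ × ℝ}
    (hs : IsEndpointChoice s) (hL : ∀ l ∈ L, l.1 ∈ Set.Ico 0 Real.pi)
    (he : e ∈ tangencyArcs P L) (he' : e' ∈ tangencyArcs P L)
    (hcr : CurveArc.Crosses tangentCurve e e') (hee : s e = s e') :
    ∃ x ∈ e.span ∩ e'.span,
      (e.curve.1.1 - e'.curve.1.1) * Real.sin x = (e.curve.1.2 - e'.curve.1.2) * Real.cos x := by
  obtain ⟨z, ⟨hz, hz'⟩, heq⟩ := hcr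
  have hpi {x : ℝ} (hx : x ∈ e.closedSpan) := closedSpan_subset_Ico hL he hx
  have hlr := (isDrawing_tangencyArcs P L).left_lt_right e he
  have hv : (s e).1 ∈ e.closedSpan ∧ (s e).1 ≠ z := by
    rcases hs e with h | h <;> rw [h]
    · exact ⟨Set.left_mem_Icc.2 hlr.le, hz.1.ne⟩
    · exact ⟨Set.right_mem_Icc.2 hlr.le, hz.2.ne'⟩
  refine ⟨((s e).1 + z) / 2, ⟨half_add_mem_span (hs e) hz, hee ▸ half_add_mem_span (hs e') hz'⟩,
    mul_sin_half_add_eq_of_tangentCurve_eq (hpi hv.1) (hpi (e.span_subset_closedSpan hz)) hv.2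
      ?_ heq⟩
  rw [tangentCurve_eq_iff.2 (hs.signedLineDist_eq he),
    hee, tangentCurve_eq_iff.2 (hs.signedLineDist_eq he')]

/-- The mean of the abscissas of the two intersections depends only on the centres of the circles,
so a curve and the centre of another circle determine the pair of arcs. -/
theorem IsEndpointChoice.card_filter_crossingPairs_le {s : CurveArc ((ℝ × ℝ) × ℝ) → ℝ × ℝ}
    (hs : IsEndpointChoice s) (hL : ∀ l ∈ L, l.1 ∈ Set.Ico 0 Real.pi) :
    #{q ∈ crossingPairs tangentCurve (tangencyArcs P L) | s q.1 = s q.2} ≤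
      #(tangentCircles P L) * #P := by
  rw [← Finset.card_product]
  have of_mem {q} (hq : q ∈ {q ∈ crossingPairs tangentCurve (tangencyArcs P L) | s q.1 = s q.2}) :
      (q.1 ∈ tangencyArcs P L ∧ q.2 ∈ tangencyArcs P L) ∧
        CurveArc.Crosses tangentCurve q.1 q.2 ∧ s q.1 = s q.2 := by
    simp only [crossingPairs, Finset.mem_filter, Finset.mem_offDiag] at hq
    tauto
  refine Finset.card_le_card_of_injOn (fun q ↦ (q.1.curve, q.2.curve.1)) (fun q hq ↦ ?_)
    fun q hq q' hq' hqq ↦ ?_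
  · obtain ⟨⟨h₁, h₂⟩, -⟩ := of_mem hq
    exact Finset.mem_product.2 ⟨curve_mem_of_mem_tangencyArcs h₁,
      fst_mem_of_mem_tangentCircles (curve_mem_of_mem_tangencyArcs h₂)⟩
  obtain ⟨⟨h₁, h₂⟩, hcr, heq⟩ := of_mem hq
  obtain ⟨⟨h₁', h₂'⟩, hcr', heq'⟩ := of_mem hq'
  obtain ⟨hcurve, hcentre⟩ := Prod.mk.inj hqq
  obtain ⟨x, ⟨hx₁, hx₂⟩, hx⟩ := hs.exists_mem_span_of_crosses hL h₁ h₂ hcr heq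
  obtain ⟨y, ⟨hy₁, hy₂⟩, hy⟩ := hs.exists_mem_span_of_crosses hL h₁' h₂' hcr' heq'
  have hne : q.1.curve.1 ≠ q.2.curve.1 := fst_ne_of_tangentCurve_eq
    (curve_ne_of_mem_crossingPairs (Finset.mem_filter.1 hq).1)
    ((tangentCurve_eq_iff.2 (hs.signedLineDist_eq h₁)).trans
      (heq ▸ (tangentCurve_eq_iff.2 (hs.signedLineDist_eq h₂)).symm))
  obtain rfl : x = y := eq_of_mul_sin_eq_mul_cos (sub_ne_zero_or_sub_ne_zero hne)
    (closedSpan_subset_Ico hL h₁ (q.1.span_subset_closedSpan hx₁))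
    (closedSpan_subset_Ico hL h₁' (q'.1.span_subset_closedSpan hy₁)) hx
    (by rw [hcurve, hcentre, hy])
  have hfirst : q.1 = q'.1 := eq_of_mem_span h₁ h₁' hcurve hx₁ hy₁
  have hradius : q.2.curve.2 = q'.2.curve.2 := by
    rw [← hs.signedLineDist_eq h₂, ← hs.signedLineDist_eq h₂', ← heq, ← heq', hfirst, hcentre]
  exact Prod.ext hfirst (eq_of_mem_span h₂ h₂' (Prod.ext hcentre hradius) hx₂ hy₂)

theorem card_adjacentCrossingPairs_tangencyArcs_le (hL : ∀ l ∈ L, l.1 ∈ Set.Ico 0 Real.pi) :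
    #(adjacentCrossingPairs tangentCurve (tangencyArcs P L)) ≤
      2 * (#(tangentCircles P L) * #P) := by
  have hsub : adjacentCrossingPairs tangentCurve (tangencyArcs P L) ⊆
      {q ∈ crossingPairs tangentCurve (tangencyArcs P L) | q.1.left = q.2.left} ∪
        {q ∈ crossingPairs tangentCurve (tangencyArcs P L) | q.1.right = q.2.right} := by
    intro q hq
    simp only [adjacentCrossingPairs, crossingPairs, Finset.mem_union, Finset.mem_filter] at hq ⊢
    tauto
  rw [two_mul]
  exact (Finset.card_le_card hsub).trans <| (Finset.card_union_le _ _).trans <| add_le_add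
    (IsEndpointChoice.card_filter_crossingPairs_le (fun _ ↦ Or.inl rfl) hL)
    (IsEndpointChoice.card_filter_crossingPairs_le (fun _ ↦ Or.inr rfl) hL)

/-- The points of `P` at equal signed distances from two lines. -/
def equidistantPoints (P : Finset (ℝ × ℝ)) (l m : ℝ × ℝ) : Finset (ℝ × ℝ) :=
  {p ∈ P | signedLineDist p l = signedLineDist p m}

/-- The arcs between two lines with a bisector that contains at least `k` points of `P`. -/
def richArcs (P L : Finset (ℝ × ℝ)) (k : ℝ) : Finset (CurveArc ((ℝ × ℝ) × ℝ)) :=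
  {e ∈ tangencyArcs P L | k ≤ #(equidistantPoints P e.left e.right)}

/-- The arcs that are not rich. -/
def poorArcs (P L : Finset (ℝ × ℝ)) (k : ℝ) : Finset (CurveArc ((ℝ × ℝ) × ℝ)) :=
  {e ∈ tangencyArcs P L | ¬ k ≤ #(equidistantPoints P e.left e.right)}

theorem curve_fst_mem_equidistantPoints (he : e ∈ tangencyArcs P L) :
    e.curve.1 ∈ equidistantPoints P e.left e.right :=
  Finset.mem_filter.2 ⟨fst_mem_of_mem_tangentCircles (curve_mem_of_mem_tangencyArcs he),
    (signedLineDist_left he).trans (signedLineDist_right he).symm⟩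

theorem card_filter_parallelPairs_le {E : Finset (CurveArc ((ℝ × ℝ) × ℝ))}
    (hE : E ⊆ tangencyArcs P L) (e : CurveArc ((ℝ × ℝ) × ℝ)) :
    #{q ∈ parallelPairs E | q.1 = e} ≤ #(equidistantPoints P e.left e.right) := by
  have of_mem {q} (hq : q ∈ {q ∈ parallelPairs E | q.1 = e}) :
      q.2 ∈ tangencyArcs P L ∧ q.1 = e ∧ e.left = q.2.left ∧ e.right = q.2.right := by
    obtain ⟨hpair, rfl⟩ := Finset.mem_filter.1 hq
    obtain ⟨hoff, hparallel⟩ := Finset.mem_filter.1 hpair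
    exact ⟨hE (Finset.mem_offDiag.1 hoff).2.1, rfl, hparallel⟩
  refine Finset.card_le_card_of_injOn (fun q ↦ q.2.curve.1) (fun q hq ↦ ?_)
    fun q hq q' hq' hcentre ↦ ?_
  · obtain ⟨h₂, -, hleft, hright⟩ := of_mem hq
    rw [hleft, hright]
    exact curve_fst_mem_equidistantPoints h₂
  obtain ⟨h₂, h₁, hleft, hright⟩ := of_mem hq
  obtain ⟨h₂', h₁', hleft', hright'⟩ := of_mem hq'
  have hradius : q.2.curve.2 = q'.2.curve.2 := by
    rw [← signedLineDist_left h₂, ← signedLineDist_left h₂', ← hleft, ← hleft']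
    exact congrArg (signedLineDist · e.left) hcentre
  exact Prod.ext (h₁.trans h₁'.symm) (CurveArc.ext (Prod.ext hcentre hradius)
    (hleft.symm.trans hleft') (hright.symm.trans hright'))

theorem card_parallelPairs_poorArcs_le (k : ℝ) :
    (#(parallelPairs (poorArcs P L k)) : ℝ) ≤ k * #(poorArcs P L k) := by
  have hmaps : ∀ q ∈ parallelPairs (poorArcs P L k), q.1 ∈ poorArcs P L k := fun q hq ↦
    (Finset.mem_offDiag.1 (Finset.mem_filter.1 hq).1).1
  rw [Finset.card_eq_sum_card_fiberwise hmaps, Nat.cast_sum, mul_comm, ← nsmul_eq_mul]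
  refine Finset.sum_le_card_nsmul _ _ _ fun e he ↦ ?_
  exact (Nat.cast_le.2 (card_filter_parallelPairs_le (Finset.filter_subset _ _) e)).trans
    (not_le.1 (Finset.mem_filter.1 he).2).le

/-- The inclination of a bisector of two lines. -/
def bisectorAngle (l l' : ℝ × ℝ) : ℝ := (l.1 + l'.1) / 2

/-- The slope and the intercept of the line of points at equal signed distances from two lines. -/
def bisector (l l' : ℝ × ℝ) : ℝ × ℝ :=
  (Real.tan (bisectorAngle l l'),
    (l.2 - l'.2) / (2 * Real.sin ((l.1 - l'.1) / 2) * Real.cos (bisectorAngle l l')))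

theorem lineFun_bisector_eq_iff {l l' p : ℝ × ℝ} (hsin : Real.sin ((l.1 - l'.1) / 2) ≠ 0)
    (hcos : Real.cos (bisectorAngle l l') ≠ 0) :
    lineFun (bisector l l') p.1 = p.2 ↔ signedLineDist p l = signedLineDist p l' := by
  have hdiff : p.2 - lineFun (bisector l l') p.1 = (signedLineDist p l' - signedLineDist p l) /
      (2 * Real.sin ((l.1 - l'.1) / 2) * Real.cos (bisectorAngle l l')) := by
    rw [eq_div_iff (by positivity)]
    unfold bisectorAngle at hcos
    simp only [lineFun, bisector, signedLineDist, bisectorAngle, Real.tan_eq_sin_div_cos]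
    field_simp
    linear_combination -p.1 * Real.cos_sub_cos l.1 l'.1 - p.2 * Real.sin_sub_sin l.1 l'.1
  rw [eq_comm, ← sub_eq_zero, hdiff, div_eq_zero_iff, or_iff_left (by positivity), sub_eq_zero,
    eq_comm]

theorem bisectorAngle_mem_span (he : e ∈ tangencyArcs P L) :
    bisectorAngle e.left e.right ∈ e.span := by
  have hlr := (isDrawing_tangencyArcs P L).left_lt_right e he
  exact ⟨left_lt_add_div_two.2 hlr, add_div_two_lt_right.2 hlr⟩

theorem bisectorAngle_mem_Ico (hL : ∀ l ∈ L, l.1 ∈ Set.Ico 0 Real.pi)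
    (he : e ∈ tangencyArcs P L) : bisectorAngle e.left e.right ∈ Set.Ico 0 Real.pi :=
  closedSpan_subset_Ico hL he (e.span_subset_closedSpan (bisectorAngle_mem_span he))

theorem eq_of_bisectorAngle_eq (he : e ∈ tangencyArcs P L) (he' : e' ∈ tangencyArcs P L)
    (hcurve : e.curve = e'.curve)
    (hangle : bisectorAngle e.left e.right = bisectorAngle e'.left e'.right) : e = e' :=
  eq_of_mem_span he he' hcurve (bisectorAngle_mem_span he) (hangle ▸ bisectorAngle_mem_span he')

theorem card_filter_cos_bisectorAngle_eq_zero_le (hL : ∀ l ∈ L, l.1 ∈ Set.Ico 0 Real.pi) :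
    #{e ∈ tangencyArcs P L | Real.cos (bisectorAngle e.left e.right) = 0} ≤
      #(tangentCircles P L) := by
  refine Finset.card_le_card_of_injOn CurveArc.curve
    (fun e he ↦ curve_mem_of_mem_tangencyArcs (Finset.mem_filter.1 he).1)
    fun e he e' he' hcurve ↦ ?_
  obtain ⟨he, hcos⟩ := Finset.mem_filter.1 he
  obtain ⟨he', hcos'⟩ := Finset.mem_filter.1 he'
  refine eq_of_bisectorAngle_eq he he' hcurve ?_
  exact eq_of_mul_sin_eq_mul_cos (a := 0) (Or.inr one_ne_zero) (bisectorAngle_mem_Ico hL he)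
    (bisectorAngle_mem_Ico hL he') (by rw [hcos, zero_mul, mul_zero])
    (by rw [hcos', zero_mul, mul_zero])

/-- The rich arcs between two lines with a bisector that is not vertical. -/
def obliqueRichArcs (P L : Finset (ℝ × ℝ)) (k : ℝ) : Finset (CurveArc ((ℝ × ℝ) × ℝ)) :=
  {e ∈ richArcs P L k | Real.cos (bisectorAngle e.left e.right) ≠ 0}

/-- The lines that are the bisectors of oblique rich arcs. -/
def richBisectors (P L : Finset (ℝ × ℝ)) (k : ℝ) : Finset (ℝ × ℝ) :=
  (obliqueRichArcs P L k).image fun e ↦ bisector e.left e.right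

variable {k : ℝ}

theorem mem_obliqueRichArcs : e ∈ obliqueRichArcs P L k ↔ e ∈ tangencyArcs P L ∧
    k ≤ #(equidistantPoints P e.left e.right) ∧ Real.cos (bisectorAngle e.left e.right) ≠ 0 := by
  rw [obliqueRichArcs, richArcs, Finset.filter_filter, Finset.mem_filter]

theorem filter_lineFun_bisector_eq (hL : ∀ l ∈ L, l.1 ∈ Set.Ico 0 Real.pi)
    (he : e ∈ obliqueRichArcs P L k) :
    {p ∈ P | lineFun (bisector e.left e.right) p.1 = p.2} =
      equidistantPoints P e.left e.right := by
  obtain ⟨he, -, hcos⟩ := mem_obliqueRichArcs.1 he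
  have hD := isDrawing_tangencyArcs P L
  exact Finset.filter_congr fun p _ ↦ lineFun_bisector_eq_iff (sin_half_sub_ne_zero
    (hL _ (hD.left_mem e he)) (hL _ (hD.right_mem e he)) (hD.left_lt_right e he).ne) hcos

theorem le_card_filter_of_mem_richBisectors (hL : ∀ l ∈ L, l.1 ∈ Set.Ico 0 Real.pi) {b : ℝ × ℝ}
    (hb : b ∈ richBisectors P L k) : k ≤ #{p ∈ P | lineFun b p.1 = p.2} := by
  obtain ⟨e, he, rfl⟩ := Finset.mem_image.1 hb
  rw [filter_lineFun_bisector_eq hL he]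
  exact (mem_obliqueRichArcs.1 he).2.1

theorem bisector_curve_fst_mem_incidences (hL : ∀ l ∈ L, l.1 ∈ Set.Ico 0 Real.pi)
    (he : e ∈ obliqueRichArcs P L k) :
    (bisector e.left e.right, e.curve.1) ∈ incidences lineFun (richBisectors P L k) P := by
  have hmem := curve_fst_mem_equidistantPoints (mem_obliqueRichArcs.1 he).1
  rw [← filter_lineFun_bisector_eq hL he, Finset.mem_filter] at hmem
  exact Finset.mem_filter.2 ⟨Finset.mem_product.2 ⟨Finset.mem_image_of_mem _ he, hmem.1⟩, hmem.2⟩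

theorem eq_of_bisector_eq (hL : ∀ l ∈ L, l.1 ∈ Set.Ico 0 Real.pi)
    (he : e ∈ obliqueRichArcs P L k) (he' : e' ∈ obliqueRichArcs P L k)
    (hcurve : e.curve = e'.curve) (hbis : bisector e.left e.right = bisector e'.left e'.right) :
    e = e' := by
  obtain ⟨he, -, hcos⟩ := mem_obliqueRichArcs.1 he
  obtain ⟨he', -, hcos'⟩ := mem_obliqueRichArcs.1 he'
  refine eq_of_bisectorAngle_eq he he' hcurve ?_
  have htan := congrArg Prod.fst hbis
  simp only [bisector, Real.tan_eq_sin_div_cos] at htan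
  rw [div_eq_div_iff hcos hcos'] at htan
  exact eq_of_mul_sin_eq_mul_cos (Or.inl hcos) (bisectorAngle_mem_Ico hL he)
    (bisectorAngle_mem_Ico hL he') (mul_comm _ _) (by rw [htan, mul_comm])

theorem card_obliqueRichArcs_le {T : ℕ} (hL : ∀ l ∈ L, l.1 ∈ Set.Ico 0 Real.pi)
    (hT : ∀ p ∈ P, #(L.image (signedLineDist p)) ≤ T) :
    #(obliqueRichArcs P L k) ≤ T * #(incidences lineFun (richBisectors P L k) P) := by
  have hmaps : ∀ e ∈ obliqueRichArcs P L k, (bisector e.left e.right, e.curve.1) ∈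
      incidences lineFun (richBisectors P L k) P :=
    fun e he ↦ bisector_curve_fst_mem_incidences hL he
  refine Finset.card_le_mul_card_image_of_maps_to hmaps T fun q hq ↦ ?_
  have hcentre : q.2 ∈ P := (Finset.mem_product.1 (Finset.mem_filter.1 hq).1).2
  refine le_trans (Finset.card_le_card_of_injOn (fun e ↦ e.curve.2) (fun e he ↦ ?_)
    fun e he e' he' hradius ↦ ?_) (hT q.2 hcentre)
  · simp only [Finset.coe_filter, Set.mem_ofPred_eq] at he
    obtain ⟨he, rfl⟩ := he
    have harc := (mem_obliqueRichArcs.1 he).1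
    exact Finset.mem_image.2
      ⟨e.left, (isDrawing_tangencyArcs P L).left_mem e harc, signedLineDist_left harc⟩
  · simp only [Finset.coe_filter, Set.mem_ofPred_eq] at he he'
    have hqq := he.2.trans he'.2.symm
    exact eq_of_bisector_eq hL he.1 he'.1 (Prod.ext (congrArg Prod.snd hqq) hradius)
      (congrArg Prod.fst hqq)

theorem card_richArcs_le {T : ℕ} (hL : ∀ l ∈ L, l.1 ∈ Set.Ico 0 Real.pi)
    (hT : ∀ p ∈ P, #(L.image (signedLineDist p)) ≤ T) (hk : 2 ≤ k) :
    (#(richArcs P L k) : ℝ) ≤ T * (9216 * #P ^ 2 / k ^ 2 + 97 * #P) := by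
  have hsplit : #(richArcs P L k) ≤ #(obliqueRichArcs P L k) + #P * T := by
    rw [← Finset.card_filter_add_card_filter_not
      (fun e : CurveArc ((ℝ × ℝ) × ℝ) ↦ Real.cos (bisectorAngle e.left e.right) = 0), add_comm]
    exact add_le_add_right (((Finset.card_le_card (Finset.filter_subset_filter _
      (Finset.filter_subset _ _))).trans (card_filter_cos_bisectorAngle_eq_zero_le hL)).trans
      (card_tangentCircles_le hT)) _
  have hoblique : (#(obliqueRichArcs P L k) : ℝ) ≤ T * (9216 * #P ^ 2 / k ^ 2 + 96 * #P) :=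
    (Nat.cast_le.2 (card_obliqueRichArcs_le hL hT)).trans <| by
      rw [Nat.cast_mul]
      exact mul_le_mul_of_nonneg_left (card_incidences_lineFun_le hk fun _ hb ↦
        le_card_filter_of_mem_richBisectors hL hb) (Nat.cast_nonneg T)
  have hsplit' : (#(richArcs P L k) : ℝ) ≤ #(obliqueRichArcs P L k) + #P * T := mod_cast hsplit
  linarith

theorem card_poorArcs_pow_three_le {T : ℕ} (hL : ∀ l ∈ L, l.1 ∈ Set.Ico 0 Real.pi)
    (hT : ∀ p ∈ P, #(L.image (signedLineDist p)) ≤ T) (hk : 1 ≤ k)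
    (hpoor : 48 * k * #L ≤ #(poorArcs P L k)) :
    (#(poorArcs P L k) : ℝ) ^ 3 ≤ 48 * #L * (#P ^ 2 * T) * #(poorArcs P L k) +
      2304 * k * #L ^ 2 * (#P * T) ^ 2 := by
  have hsub : poorArcs P L k ⊆ tangencyArcs P L := Finset.filter_subset _ _
  have hD := isDrawing_tangencyArcs P L
  have hcube := (hD.mono subset_rfl hsub fun e he ↦ hD.ends_subset (hsub he)).card_pow_three_le hk
    (card_parallelPairs_poorArcs_le k) hpoor
  have hcircles := card_tangentCircles_le hT
  have hadj : #(adjacentCrossingPairs tangentCurve (poorArcs P L k)) ≤ 2 * (#P ^ 2 * T) :=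
    calc _ ≤ _ := Finset.card_le_card (Finset.filter_subset_filter _ (Finset.offDiag_mono hsub))
      _ ≤ _ := card_adjacentCrossingPairs_tangencyArcs_le hL
      _ ≤ 2 * ((#P * T) * #P) := by gcongr
      _ = 2 * (#P ^ 2 * T) := by ring
  have hcross : #(crossingPairs tangentCurve (poorArcs P L k)) ≤ 2 * (#P * T) ^ 2 :=
    calc _ ≤ _ := Finset.card_le_card (Finset.filter_subset_filter _ (Finset.offDiag_mono hsub))
      _ ≤ _ := card_crossingPairs_tangencyArcs_le hL
      _ ≤ 2 * (#P * T) ^ 2 := by gcongr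
  have hadj' : (#(adjacentCrossingPairs tangentCurve (poorArcs P L k)) : ℝ) ≤ 2 * (#P ^ 2 * T) :=
    mod_cast hadj
  have hcross' : (#(crossingPairs tangentCurve (poorArcs P L k)) : ℝ) ≤ 2 * (#P * T) ^ 2 :=
    mod_cast hcross
  calc _ ≤ _ := hcube
    _ ≤ 24 * #L * (2 * (#P ^ 2 * T)) * #(poorArcs P L k) +
        1152 * k * #L ^ 2 * (2 * (#P * T) ^ 2) := by gcongr
    _ = _ := by ring

theorem card_richArcs_add_card_poorArcs (P L : Finset (ℝ × ℝ)) (k : ℝ) :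
    #(richArcs P L k) + #(poorArcs P L k) = #(tangencyArcs P L) :=
  Finset.card_filter_add_card_filter_not _

theorem card_mul_card_le_card_poorArcs_add {T : ℕ} (hL : ∀ l ∈ L, l.1 ∈ Set.Ico 0 Real.pi)
    (hT : ∀ p ∈ P, #(L.image (signedLineDist p)) ≤ T) (hk : 2 ≤ k) :
    (#P : ℝ) * #L ≤ #(poorArcs P L k) + T * (9216 * #P ^ 2 / k ^ 2 + 98 * #P) := by
  have harcs : (#P : ℝ) * #L ≤ #(richArcs P L k) + #(poorArcs P L k) + #P * T := by
    exact_mod_cast card_richArcs_add_card_poorArcs P L k ▸ card_mul_card_le hT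
  linarith [card_richArcs_le hL hT hk]

theorem card_poorArcs_ge {T : ℕ} {s : ℝ} (hL : ∀ l ∈ L, l.1 ∈ Set.Ico 0 Real.pi)
    (hT : ∀ p ∈ P, #(L.image (signedLineDist p)) ≤ T) (hs : 0 ≤ s)
    (hsL : s ^ 2 * #L = 73728 * T * #P) (hTL : 784 * (T : ℝ) ≤ #L) :
    (#P : ℝ) * #L ≤ 2 * #(poorArcs P L (s + 2)) := by
  have hsplit := card_mul_card_le_card_poorArcs_add hL hT (k := s + 2) (by linarith)
  have hrich : T * (9216 * (#P : ℝ) ^ 2 / (s + 2) ^ 2) ≤ #P * #L / 8 := by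
    rw [mul_div_assoc', div_le_iff₀ (by positivity)]
    calc T * (9216 * (#P : ℝ) ^ 2) = #P * #L / 8 * s ^ 2 := by linear_combination -#P / 8 * hsL
      _ ≤ #P * #L / 8 * (s + 2) ^ 2 := by gcongr; linarith
  have hfew : 98 * (T * #P : ℝ) ≤ #P * #L / 8 := by
    linarith [mul_le_mul_of_nonneg_right hTL (Nat.cast_nonneg (α := ℝ) #P)]
  linarith [(by positivity : (0 : ℝ) ≤ #P * #L)]

end Tangencies

section Exponents

variable {m n T s k q : ℝ}

theorem mul_le_of_pow_three_le (hm : 0 < m) (hn : 0 < n)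
    (hTn : 784 * T ≤ n) (hmn : m * n ≤ 2 * q)
    (hcube : q ^ 3 ≤ 48 * n * (m ^ 2 * T) * q + 2304 * k * n ^ 2 * (m * T) ^ 2) :
    m * n ≤ 36864 * k * T ^ 2 := by
  have hq : 0 < q := by linarith [mul_pos hm hn]
  have hfirst : 48 * n * (m ^ 2 * T) ≤ q ^ 2 / 2 :=
    calc 48 * n * (m ^ 2 * T) ≤ (m * n) ^ 2 / 8 := by
          have := mul_le_mul_of_nonneg_left hTn (by positivity : 0 ≤ n * m ^ 2)
          nlinarith [mul_pos (pow_pos hm 2) (pow_pos hn 2)]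
      _ ≤ (2 * q) ^ 2 / 8 := by gcongr
      _ = q ^ 2 / 2 := by ring
  have hsecond : q * q ^ 2 ≤ 4608 * k * (m * n * T) ^ 2 := by
    linarith [mul_le_mul_of_nonneg_right hfirst hq.le]
  have hsquare : m * n * (m * n) ^ 2 ≤ 36864 * k * T ^ 2 * (m * n) ^ 2 :=
    calc m * n * (m * n) ^ 2 ≤ 2 * q * (2 * q) ^ 2 := by gcongr
      _ = 8 * (q * q ^ 2) := by ring
      _ ≤ 8 * (4608 * k * (m * n * T) ^ 2) := by gcongr
      _ = 36864 * k * T ^ 2 * (m * n) ^ 2 := by ring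
  exact le_of_mul_le_mul_right hsquare (by positivity)

theorem mul_pow_three_le_of_le_mul_add (hm : 384 ≤ m) (hn : 0 ≤ n) (hT : 1 ≤ T)
    (hs : s ^ 2 * n = 73728 * T * m) (hms : m ≤ 96 * (s + 2)) :
    m * n ^ 3 ≤ 10 ^ 30 * T ^ 5 := by
  have hmn : m * n ≤ 2717908992 * T := by
    refine le_of_mul_le_mul_left (a := m) ?_ (by positivity)
    calc m * (m * n) = m ^ 2 * n := by ring
      _ ≤ (192 * s) ^ 2 * n := by gcongr; linarith
      _ = m * (2717908992 * T) := by linear_combination 36864 * hs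
  calc m * n ^ 3 ≤ m ^ 3 * n ^ 3 := by gcongr; exact le_self_pow₀ (by linarith) three_ne_zero
    _ = (m * n) ^ 3 := by ring
    _ ≤ (2717908992 * T) ^ 3 := by gcongr
    _ = 2717908992 ^ 3 * T ^ 3 := mul_pow _ _ _
    _ ≤ 10 ^ 30 * T ^ 5 := by gcongr <;> norm_num

theorem mul_pow_three_le_of_mul_le (hm : 0 < m) (hn : 0 ≤ n) (hT : 0 ≤ T) (hnm : n ≤ m ^ 3)
    (hs : s ^ 2 * n = 73728 * T * m) (hmn : m * n ≤ 36864 * (s + 2) * T ^ 2) :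
    m * n ^ 3 ≤ 10 ^ 30 * T ^ 5 := by
  rcases le_total 2 s with h | h
  · have hle : m * n ≤ 73728 * s * T ^ 2 :=
      hmn.trans (mul_le_mul_of_nonneg_right (by linarith) (sq_nonneg T))
    refine le_of_mul_le_mul_left (a := m) ?_ hm
    calc m * (m * n ^ 3) = (m * n) ^ 2 * n := by ring
      _ ≤ (73728 * s * T ^ 2) ^ 2 * n := by gcongr
      _ = m * (73728 ^ 3 * T ^ 5) := by linear_combination 73728 ^ 2 * T ^ 4 * hs
      _ ≤ m * (10 ^ 30 * T ^ 5) := by gcongr; norm_num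
  · have hle : m * n ≤ 147456 * T ^ 2 :=
      hmn.trans (mul_le_mul_of_nonneg_right (by linarith) (sq_nonneg T))
    refine le_of_sq_le_sq ?_ (by positivity)
    calc (m * n ^ 3) ^ 2 = m ^ 2 * n ^ 5 * n := by ring
      _ ≤ m ^ 2 * n ^ 5 * m ^ 3 := by gcongr
      _ = (m * n) ^ 5 := by ring
      _ ≤ (147456 * T ^ 2) ^ 5 := by gcongr
      _ = 147456 ^ 5 * (T ^ 5) ^ 2 := by ring
      _ ≤ (10 ^ 30) ^ 2 * (T ^ 5) ^ 2 := by gcongr; norm_num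
      _ = (10 ^ 30 * T ^ 5) ^ 2 := by ring

end Exponents

section Counting

open scoped Classical

theorem card_mul_card_pow_three_le {P L : Finset (ℝ × ℝ)} {T : ℕ} (hP : P.Nonempty)
    (hL : ∀ l ∈ L, l.1 ∈ Set.Ico 0 Real.pi) (hT : ∀ p ∈ P, #(L.image (signedLineDist p)) ≤ T)
    (hPL : (#P : ℝ) ≤ #L ^ 2) (hLP : (#L : ℝ) ≤ #P ^ 3) :
    (#P : ℝ) * #L ^ 3 ≤ 10 ^ 30 * T ^ 5 := by
  have hm : (1 : ℝ) ≤ #P := Nat.one_le_cast.2 hP.card_pos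
  have hL₀ : L.Nonempty := by
    rw [Finset.nonempty_iff_ne_empty]
    rintro rfl
    exact hP.ne_empty (by simpa using hPL)
  have hn : (1 : ℝ) ≤ #L := Nat.one_le_cast.2 hL₀.card_pos
  have hT₁ : (1 : ℝ) ≤ T := by
    obtain ⟨p, hp⟩ := hP
    exact Nat.one_le_cast.2 ((hL₀.image _).card_pos.trans_le (hT p hp))
  rcases lt_or_ge (#P : ℝ) 384 with hm' | hm'
  · calc (#P : ℝ) * #L ^ 3 ≤ #P * (#P ^ 3) ^ 3 := by gcongr
      _ = (#P : ℝ) ^ 10 := by ring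
      _ ≤ 384 ^ 10 := by gcongr
      _ ≤ 10 ^ 30 * 1 := by norm_num
      _ ≤ 10 ^ 30 * T ^ 5 := by gcongr; exact one_le_pow₀ hT₁
  rcases lt_or_ge (#L : ℝ) (784 * T) with hn' | hn'
  · calc (#P : ℝ) * #L ^ 3 ≤ #L ^ 2 * #L ^ 3 := by gcongr
      _ = (#L : ℝ) ^ 5 := by ring
      _ ≤ (784 * T) ^ 5 := by gcongr
      _ = 784 ^ 5 * (T : ℝ) ^ 5 := mul_pow _ _ _
      _ ≤ 10 ^ 30 * T ^ 5 := by gcongr; norm_num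
  obtain ⟨s, hs₀, hs⟩ : ∃ s : ℝ, 0 ≤ s ∧ s ^ 2 * #L = 73728 * T * #P :=
    ⟨√(73728 * T * #P / #L), Real.sqrt_nonneg _, by
      rw [Real.sq_sqrt (by positivity), div_mul_cancel₀ _ (by positivity)]⟩
  have hpoor := card_poorArcs_ge hL hT hs₀ hs hn'
  rcases le_total (48 * (s + 2) * #L) (#(poorArcs P L (s + 2)) : ℝ) with h | h
  · exact mul_pow_three_le_of_mul_le (by positivity) (by positivity) (by positivity) hLP hs
      (mul_le_of_pow_three_le (by positivity) (by positivity) hn' hpoor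
        (card_poorArcs_pow_three_le hL hT (by linarith) h))
  · refine mul_pow_three_le_of_le_mul_add hm' (by positivity) hT₁ hs ?_
    exact le_of_mul_le_mul_right (hpoor.trans (by linarith)) (by positivity : (0 : ℝ) < #L)

end Counting

section Geometry

/-- The unit vector at the angle `θ` to the first coordinate axis. -/
def unitVector (θ : ℝ) : Pt2 := !₂[Real.cos θ, Real.sin θ]

/-- The line with the equation `x * cos w.1 + y * sin w.1 = w.2`. -/
def normalFormLine (w : ℝ × ℝ) : Set Pt2 :=
  {x | x 0 * Real.cos w.1 + x 1 * Real.sin w.1 = w.2}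

/-- The coordinates of a point of the Euclidean plane, as a pair. -/
def coordPair (p : Pt2) : ℝ × ℝ := (p 0, p 1)

theorem coordPair_injective : Function.Injective coordPair := fun p q h ↦ by
  ext i
  fin_cases i
  · exact congrArg Prod.fst h
  · exact congrArg Prod.snd h

theorem norm_unitVector (θ : ℝ) : ‖unitVector θ‖ = 1 := by
  simp [unitVector, EuclideanSpace.norm_eq]

theorem inner_unitVector (θ : ℝ) (x : Pt2) :
    inner ℝ (unitVector θ) x = x 0 * Real.cos θ + x 1 * Real.sin θ := by
  simp [unitVector, PiLp.inner_apply, Fin.sum_univ_two]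

theorem infDist_normalFormLine (p : Pt2) (w : ℝ × ℝ) :
    Metric.infDist p (normalFormLine w) = |signedLineDist (coordPair p) w| := by
  have mem_iff {x : Pt2} : x ∈ normalFormLine w ↔ inner ℝ (unitVector w.1) x = w.2 := by
    rw [inner_unitVector]; rfl
  have hdist : signedLineDist (coordPair p) w = w.2 - inner ℝ (unitVector w.1) p := by
    rw [inner_unitVector]; rfl
  rw [hdist]
  have hfoot : p + (w.2 - inner ℝ (unitVector w.1) p) • unitVector w.1 ∈ normalFormLine w := by
    rw [mem_iff, inner_add_right, inner_smul_right, real_inner_self_eq_norm_sq, norm_unitVector]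
    ring
  refine le_antisymm ((Metric.infDist_le_dist_of_mem hfoot).trans_eq ?_)
    ((Metric.le_infDist ⟨_, hfoot⟩).2 fun y hy ↦ ?_)
  · rw [dist_self_add_right, norm_smul, norm_unitVector, mul_one, Real.norm_eq_abs]
  · rw [← mem_iff.1 hy, ← inner_sub_right, dist_comm, dist_eq_norm, ← one_mul ‖y - p‖,
      ← norm_unitVector w.1]
    exact abs_real_inner_le_norm _ _

theorem exists_mul_cos_mul_sin {x y : ℝ} (hxy : x ≠ 0 ∨ y ≠ 0) :
    ∃ θ ∈ Set.Ico 0 Real.pi, ∃ r ≠ 0, x = r * Real.cos θ ∧ y = r * Real.sin θ := by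
  have hz : (⟨x, y⟩ : ℂ) ≠ 0 := by simpa [Complex.ext_iff, imp_iff_not_or] using hxy
  set z : ℂ := ⟨x, y⟩
  set k := toIcoDiv Real.pi_pos 0 z.arg
  set θ := toIcoMod Real.pi_pos 0 z.arg
  have harg : z.arg = θ + k * Real.pi := by
    rw [← zsmul_eq_mul, toIcoMod_add_toIcoDiv_zsmul]
  refine ⟨θ, toIcoMod_mem_Ico' Real.pi_pos _, ‖z‖ * (-1) ^ k,
    mul_ne_zero (norm_ne_zero_iff.2 hz) (zpow_ne_zero _ (by norm_num)), ?_, ?_⟩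
  · rw [mul_assoc, ← Real.cos_add_int_mul_pi, ← harg, Complex.norm_mul_cos_arg]
  · rw [mul_assoc, ← Real.sin_add_int_mul_pi, ← harg, Complex.norm_mul_sin_arg]

theorem IsLine2.exists_eq_normalFormLine {l : Set Pt2} (hl : IsLine2 l) :
    ∃ w : ℝ × ℝ, w.1 ∈ Set.Ico 0 Real.pi ∧ l = normalFormLine w := by
  obtain ⟨a, v, hv, rfl⟩ := hl
  have hv' : v 1 ≠ 0 ∨ -v 0 ≠ 0 := by
    contrapose! hv
    ext i
    fin_cases i
    · exact neg_eq_zero.1 hv.2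
    · exact hv.1
  obtain ⟨θ, hθ, r, hr, hv₁, hv₀⟩ := exists_mul_cos_mul_sin hv'
  have hsq := Real.sin_sq_add_cos_sq θ
  refine ⟨(θ, a 0 * Real.cos θ + a 1 * Real.sin θ), hθ, Set.ext fun x ↦ ⟨?_, fun hx ↦ ?_⟩⟩
  · rintro ⟨t, rfl⟩
    simp only [normalFormLine, Set.mem_ofPred_eq, PiLp.add_apply, PiLp.smul_apply, smul_eq_mul]
    linear_combination t * Real.sin θ * hv₁ - t * Real.cos θ * hv₀
  · simp only [normalFormLine, Set.mem_ofPred_eq] at hx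
    refine ⟨((x 1 - a 1) * Real.cos θ - (x 0 - a 0) * Real.sin θ) / r, ?_⟩
    ext i
    fin_cases i <;>
      simp only [PiLp.add_apply, PiLp.smul_apply, smul_eq_mul, Fin.zero_eta, Fin.mk_one]
    · rw [← neg_neg (v 0), hv₀]
      field_simp
      linear_combination Real.cos θ * hx - (x 0 - a 0) * hsq
    · rw [hv₁]
      field_simp
      linear_combination Real.sin θ * hx - (x 1 - a 1) * hsq

open scoped Classical in
theorem card_image_le_two_mul_card_image_abs {α : Type*} (s : Finset α) (f : α → ℝ) :
    #(s.image f) ≤ 2 * #(s.image fun a ↦ |f a|) := by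
  have hsub : s.image f ⊆ (s.image fun a ↦ |f a|) ∪ (s.image fun a ↦ |f a|).image Neg.neg := by
    refine Finset.image_subset_iff.2 fun a ha ↦ ?_
    have habs : |f a| ∈ s.image fun a ↦ |f a| := Finset.mem_image_of_mem _ ha
    rcases abs_choice (f a) with h | h
    · exact Finset.mem_union_left _ (h ▸ habs)
    · exact Finset.mem_union_right _ (Finset.mem_image.2 ⟨_, habs, by rw [h, neg_neg]⟩)
  calc #(s.image f) ≤ _ := Finset.card_le_card hsub
    _ ≤ _ := Finset.card_union_le _ _
    _ ≤ _ := Nat.add_le_add_left Finset.card_image_le _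
    _ = _ := (two_mul _).symm

open scoped Classical in
theorem card_mul_card_pow_three_le_of_ncard_le {P : Finset Pt2} {L : Finset (Set Pt2)} {N : ℕ}
    (hP : P.Nonempty) (hL : ∀ l ∈ L, IsLine2 l) (hPL : (#P : ℝ) ≤ #L ^ 2)
    (hLP : (#L : ℝ) ≤ #P ^ 3) (hN : ∀ p ∈ P, {d | ∃ l ∈ L, d = Metric.infDist p l}.ncard ≤ N) :
    (#P : ℝ) * #L ^ 3 ≤ 10 ^ 30 * (2 * N) ^ 5 := by
  choose! w hw hlw using fun l hl ↦ (hL l hl).exists_eq_normalFormLine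
  have hcardP : #(P.image coordPair) = #P := Finset.card_image_of_injective _ coordPair_injective
  have hcardL : #(L.image w) = #L := Finset.card_image_of_injOn fun l hl l' hl' h ↦ by
    rw [hlw l hl, hlw l' hl', h]
  have hT : ∀ p ∈ P.image coordPair, #((L.image w).image (signedLineDist p)) ≤ 2 * N := by
    refine Finset.forall_mem_image.2 fun p hp ↦ ?_
    have hdist : {d | ∃ l ∈ L, d = Metric.infDist p l} =
        ↑(L.image fun l ↦ |signedLineDist (coordPair p) (w l)|) := by
      ext d
      simp only [Set.mem_ofPred_eq, Finset.coe_image, Set.mem_image, Finset.mem_coe]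
      refine exists_congr fun l ↦ and_congr_right fun hl ↦ ?_
      rw [← infDist_normalFormLine, ← hlw l hl, eq_comm]
    have hN := hN p hp
    rw [hdist, Set.ncard_coe_finset] at hN
    rw [Finset.image_image]
    exact (card_image_le_two_mul_card_image_abs _ _).trans (Nat.mul_le_mul_left 2 hN)
  have h := card_mul_card_pow_three_le (hP.image _) (Finset.forall_mem_image.2 hw) hT
    (by rwa [hcardP, hcardL]) (by rwa [hcardP, hcardL])
  rwa [hcardP, hcardL, Nat.cast_mul, Nat.cast_two] at h

end Geometry

theorem rpow_one_fifth_mul_rpow_three_fifths_pow_five {m n : ℝ} (hm : 0 ≤ m) (hn : 0 ≤ n) :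
    (m ^ ((1 : ℝ) / 5) * n ^ ((3 : ℝ) / 5)) ^ 5 = m * n ^ 3 := by
  rw [mul_pow, ← Real.rpow_mul_natCast hm, ← Real.rpow_mul_natCast hn, ← Real.rpow_natCast n 3]
  norm_num

theorem distinct_distances_from_single_point_general :
    ∃ c : ℝ, 0 < c ∧ ∀ (P : Finset Pt2) (L : Finset (Set Pt2)), P.Nonempty →
      (∀ l ∈ L, IsLine2 l) → (#P : ℝ) ^ ((1 : ℝ) / 2) ≤ #L → (#L : ℝ) ≤ #P ^ 3 →
      ∃ p ∈ P, c * (#P : ℝ) ^ ((1 : ℝ) / 5) * (#L : ℝ) ^ ((3 : ℝ) / 5) ≤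
        ({d : ℝ | ∃ l ∈ L, d = Metric.infDist p l}.ncard : ℝ) := by
  refine ⟨1 / (2 * 10 ^ 6), by norm_num, fun P L hP hL hPL hLP ↦ ?_⟩
  obtain ⟨p, hp, hmax⟩ :=
    P.exists_max_image (fun p ↦ {d : ℝ | ∃ l ∈ L, d = Metric.infDist p l}.ncard) hP
  have hPL' : (#P : ℝ) ≤ #L ^ 2 := by
    rw [← Real.sqrt_eq_rpow] at hPL
    exact (Real.sqrt_le_left (Nat.cast_nonneg _)).1 hPL
  have hbound := card_mul_card_pow_three_le_of_ncard_le hP hL hPL' hLP hmax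
  refine ⟨p, hp, le_of_pow_le_pow_left₀ (n := 5) (by norm_num) (Nat.cast_nonneg _) ?_⟩
  rw [mul_assoc, mul_pow, rpow_one_fifth_mul_rpow_three_fifths_pow_five (Nat.cast_nonneg _)
    (Nat.cast_nonneg _)]
  linarith

theorem distinct_distances_from_single_point :
    ∃ c : ℝ, 0 < c ∧
      ∀ (m n : ℕ), 0 < m → 0 < n →
        (m : ℝ) ^ ((1 : ℝ) / 2) ≤ (n : ℝ) → (n : ℝ) ≤ (m : ℝ) ^ 2 →
        ∀ (P : Finset Pt2) (L : Finset (Set Pt2)),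
          P.card = m → L.card = n → (∀ l ∈ L, IsLine2 l) →
          ∃ p ∈ P,
            c * (m : ℝ) ^ ((1 : ℝ) / 5) * (n : ℝ) ^ ((3 : ℝ) / 5) ≤
              (({d : ℝ | ∃ l ∈ L, d = Metric.infDist p l}).ncard : ℝ) := by
  obtain ⟨c, hc, h⟩ := distinct_distances_from_single_point_general
  refine ⟨c, hc, ?_⟩
  rintro _ _ hm - hmn hnm P L rfl rfl hL
  exact h P L (Finset.card_pos.1 hm) hL hmn
    (hnm.trans (pow_le_pow_right₀ (Nat.one_le_cast.2 hm) (by norm_num)))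
end
end
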